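/- Consider the stochastic regression model X_{n+1} = θ^t Φ_n + ε_{n+1} with least squares estimator θ̂_n. Let p ≥ 1 be an integer and assume (ε_n) is a martingale difference sequence with E[ε_{n+1}² | F_n] = σ² a.s. and sup_{n≥0} E[|ε_{n+1}|^a | F_n] < ∞ a.s. for some a > 2p, the explosion coefficient f_n → 0 a.s., and S_n/α_n → L a.s. for some positive random sequence (α_n) increasing to infinity and some symmetric positive definite d×d matrix L. Then almost surely lim_{n→∞} (1/log d_n) Σ_{k=1}^n f_k ((θ̂_k − θ)^t S_k (θ̂_k − θ))^p = ℓ(p), where ℓ(p) = d σ^{2p} ∏_{j=1}^{p-1} (d + 2j). -/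

import Mathlib

open MeasureTheory ProbabilityTheory Filter Finset Matrix Topology

noncomputable section

/-- `S_n = S + ∑_{k=0}^n Φ_k Φ_kᵗ`. -/
def Smat {Ω : Type*} {d : ℕ} (S : Matrix (Fin d) (Fin d) ℝ)
    (Φ : ℕ → Ω → Fin d → ℝ) (n : ℕ) (ω : Ω) : Matrix (Fin d) (Fin d) ℝ :=
  S + ∑ k ∈ Finset.range (n + 1), vecMulVec (Φ k ω) (Φ k ω)

/-- The explosion coefficient `f_n = Φ_nᵗ S_n⁻¹ Φ_n`. -/
def expl {Ω : Type*} {d : ℕ} (S : Matrix (Fin d) (Fin d) ℝ)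
    (Φ : ℕ → Ω → Fin d → ℝ) (n : ℕ) (ω : Ω) : ℝ :=
  Φ n ω ⬝ᵥ ((Smat S Φ n ω)⁻¹ *ᵥ Φ n ω)

/-- The least squares estimator `θ̂_n = S_{n-1}⁻¹ ∑_{k=1}^n Φ_{k-1} X_k`. -/
def lsq {Ω : Type*} {d : ℕ} (S : Matrix (Fin d) (Fin d) ℝ)
    (Φ : ℕ → Ω → Fin d → ℝ) (X : ℕ → Ω → ℝ) (n : ℕ) (ω : Ω) : Fin d → ℝ :=
  (Smat S Φ (n - 1) ω)⁻¹ *ᵥ ∑ k ∈ Finset.Icc 1 n, X k ω • Φ (k - 1) ω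

lemma sm_abs {Ω : Type*} {m : MeasurableSpace Ω} {f : Ω → ℝ} (hf : StronglyMeasurable f) :
    StronglyMeasurable (fun ω => |f ω|) := hf.norm

lemma sm_le_const {Ω : Type*} {m : MeasurableSpace Ω} {f : Ω → ℝ} (hf : StronglyMeasurable f)
    (c : ℝ) : MeasurableSet {ω | f ω ≤ c} := measurableSet_le hf.measurable measurable_const

lemma rs_core {Ω : Type*} {m0 : MeasurableSpace Ω} {μ : Measure Ω} [IsProbabilityMeasure μ]
    (F : Filtration ℕ m0) (Z g c l1 l2 ξ1 ξ2 η : ℕ → Ω → ℝ) (r : ℕ → ℝ) (N : ℝ)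
    (hZm : ∀ n, StronglyMeasurable[F n] (Z n)) (hgm : ∀ n, StronglyMeasurable[F n] (g n))
    (hcm : ∀ n, StronglyMeasurable[F n] (c n)) (hl1 : ∀ n, StronglyMeasurable[F n] (l1 n))
    (hl2 : ∀ n, StronglyMeasurable[F n] (l2 n))
    (hZ : ∀ n ω, 0 ≤ Z n ω) (hg : ∀ n ω, 0 ≤ g n ω) (hc : ∀ n ω, 0 ≤ c n ω)
    (hi1 : ∀ n, Integrable (ξ1 (n+1)) μ) (hi2 : ∀ n, Integrable (ξ2 (n+1)) μ)
    (hi3 : ∀ n, Integrable (η (n+1)) μ)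
    (he1 : ∀ n, μ[ξ1 (n+1)|F n] =ᵐ[μ] 0) (he2 : ∀ n, μ[ξ2 (n+1)|F n] =ᵐ[μ] 0)
    (hstep : ∀ n ω, Z (n+1) ω + g n ω ≤ Z n ω + l1 n ω * ξ1 (n+1) ω + l2 n ω * ξ2 (n+1) ω
      + c n ω * η (n+1) ω)
    (hb1 : ∀ n ω, |l1 n ω| ≤ r n) (hb2 : ∀ n ω, |l2 n ω| ≤ r n) (hb3 : ∀ n ω, |c n ω| ≤ r n)
    (hb0 : ∀ ω, Z 0 ω ≤ N)
    (hbs : ∀ n ω, ∑ k ∈ range n, c k ω * |(μ[η (k+1)|F k]) ω| ≤ N) :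
    ∀ᵐ ω ∂μ, (∃ C, ∀ n, Z n ω ≤ C) ∧ Summable (fun n => g n ω) := by
  have I1 : ∀ n, Integrable (fun ω => l1 n ω * ξ1 (n+1) ω) μ := fun n =>
    (hi1 n).bdd_mul ((hl1 n).mono (F.le n)).aestronglyMeasurable (ae_of_all _ (hb1 n))
  have I2 : ∀ n, Integrable (fun ω => l2 n ω * ξ2 (n+1) ω) μ := fun n =>
    (hi2 n).bdd_mul ((hl2 n).mono (F.le n)).aestronglyMeasurable (ae_of_all _ (hb2 n))
  have I3 : ∀ n, Integrable (fun ω => c n ω * η (n+1) ω) μ := fun n =>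
    (hi3 n).bdd_mul ((hcm n).mono (F.le n)).aestronglyMeasurable (ae_of_all _ (hb3 n))
  have I4 : ∀ n, Integrable (fun ω => c n ω * |(μ[η (n+1)|F n]) ω|) μ := fun n =>
    (integrable_condExp.abs).bdd_mul ((hcm n).mono (F.le n)).aestronglyMeasurable
      (ae_of_all _ (hb3 n))
  have IZ : ∀ n, Integrable (Z n) μ := by
    intro n
    induction n with
    | zero =>
      refine Integrable.of_bound ((hZm 0).mono (F.le 0)).aestronglyMeasurable N (ae_of_all _ ?_)
      intro ω; rw [Real.norm_eq_abs, abs_of_nonneg (hZ 0 ω)]; exact hb0 ω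
    | succ n ih =>
      refine Integrable.mono' (((ih.add (I1 n)).add (I2 n)).add (I3 n))
        ((hZm _).mono (F.le _)).aestronglyMeasurable (ae_of_all _ ?_)
      intro ω; rw [Real.norm_eq_abs, abs_of_nonneg (hZ _ ω)]
      have := hstep n ω; have := hg n ω
      simp only [Pi.add_apply]; linarith
  have Ig : ∀ n, Integrable (g n) μ := by
    intro n
    refine Integrable.mono' ((((IZ n).add (I1 n)).add (I2 n)).add (I3 n))
        ((hgm _).mono (F.le _)).aestronglyMeasurable (ae_of_all _ ?_)
    intro ω; rw [Real.norm_eq_abs, abs_of_nonneg (hg _ ω)]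
    have := hstep n ω; have := hZ (n+1) ω
    simp only [Pi.add_apply]; linarith
  let Y : ℕ → Ω → ℝ := fun n ω => Z n ω + ∑ k ∈ range n, (g k ω - c k ω * |(μ[η (k+1)|F k]) ω|)
  have hYm : ∀ n, StronglyMeasurable[F n] (Y n) := by
    intro n
    refine (hZm n).add ?_
    refine Finset.stronglyMeasurable_fun_sum _ fun k hk => ?_
    have hk' : k ≤ n := (Finset.mem_range.1 hk).le
    refine ((hgm k).mono (F.mono hk')).sub ?_
    refine ((hcm k).mono (F.mono hk')).mul ?_
    exact sm_abs (stronglyMeasurable_condExp.mono (F.mono hk'))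
  have IY : ∀ n, Integrable (Y n) μ := fun n =>
    (IZ n).add (integrable_finsetSum _ fun k _ => (Ig k).sub (I4 k))
  have hsup : ∀ n, μ[Y (n+1)|F n] ≤ᵐ[μ] Y n := by
    intro n
    let T : Ω → ℝ := fun ω => Y n ω - c n ω * |(μ[η (n+1)|F n]) ω|
    have hTm : StronglyMeasurable[F n] T :=
      (hYm n).sub ((hcm n).mul (sm_abs stronglyMeasurable_condExp))
    have IT : Integrable T μ := (IY n).sub (I4 n)
    have h1 : Y (n+1) ≤ᵐ[μ] (T + (l1 n * ξ1 (n+1)) + (l2 n * ξ2 (n+1)) + (c n * η (n+1))) := by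
      refine ae_of_all _ fun ω => ?_
      simp only [Y, T, Pi.add_apply, Pi.mul_apply, Finset.sum_range_succ]
      have := hstep n ω; linarith
    have h2 := condExp_mono (m := F n) (IY (n+1)) (((IT.add (I1 n)).add (I2 n)).add (I3 n)) h1
    have a1 := condExp_add (m := F n) ((IT.add (I1 n)).add (I2 n)) (I3 n)
    have a2 := condExp_add (m := F n) (IT.add (I1 n)) (I2 n)
    have a3 := condExp_add (m := F n) IT (I1 n)
    have a4 := condExp_of_stronglyMeasurable (F.le n) hTm IT
    have b1 := condExp_stronglyMeasurable_mul_of_bound (F.le n) (hl1 n) (hi1 n) _ (ae_of_all _ (hb1 n))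
    have b2 := condExp_stronglyMeasurable_mul_of_bound (F.le n) (hl2 n) (hi2 n) _ (ae_of_all _ (hb2 n))
    have b3 := condExp_stronglyMeasurable_mul_of_bound (F.le n) (hcm n) (hi3 n) _ (ae_of_all _ (hb3 n))
    filter_upwards [h2, a1, a2, a3, b1, b2, b3, he1 n, he2 n] with ω h2 a1 a2 a3 b1 b2 b3 e1 e2
    have e : ∀ (u v : Ω → ℝ), (fun ω => u ω * v ω) = u * v := fun _ _ => rfl
    simp only [e] at h2 a1 a2 a3
    refine h2.trans ?_
    rw [a1, Pi.add_apply, a2, Pi.add_apply, a3, Pi.add_apply, a4, b1, b2, b3]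
    simp only [Pi.mul_apply, e1, e2, T, Pi.zero_apply]
    have := mul_le_mul_of_nonneg_left (le_abs_self ((μ[η (n+1)|F n]) ω)) (hc n ω)
    linarith
  have hS : Supermartingale Y F μ := supermartingale_nat hYm IY hsup
  have hlow : ∀ n ω, -N ≤ Y n ω := by
    intro n ω
    have h1 := hZ n ω
    have h2 : 0 ≤ ∑ k ∈ range n, g k ω := Finset.sum_nonneg fun k _ => hg k ω
    have h3 := hbs n ω
    simp only [Y, Finset.sum_sub_distrib]; linarith
  have hN : ∃ ω : Ω, True := by
    by_contra hh
    push Not at hh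
    have : IsEmpty Ω := ⟨fun x => hh x⟩
    have := measure_univ (μ := μ)
    rw [Measure.eq_zero_of_isEmpty μ] at this
    simp at this
  obtain ⟨ω0, -⟩ := hN
  have hN0 : 0 ≤ N := (hZ 0 ω0).trans (hb0 ω0)
  have hL1 : ∀ n, eLpNorm ((-Y) n) 1 μ ≤ ((Real.toNNReal (3 * N) : NNReal) : ENNReal) := by
    intro n
    have e1 : eLpNorm ((-Y) n) 1 μ = eLpNorm (Y n) 1 μ := eLpNorm_neg (Y n) 1 μ
    rw [e1, eLpNorm_one_eq_lintegral_enorm, ← ofReal_integral_norm_eq_lintegral_enorm (IY n)]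
    rw [ENNReal.ofReal_le_iff_le_toReal (by simp)]
    rw [ENNReal.coe_toReal, Real.coe_toNNReal _ (by positivity)]
    have h1 : ∫ ω, ‖Y n ω‖ ∂μ ≤ ∫ ω, (Y n ω + 2 * N) ∂μ := by
      refine integral_mono (IY n).norm ((IY n).add (integrable_const _)) fun ω => ?_
      rw [Real.norm_eq_abs]
      have := hlow n ω
      exact abs_le.2 ⟨by linarith, by linarith⟩
    rw [integral_add (IY n) (integrable_const _)] at h1
    have h2 := hS.setIntegral_le (Nat.zero_le n) (s := Set.univ) MeasurableSet.univ
    simp only [setIntegral_univ] at h2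
    have h3 : ∫ ω, Y 0 ω ∂μ ≤ ∫ ω, N ∂μ := integral_mono (IY 0) (integrable_const _) (fun ω => by
      simp [Y]; exact hb0 ω)
    simp only [integral_const, probReal_univ, smul_eq_mul, one_mul] at h1 h3
    show ∫ ω, ‖Y n ω‖ ∂μ ≤ 3 * N
    linarith
  have hconv := hS.neg.exists_ae_tendsto_of_bdd hL1
  filter_upwards [hconv] with ω ⟨y, hy⟩
  have hbd := hy.bddBelow_range
  obtain ⟨C, hC⟩ := hbd
  have hC' : ∀ n, Y n ω ≤ -C := fun n => by
    have := hC ⟨n, rfl⟩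
    simp only [Pi.neg_apply] at this; linarith
  have hgs : ∀ n, Z n ω + ∑ k ∈ range n, g k ω ≤ -C + N := by
    intro n
    have h1 := hC' n
    have h2 := hbs n ω
    simp only [Y, Finset.sum_sub_distrib] at h1; linarith
  refine ⟨⟨-C + N, fun n => ?_⟩, ?_⟩
  · have h2 : 0 ≤ ∑ k ∈ range n, g k ω := Finset.sum_nonneg fun k _ => hg k ω
    linarith [hgs n]
  · refine summable_of_sum_range_le (fun n => hg n ω) (c := -C + N) fun n => ?_
    linarith [hgs n, hZ n ω]

lemma exists_growth {Ω : Type*} {m0 : MeasurableSpace Ω} {μ : Measure Ω} [IsProbabilityMeasure μ]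
    (J : ℕ → Ω → ℝ) (hJ : ∀ n, StronglyMeasurable (J n)) :
    ∃ r : ℕ → ℝ, (∀ n, 1 ≤ r n) ∧ ∀ᵐ ω ∂μ, ∃ C, ∀ n, |J n ω| ≤ C * r n := by
  have h1 : ∀ n, ∃ r : ℕ, 1 ≤ r ∧ μ {ω | (r : ℝ) < |J n ω|} ≤ (2 : ENNReal)⁻¹ ^ n := by
    intro n
    have hanti : Antitone fun r : ℕ => {ω | (r : ℝ) < |J n ω|} := by
      intro a b hab ω (hω : (b : ℝ) < _)
      have : (a : ℝ) ≤ b := by exact_mod_cast hab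
      exact this.trans_lt hω
    have ht := tendsto_measure_iInter_atTop (μ := μ)
      (s := fun r : ℕ => {ω | (r : ℝ) < |J n ω|})
      (fun r => (measurableSet_lt measurable_const (hJ n).norm.measurable).nullMeasurableSet)
      hanti ⟨0, measure_ne_top _ _⟩
    have hem : (⋂ r : ℕ, {ω | (r : ℝ) < |J n ω|}) = ∅ := by
      ext ω
      simp only [Set.mem_iInter, Set.mem_ofPred_eq, Set.mem_empty_iff_false, iff_false, not_forall,
        not_lt]
      exact exists_nat_ge _
    rw [hem, measure_empty] at ht
    have hpos : (0 : ENNReal) < (2 : ENNReal)⁻¹ ^ n := by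
      apply ENNReal.pow_pos; simp
    obtain ⟨r, h2, h3⟩ := ((ht.eventually (gt_mem_nhds hpos)).and (eventually_ge_atTop 1)).exists
    exact ⟨r, h3, h2.le⟩
  choose r hr1 hr2 using h1
  refine ⟨fun n => (r n : ℝ), fun n => Nat.one_le_cast.2 (hr1 n), ?_⟩
  have hsum : ∑' n, μ {ω | (r n : ℝ) < |J n ω|} ≠ ⊤ := by
    refine ne_top_of_le_ne_top ?_ (ENNReal.tsum_le_tsum hr2)
    rw [ENNReal.tsum_geometric]; simp
  filter_upwards [ae_eventually_notMem hsum] with ω hω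
  obtain ⟨n0, hn0⟩ := eventually_atTop.1 hω
  refine ⟨1 + ∑ k ∈ range n0, |J k ω|, fun n => ?_⟩
  have hr : (1 : ℝ) ≤ r n := by exact_mod_cast hr1 n
  have hs : 0 ≤ ∑ k ∈ range n0, |J k ω| := Finset.sum_nonneg fun _ _ => abs_nonneg _
  rcases le_or_gt n0 n with h | h
  · have := hn0 n h
    simp only [Set.mem_ofPred_eq, not_lt] at this
    nlinarith
  · have := Finset.single_le_sum (f := fun k => |J k ω|) (fun _ _ => abs_nonneg _)
      (Finset.mem_range.2 h)
    nlinarith [abs_nonneg (J n ω)]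

lemma rs_main {Ω : Type*} {m0 : MeasurableSpace Ω} {μ : Measure Ω} [IsProbabilityMeasure μ]
    (F : Filtration ℕ m0) (Z g c l1 l2 ξ1 ξ2 η : ℕ → Ω → ℝ)
    (hZm : ∀ n, StronglyMeasurable[F n] (Z n)) (hgm : ∀ n, StronglyMeasurable[F n] (g n))
    (hcm : ∀ n, StronglyMeasurable[F n] (c n)) (hl1 : ∀ n, StronglyMeasurable[F n] (l1 n))
    (hl2 : ∀ n, StronglyMeasurable[F n] (l2 n))
    (hZ : ∀ n ω, 0 ≤ Z n ω) (hg : ∀ n ω, 0 ≤ g n ω) (hc : ∀ n ω, 0 ≤ c n ω)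
    (hi1 : ∀ n, Integrable (ξ1 (n+1)) μ) (hi2 : ∀ n, Integrable (ξ2 (n+1)) μ)
    (hi3 : ∀ n, Integrable (η (n+1)) μ)
    (he1 : ∀ n, μ[ξ1 (n+1)|F n] =ᵐ[μ] 0) (he2 : ∀ n, μ[ξ2 (n+1)|F n] =ᵐ[μ] 0)
    (hηpos : ∀ n ω, 0 ≤ η n ω)
    (hηb : ∀ᵐ ω ∂μ, ∃ C : ℝ, ∀ n, (μ[η (n+1)|F n]) ω ≤ C)
    (hcs : ∀ᵐ ω ∂μ, Summable (fun n => c n ω))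
    (hstep : ∀ n ω, Z (n+1) ω + g n ω ≤ Z n ω + l1 n ω * ξ1 (n+1) ω + l2 n ω * ξ2 (n+1) ω
      + c n ω * η (n+1) ω) :
    ∀ᵐ ω ∂μ, (∃ C, ∀ n, Z n ω ≤ C) ∧ Summable (fun n => g n ω) := by
  classical
  let m : ℕ → Ω → ℝ := fun n => μ[η (n+1)|F n]
  have hmm : ∀ n, StronglyMeasurable[F n] (m n) := fun n => stronglyMeasurable_condExp
  let J : ℕ → Ω → ℝ := fun n ω => |l1 n ω| + |l2 n ω| + |c n ω|
  have hJm : ∀ n, StronglyMeasurable[F n] (J n) := fun n =>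
    ((hl1 n).norm.add (hl2 n).norm).add (hcm n).norm
  obtain ⟨r, hr1, hr2⟩ := exists_growth (μ := μ) J fun n => (hJm n).mono (F.le n)
  -- good sets
  let G : ℕ → ℕ → Set Ω := fun N n => {ω | Z 0 ω ≤ N ∧
    ∀ k < n, J k ω ≤ N * r k ∧ ∑ j ∈ range (k+1), c j ω * |m j ω| ≤ N}
  have hGsucc : ∀ N n, G N (n+1) ⊆ G N n := fun N n ω hω =>
    ⟨hω.1, fun k hk => hω.2 k (hk.trans (Nat.lt_succ_self n))⟩
  have hsm : ∀ n, StronglyMeasurable[F n] (fun ω => ∑ j ∈ range (n+1), c j ω * |m j ω|) := by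
    intro n
    refine Finset.stronglyMeasurable_fun_sum _ fun k hk => ?_
    have hk' : k ≤ n := Nat.lt_succ_iff.1 (Finset.mem_range.1 hk)
    exact ((hcm k).mono (F.mono hk')).mul ((hmm k).mono (F.mono hk')).norm
  have hGm : ∀ N n, MeasurableSet[F n] (G N (n+1)) := by
    intro N n
    have : G N (n+1) = {ω | Z 0 ω ≤ N} ∩ ⋂ k ∈ Set.Iio (n+1), ({ω | J k ω ≤ N * r k} ∩
        {ω | ∑ j ∈ range (k+1), c j ω * |m j ω| ≤ N}) := by
      ext ω; simp [G]
    rw [this]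
    refine MeasurableSet.inter (sm_le_const ((hZm 0).mono (F.mono (Nat.zero_le n))) _) ?_
    refine MeasurableSet.biInter (Set.to_countable _) fun k hk => ?_
    have hk' : k ≤ n := Nat.lt_succ_iff.1 hk
    exact MeasurableSet.inter (sm_le_const ((hJm k).mono (F.mono hk')) _)
      (sm_le_const ((hsm k).mono (F.mono hk')) _)
  have hGm0 : ∀ N n, MeasurableSet[F n] (G N n) := by
    intro N n
    cases n with
    | zero =>
      have : G N 0 = {ω | Z 0 ω ≤ N} := by ext ω; simp [G]
      rw [this]
      exact sm_le_const (hZm 0) _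
    | succ n => exact F.mono (Nat.le_succ n) _ (hGm N n)
  have key : ∀ N : ℕ, ∀ᵐ ω ∂μ, (∃ C, ∀ n, (G N n).indicator (Z n) ω ≤ C) ∧
      Summable (fun n => (G N (n+1)).indicator (g n) ω) := by
    intro N
    refine rs_core F (fun n => (G N n).indicator (Z n)) (fun n => (G N (n+1)).indicator (g n))
      (fun n => (G N (n+1)).indicator (c n)) (fun n => (G N (n+1)).indicator (l1 n))
      (fun n => (G N (n+1)).indicator (l2 n)) ξ1 ξ2 η (fun n => N * r n) N
      (fun n => (hZm n).indicator (hGm0 N n)) (fun n => (hgm n).indicator (hGm N n))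
      (fun n => (hcm n).indicator (hGm N n)) (fun n => (hl1 n).indicator (hGm N n))
      (fun n => (hl2 n).indicator (hGm N n))
      (fun n ω => Set.indicator_nonneg (fun x _ => hZ n x) ω)
      (fun n ω => Set.indicator_nonneg (fun x _ => hg n x) ω)
      (fun n ω => Set.indicator_nonneg (fun x _ => hc n x) ω)
      hi1 hi2 hi3 he1 he2 ?_ ?_ ?_ ?_ ?_ ?_
    · intro n ω
      by_cases h : ω ∈ G N (n+1)
      · simp only [Set.indicator_of_mem h, Set.indicator_of_mem (hGsucc N n h)]
        exact hstep n ω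
      · simp only [Set.indicator_of_notMem h]
        have : 0 ≤ (G N n).indicator (Z n) ω := Set.indicator_nonneg (fun x _ => hZ n x) ω
        linarith
    · intro n ω
      have hN : (0:ℝ) ≤ N * r n := mul_nonneg (Nat.cast_nonneg _) (by linarith [hr1 n])
      by_cases h : ω ∈ G N (n+1)
      · simp only [Set.indicator_of_mem h]
        have := (h.2 n (Nat.lt_succ_self n)).1
        simp only [J] at this
        linarith [abs_nonneg (l1 n ω), abs_nonneg (l2 n ω), abs_nonneg (c n ω)]
      · simpa only [Set.indicator_of_notMem h, abs_zero] using hN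
    · intro n ω
      have hN : (0:ℝ) ≤ N * r n := mul_nonneg (Nat.cast_nonneg _) (by linarith [hr1 n])
      by_cases h : ω ∈ G N (n+1)
      · simp only [Set.indicator_of_mem h]
        have := (h.2 n (Nat.lt_succ_self n)).1
        simp only [J] at this
        linarith [abs_nonneg (l1 n ω), abs_nonneg (l2 n ω), abs_nonneg (c n ω)]
      · simpa only [Set.indicator_of_notMem h, abs_zero] using hN
    · intro n ω
      have hN : (0:ℝ) ≤ N * r n := mul_nonneg (Nat.cast_nonneg _) (by linarith [hr1 n])
      by_cases h : ω ∈ G N (n+1)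
      · simp only [Set.indicator_of_mem h]
        have := (h.2 n (Nat.lt_succ_self n)).1
        simp only [J] at this
        linarith [abs_nonneg (l1 n ω), abs_nonneg (l2 n ω), abs_nonneg (c n ω)]
      · simpa only [Set.indicator_of_notMem h, abs_zero] using hN
    · intro ω
      by_cases h : ω ∈ G N 0
      · simp only [Set.indicator_of_mem h]; exact h.1
      · simp only [Set.indicator_of_notMem h]; positivity
    · intro n ω
      induction n with
      | zero => simp
      | succ n ih =>
        by_cases h : ω ∈ G N (n+1)
        · have h2 := (h.2 n (Nat.lt_succ_self n)).2
          refine le_trans (Finset.sum_le_sum fun k _ => ?_) h2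
          refine mul_le_mul_of_nonneg_right ?_ (abs_nonneg _)
          exact Set.indicator_le_self' (fun _ _ => hc k ω) _
        · rw [Finset.sum_range_succ]
          simp only [Set.indicator_of_notMem h, zero_mul, add_zero]
          exact ih
  have key' := ae_all_iff.2 key
  have hmpos : ∀ᵐ ω ∂μ, ∀ n, 0 ≤ m n ω := by
    rw [ae_all_iff]; intro n
    exact condExp_nonneg (ae_of_all _ (hηpos (n+1)))
  filter_upwards [key', hr2, hηb, hcs, hmpos] with ω hk ⟨C1, hC1⟩ ⟨C2, hC2⟩ hs hmp
  obtain ⟨N, hN⟩ := exists_nat_ge (Z 0 ω + |C1| + |C2| * ∑' n, c n ω)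
  have ht : 0 ≤ ∑' n, c n ω := tsum_nonneg fun n => hc n ω
  have hp : 0 ≤ |C2| * ∑' n, c n ω := mul_nonneg (abs_nonneg _) ht
  have hmem : ∀ n, ω ∈ G N n := by
    intro n
    refine ⟨by linarith [abs_nonneg C1], fun k _ => ⟨?_, ?_⟩⟩
    · have h1 := hC1 k
      have h2 : |J k ω| = J k ω := abs_of_nonneg (by simp only [J]; positivity)
      rw [h2] at h1
      refine h1.trans (mul_le_mul_of_nonneg_right ?_ (by linarith [hr1 k]))
      linarith [le_abs_self C1, hZ 0 ω]
    · calc ∑ j ∈ range (k+1), c j ω * |m j ω| ≤ ∑ j ∈ range (k+1), c j ω * |C2| := by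
            refine Finset.sum_le_sum fun j _ => mul_le_mul_of_nonneg_left ?_ (hc j ω)
            rw [abs_of_nonneg (hmp j)]
            exact (hC2 j).trans (le_abs_self _)
        _ = |C2| * ∑ j ∈ range (k+1), c j ω := by rw [← Finset.sum_mul, mul_comm]
        _ ≤ |C2| * ∑' n, c n ω := mul_le_mul_of_nonneg_left
            (hs.sum_le_tsum _ fun j _ => hc j ω) (abs_nonneg _)
        _ ≤ N := by linarith [abs_nonneg C1, hZ 0 ω]
  have := hk N
  simpa only [Set.indicator_of_mem (hmem _)] using this

lemma rpow_step (s x v : ℝ) (hs1 : 1 ≤ s) (hs2 : s ≤ 2) :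
    (1 + (x+v)^2) ^ (s/2) ≤ (1 + x^2) ^ (s/2) + (s * (1+x^2)^(s/2-1) * x) * v + 8 * |v| ^ s := by
  have hA : (0:ℝ) < 1 + x^2 := by positivity
  set A := 1 + x^2 with hAdef
  have hA1 : 1 ≤ A := by rw [hAdef]; nlinarith [sq_nonneg x]
  have hAs : A ^ (s/2) = A * A ^ (s/2-1) := by
    rw [Real.rpow_sub_one hA.ne']; field_simp
  have hAp : 0 < A ^ (s/2-1) := Real.rpow_pos_of_pos hA _
  rcases le_or_gt (v^2) A with h | h
  · -- Bernoulli
    have e : 1 + (x+v)^2 = A * (1 + (2*x*v+v^2)/A) := by rw [hAdef]; field_simp; ring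
    have hge : -1 ≤ (2*x*v+v^2)/A := by
      rw [le_div_iff₀ hA]; rw [hAdef]; nlinarith [sq_nonneg (x+v)]
    have hB := rpow_one_add_le_one_add_mul_self hge (p := s/2) (by linarith) (by linarith)
    rw [e, Real.mul_rpow hA.le (by linarith)]
    have h1 : A ^ (s/2) * (1 + (2*x*v+v^2)/A) ^ (s/2) ≤ A^(s/2) * (1 + s/2 * ((2*x*v+v^2)/A)) :=
      mul_le_mul_of_nonneg_left hB (by positivity)
    have h2 : A^(s/2) * (1 + s/2 * ((2*x*v+v^2)/A)) =
        A^(s/2) + s * A^(s/2-1) * x * v + s/2 * (A^(s/2-1) * v^2) := by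
      rw [hAs]; field_simp; ring
    have h3 : A^(s/2-1) * v^2 ≤ |v|^s := by
      rcases eq_or_ne v 0 with rfl | hv
      · simp [Real.zero_rpow (by linarith : s ≠ 0)]
      · have hv2 : 0 < v^2 := by positivity
        have : A^(s/2-1) ≤ (v^2)^(s/2-1) := Real.rpow_le_rpow_of_nonpos hv2 h (by linarith)
        calc A^(s/2-1) * v^2 ≤ (v^2)^(s/2-1) * v^2 := mul_le_mul_of_nonneg_right this hv2.le
          _ = (v^2)^(s/2) := by rw [Real.rpow_sub_one hv2.ne']; field_simp
          _ = |v|^s := by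
            rw [← sq_abs, ← Real.rpow_natCast, ← Real.rpow_mul (abs_nonneg _)]; congr 1; push_cast; ring
    have h4 : 0 ≤ |v|^s := Real.rpow_nonneg (abs_nonneg _) _
    nlinarith
  · have hvv : |v|^s = (v^2)^(s/2) := by
      rw [← sq_abs, ← Real.rpow_natCast, ← Real.rpow_mul (abs_nonneg _)]; congr 1; push_cast; ring
    have hv2 : 0 < v^2 := hA.trans h
    have h1 : (1 + (x+v)^2) ^ (s/2) ≤ 4 * |v|^s := by
      have : 1 + (x+v)^2 ≤ 4 * v^2 := by rw [hAdef] at h; nlinarith [sq_nonneg (x-v)]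
      calc (1 + (x+v)^2) ^ (s/2) ≤ (4 * v^2)^(s/2) :=
            Real.rpow_le_rpow (by positivity) this (by linarith)
        _ = 4^(s/2) * |v|^s := by rw [Real.mul_rpow (by norm_num) hv2.le, hvv]
        _ ≤ 4 * |v|^s := by
            refine mul_le_mul_of_nonneg_right ?_ (Real.rpow_nonneg (abs_nonneg _) _)
            calc (4:ℝ)^(s/2) ≤ 4^(1:ℝ) := Real.rpow_le_rpow_of_exponent_le (by norm_num) (by linarith)
              _ = 4 := by simp
    have h2 : |s * A^(s/2-1) * x * v| ≤ 2 * |v|^s := by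
      have hx : |x| ≤ A^(1/2:ℝ) := by
        rw [← Real.sqrt_eq_rpow]; apply Real.abs_le_sqrt; rw [hAdef]; linarith
      have h3 : A^(s/2-1) * |x| ≤ A^((s-1)/2) := by
        calc A^(s/2-1) * |x| ≤ A^(s/2-1) * A^(1/2:ℝ) := mul_le_mul_of_nonneg_left hx hAp.le
          _ = A^((s-1)/2) := by rw [← Real.rpow_add hA]; congr 1; ring
      have h4 : A^((s-1)/2) ≤ (v^2)^((s-1)/2) := Real.rpow_le_rpow hA.le h.le (by linarith)
      have h5 : (v^2)^((s-1)/2) * |v| = |v|^s := by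
        rw [hvv]
        have : |v| = (v^2)^(1/2:ℝ) := by rw [← Real.sqrt_eq_rpow, Real.sqrt_sq_eq_abs]
        rw [this, ← Real.rpow_add hv2]; congr 1; ring
      rw [abs_mul, abs_mul, abs_mul, abs_of_nonneg (by linarith : 0 ≤ s), abs_of_pos hAp]
      calc s * A^(s/2-1) * |x| * |v| = s * ((A^(s/2-1) * |x|) * |v|) := by ring
        _ ≤ s * (A^((s-1)/2) * |v|) := by gcongr
        _ ≤ s * ((v^2)^((s-1)/2) * |v|) := by gcongr
        _ = s * |v|^s := by rw [h5]
        _ ≤ 2 * |v|^s := by gcongr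
    have h3 := neg_abs_le (s * A^(s/2-1) * x * v)
    have h4 : 0 ≤ A^(s/2) := by positivity
    have h5 : 0 ≤ |v|^s := Real.rpow_nonneg (abs_nonneg _) _
    linarith

lemma sm_rpow {Ω : Type*} {m : MeasurableSpace Ω} {f : Ω → ℝ} (hf : StronglyMeasurable f) (s : ℝ) :
    StronglyMeasurable (fun ω => f ω ^ s) := (hf.measurable.pow_const s).stronglyMeasurable

lemma mart_bdd {Ω : Type*} {m0 : MeasurableSpace Ω} {μ : Measure Ω} [IsProbabilityMeasure μ]
    (F : Filtration ℕ m0) (c ξ η u : ℕ → Ω → ℝ) (s : ℝ) (hs1 : 1 ≤ s) (hs2 : s ≤ 2)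
    (hcm : ∀ n, StronglyMeasurable[F n] (c n)) (hξm : ∀ n, StronglyMeasurable[F (n+1)] (ξ (n+1)))
    (hum : ∀ n, StronglyMeasurable[F n] (u n))
    (hi1 : ∀ n, Integrable (ξ (n+1)) μ) 
    (hi3 : ∀ n, Integrable (η (n+1)) μ)
    (he1 : ∀ n, μ[ξ (n+1)|F n] =ᵐ[μ] 0) 
    (hηpos : ∀ n ω, 0 ≤ η n ω) (hu0 : ∀ n ω, 0 ≤ u n ω)
    (hηb : ∀ᵐ ω ∂μ, ∃ C : ℝ, ∀ n, (μ[η (n+1)|F n]) ω ≤ C)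
    (hub : ∀ᵐ ω ∂μ, ∃ C : ℝ, ∀ n, u n ω ≤ C)
    (hcs : ∀ᵐ ω ∂μ, Summable (fun n => |c n ω|^s))
    (hdom : ∀ n ω, |ξ (n+1) ω|^s ≤ u n ω * η (n+1) ω) :
    ∀ᵐ ω ∂μ, ∃ C, ∀ n, |∑ k ∈ range n, c k ω * ξ (k+1) ω| ≤ C := by
  let X : ℕ → Ω → ℝ := fun n ω => ∑ k ∈ range n, c k ω * ξ (k+1) ω
  have hXm : ∀ n, StronglyMeasurable[F n] (X n) := by
    intro n
    refine Finset.stronglyMeasurable_fun_sum _ fun k hk => ?_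
    have hk' : k < n := Finset.mem_range.1 hk
    exact ((hcm k).mono (F.mono hk'.le)).mul ((hξm k).mono (F.mono hk'))
  have hAm : ∀ n, StronglyMeasurable[F n] (fun ω => 1 + X n ω ^ 2) := fun n =>
    stronglyMeasurable_const.add ((hXm n).pow 2)
  have key := rs_main (μ := μ) F (fun n ω => (1 + X n ω ^ 2)^(s/2)) (fun _ _ => 0)
    (fun n ω => 8 * |c n ω|^s * u n ω)
    (fun n ω => (s * (1 + X n ω^2)^(s/2-1) * X n ω) * c n ω) (fun _ _ => 0) ξ (fun _ _ => 0) η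
    (fun n => sm_rpow (hAm n) _) (fun n => stronglyMeasurable_const)
    (fun n => (stronglyMeasurable_const.mul (sm_rpow (sm_abs (hcm n)) _)).mul (hum n))
    (fun n => ((stronglyMeasurable_const.mul (sm_rpow (hAm n) _)).mul (hXm n)).mul (hcm n))
    (fun n => stronglyMeasurable_const)
    (fun n ω => by positivity) (fun _ _ => le_rfl)
    (fun n ω => mul_nonneg (by positivity) (hu0 n ω))
    hi1 (fun n => integrable_zero _ _ _) hi3 he1
    (fun n => by
      have : μ[(fun _ : Ω => (0:ℝ))|F n] = 0 := condExp_zero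
      rw [this]) hηpos hηb ?_ ?_
  · filter_upwards [key] with ω ⟨⟨C, hC⟩, _⟩
    refine ⟨max 1 C, fun n => ?_⟩
    have h1 := hC n
    have h2 : |X n ω| ≤ (1 + X n ω^2)^(1/2:ℝ) := by
      rw [← Real.sqrt_eq_rpow]; apply Real.abs_le_sqrt; linarith
    have h3 : (1 + X n ω^2)^(1/2:ℝ) ≤ (1 + X n ω^2)^(s/2) :=
      Real.rpow_le_rpow_of_exponent_le (by nlinarith [sq_nonneg (X n ω)]) (by linarith)
    exact (h2.trans (h3.trans h1)).trans (le_max_right _ _)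
  · filter_upwards [hcs, hub] with ω h1 ⟨C, hC⟩
    refine Summable.of_nonneg_of_le (fun n => mul_nonneg (by positivity) (hu0 n ω)) (fun n => ?_)
      (h1.mul_left (8 * C))
    have : 0 ≤ 8 * |c n ω|^s := by positivity
    nlinarith [hC n]
  · intro n ω
    have h1 := rpow_step s (X n ω) (c n ω * ξ (n+1) ω) hs1 hs2
    have h2 : X (n+1) ω = X n ω + c n ω * ξ (n+1) ω := by simp [X, Finset.sum_range_succ]
    rw [h2]
    have h3 : |c n ω * ξ (n+1) ω|^s ≤ |c n ω|^s * (u n ω * η (n+1) ω) := by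
      rw [abs_mul, Real.mul_rpow (abs_nonneg _) (abs_nonneg _)]
      exact mul_le_mul_of_nonneg_left (hdom n ω) (by positivity)
    nlinarith

lemma pow_upper (n : ℕ) : ∃ C : ℝ, 0 ≤ C ∧ ∀ y Q g : ℝ, 0 ≤ y → 0 ≤ Q → g^2 ≤ y*Q →
    (y + 2*g + Q)^(n+1) ≤ y^(n+1) + 2*(n+1)*y^n*g + C*(y^n*Q + Q^(n+1)) := by
  induction n with
  | zero => exact ⟨1, by norm_num, fun y Q g _ _ _ => by simp; linarith⟩
  | succ n ih =>
    obtain ⟨C, hC, h⟩ := ih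
    refine ⟨1 + 8*(n+1) + 8*C, by positivity, fun y Q g hy hQ hg => ?_⟩
    have h2g : |2*g| ≤ y + Q := by
      apply abs_le_of_sq_le_sq' _ (by positivity) |> abs_le.2
      nlinarith [sq_nonneg (y-Q)]
    obtain ⟨hg1, hg2⟩ := abs_le.1 h2g
    have h0 : 0 ≤ y + 2*g + Q := by linarith
    have h1 := mul_le_mul_of_nonneg_right (h y Q g hy hQ hg) h0
    have hyn : 0 ≤ y^n := by positivity
    have hQn : 0 ≤ Q^n := by positivity
    have a1 : y^n*Q^2 ≤ y^(n+1)*Q + Q^(n+2) := by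
      rcases le_total y Q with hh | hh
      · have : y^n ≤ Q^n := pow_le_pow_left₀ hy hh n
        have h3 : 0 ≤ y^(n+1)*Q := by positivity
        calc y^n*Q^2 ≤ Q^n*Q^2 := mul_le_mul_of_nonneg_right this (by positivity)
          _ = Q^(n+2) := by ring
          _ ≤ _ := by linarith
      · have h3 : 0 ≤ Q^(n+2) := by positivity
        calc y^n*Q^2 = y^n*Q*Q := by ring
          _ ≤ y^n*Q*y := mul_le_mul_of_nonneg_left hh (by positivity)
          _ = y^(n+1)*Q := by ring
          _ ≤ _ := by linarith
    have a2 : y*Q^(n+1) ≤ y^(n+1)*Q + Q^(n+2) := by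
      rcases le_total y Q with hh | hh
      · have h3 : 0 ≤ y^(n+1)*Q := by positivity
        calc y*Q^(n+1) ≤ Q*Q^(n+1) := mul_le_mul_of_nonneg_right hh (by positivity)
          _ = Q^(n+2) := by ring
          _ ≤ _ := by linarith
      · have : Q^n ≤ y^n := pow_le_pow_left₀ hQ hh n
        have h3 : 0 ≤ Q^(n+2) := by positivity
        calc y*Q^(n+1) = Q^n*(y*Q) := by ring
          _ ≤ y^n*(y*Q) := mul_le_mul_of_nonneg_right this (by positivity)
          _ = y^(n+1)*Q := by ring
          _ ≤ _ := by linarith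
    have b1 : y^n*(2*g^2 + g*Q) ≤ 3*(y^(n+1)*Q) + y^n*Q^2 := by
      have : 2*g^2 + g*Q ≤ 3*(y*Q) + Q^2 := by nlinarith
      calc y^n*(2*g^2 + g*Q) ≤ y^n*(3*(y*Q) + Q^2) := mul_le_mul_of_nonneg_left this hyn
        _ = _ := by ring
    have b2 : (y^n*Q + Q^(n+1))*(y+2*g+Q) ≤ 2*(y^(n+1)*Q + y^n*Q^2 + y*Q^(n+1) + Q^(n+2)) := by
      calc (y^n*Q + Q^(n+1))*(y+2*g+Q) ≤ (y^n*Q + Q^(n+1))*(2*(y+Q)) :=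
            mul_le_mul_of_nonneg_left (by linarith) (by positivity)
        _ = _ := by ring
    have e : (y^(n+1) + 2*(n+1)*y^n*g + C*(y^n*Q + Q^(n+1)))*(y+2*g+Q) =
        y^(n+2) + 2*(n+2)*y^(n+1)*g + y^(n+1)*Q + 2*(n+1)*(y^n*(2*g^2+g*Q))
        + C*((y^n*Q + Q^(n+1))*(y+2*g+Q)) := by ring
    have hu : 0 ≤ y^(n+1)*Q := by positivity
    have hv : 0 ≤ Q^(n+2) := by positivity
    have b3 : y^n*(2*g^2 + g*Q) ≤ 4*(y^(n+1)*Q + Q^(n+2)) := by linarith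
    have b4 : (y^n*Q + Q^(n+1))*(y+2*g+Q) ≤ 8*(y^(n+1)*Q + Q^(n+2)) := by linarith
    have b5 : (2*((n:ℝ)+1))*(y^n*(2*g^2 + g*Q)) ≤ (2*((n:ℝ)+1))*(4*(y^(n+1)*Q + Q^(n+2))) :=
      mul_le_mul_of_nonneg_left b3 (by positivity)
    have b6 := mul_le_mul_of_nonneg_left b4 hC
    rw [pow_succ (y+2*g+Q) (n+1)]
    refine h1.trans ?_
    rw [e]; push_cast
    have e2 : (n:ℝ)+1+1 = n+2 := by ring
    rw [e2]
    show _ ≤ y^(n+2) + 2*((n:ℝ)+2)*y^(n+1)*g + (1 + 8*((n:ℝ)+1) + 8*C)*(y^(n+1)*Q + Q^(n+2))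
    nlinarith

lemma taylor2 (p : ℕ) : ∃ C : ℝ, 0 ≤ C ∧ ∀ x D X t : ℝ, |x| ≤ X → |D| ≤ t*X → 0 ≤ t → t ≤ 1 →
    |(x+D)^p - x^p - p*x^(p-1)*D - p*(p-1)/2*x^(p-2)*D^2| ≤ C*t^3*X^p := by
  have main : ∀ n : ℕ, ∃ C : ℝ, 0 ≤ C ∧ ∀ x D X t : ℝ, |x| ≤ X → |D| ≤ t*X → 0 ≤ t → t ≤ 1 →
      |(x+D)^(n+2) - x^(n+2) - (n+2)*x^(n+1)*D - (n+2)*(n+1)/2*x^n*D^2| ≤ C*t^3*X^(n+2) := by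
    intro n
    induction n with
    | zero => exact ⟨0, le_rfl, fun x D X t _ _ _ _ => by
        have : (x+D)^(0+2) - x^(0+2) - ((0:ℕ)+2)*x^(0+1)*D - ((0:ℕ)+2)*((0:ℕ)+1)/2*x^0*D^2 = (0:ℝ) := by
          push_cast; ring
        rw [this]; simp⟩
    | succ n ih =>
      obtain ⟨C, hC, h⟩ := ih
      refine ⟨2*C + (n+2)*(n+1)/2, by positivity, fun x D X t hx hD ht ht1 => ?_⟩
      have hX : 0 ≤ X := (abs_nonneg x).trans hx
      have h1 := h x D X t hx hD ht ht1
      set R := (x+D)^(n+2) - x^(n+2) - (n+2)*x^(n+1)*D - (n+2)*(n+1)/2*x^n*D^2 with hR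
      have e : (x+D)^(n+1+2) - x^(n+1+2) - (((n+1:ℕ):ℝ)+2)*x^(n+1+1)*D
          - (((n+1:ℕ):ℝ)+2)*(((n+1:ℕ):ℝ)+1)/2*x^(n+1)*D^2
          = (x+D)*R + (n+2)*(n+1)/2*(x^n*D^3) := by
        rw [hR]; push_cast; ring
      rw [e]
      have hxD : |x+D| ≤ 2*X := by
        refine (abs_add_le x D).trans ?_
        nlinarith
      have h2 : |(x+D)*R| ≤ 2*X*(C*t^3*X^(n+2)) := by
        rw [abs_mul]; exact mul_le_mul hxD h1 (abs_nonneg _) (by positivity)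
      have h3 : |x^n*D^3| ≤ X^n*(t*X)^3 := by
        rw [abs_mul, abs_pow, abs_pow]
        gcongr
      have h4 : |((n:ℝ)+2)*(n+1)/2*(x^n*D^3)| ≤ ((n:ℝ)+2)*(n+1)/2*(X^n*(t*X)^3) := by
        rw [abs_mul, abs_of_nonneg (by positivity : (0:ℝ) ≤ ((n:ℝ)+2)*(n+1)/2)]
        gcongr
      refine (abs_add_le _ _).trans ((add_le_add h2 h4).trans (le_of_eq ?_))
      ring
  rcases p with _ | _ | n
  · exact ⟨0, le_rfl, fun x D X t _ _ _ _ => by simp⟩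
  · exact ⟨0, le_rfl, fun x D X t _ _ _ _ => by simp⟩
  · obtain ⟨C, hC, h⟩ := main n
    refine ⟨C, hC, fun x D X t h1 h2 h3 h4 => ?_⟩
    have := h x D X t h1 h2 h3 h4
    have e1 : n+1+1-1 = n+1 := by omega
    have e2 : n+1+1-2 = n := by omega
    rw [e1, e2]
    push_cast
    have e3 : ((n:ℝ)+1+1) = n+2 := by ring
    rw [e3]
    have e4 : ((n:ℝ)+2-1) = n+1 := by ring
    rw [e4]
    exact this

lemma step_expand (p : ℕ) (C0 : ℝ) (hC0 : 1 ≤ C0) : ∃ C : ℝ, 0 ≤ C ∧ ∀ W h w e G H x : ℝ,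
    0 ≤ W → 0 ≤ h → h ≤ 1 → |w| ≤ C0*W → |e| ≤ C0*(h*W) → G^2 ≤ C0*(h*W) → |H| ≤ C0*h →
    |(w - e + 2*G*x + H*x^2)^p - w^p + p*w^(p-1)*e - 2*p*w^(p-1)*G*x
      - (p*w^(p-1)*H + 2*p*(p-1)*w^(p-2)*G^2)*x^2| ≤ C*(Real.sqrt h)^3*(W^p + |x|^(2*p)) := by
  obtain ⟨C1, hC1, hT⟩ := taylor2 p
  refine ⟨(C1 + 3*(p*(p+1)/2)) * (C0^p * 2^(2*p-1)), by positivity, ?_⟩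
  intro W h w e G H x hW hh hh1 hw he hG hH
  set t := Real.sqrt h with ht
  set z := Real.sqrt W with hz
  have ht0 : 0 ≤ t := Real.sqrt_nonneg _
  have hz0 : 0 ≤ z := Real.sqrt_nonneg _
  have hth : t^2 = h := Real.sq_sqrt hh
  have hzW : z^2 = W := Real.sq_sqrt hW
  have ht1 : t ≤ 1 := by rw [ht]; exact Real.sqrt_le_one.2 hh1 
  have hG' : |G| ≤ C0*(t*z) := by
    apply abs_le_of_sq_le_sq _ (by positivity)
    rw [← hth, ← hzW] at hG
    have : 0 ≤ (t*z)^2 := by positivity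
    nlinarith
  set X := C0*(z+|x|)^2 with hX
  have hx0 := abs_nonneg x
  have hwX : |w| ≤ X := by
    refine hw.trans ?_
    rw [hX, ← hzW]
    have : z^2 ≤ (z+|x|)^2 := by gcongr; linarith
    gcongr
  set D := -e + 2*G*x + H*x^2 with hD
  have hxx : x^2 = |x|^2 := (sq_abs x).symm
  have b1 : |-e + H*x^2| ≤ t^2*X := by
    refine (abs_add_le _ _).trans ?_
    rw [abs_neg, abs_mul, abs_pow, hX]
    rw [← hth, ← hzW] at he
    rw [← hth] at hH
    have h3 := mul_le_mul_of_nonneg_right hH (sq_nonneg |x|)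
    have : 0 ≤ C0*(t^2*(2*(z*|x|))) := by positivity
    nlinarith
  have b2 : |2*G*x| ≤ t*X := by
    rw [abs_mul, abs_mul, abs_two, hX]
    have h3 := mul_le_mul_of_nonneg_right hG' hx0
    have : 0 ≤ C0*(t*(z^2+|x|^2)) := by positivity
    nlinarith
  have hX0 : 0 ≤ X := by positivity
  have b0 : |D| ≤ t*X := by
    have e1 : D = (-e + H*x^2) + 2*G*x := by rw [hD]; ring
    rw [e1]
    refine (abs_add_le _ _).trans ?_
    rw [abs_mul, abs_mul, abs_two]
    have h3 := mul_le_mul_of_nonneg_right hG' hx0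
    have h4 : |-e + H*x^2| ≤ C0*(t*(z^2+|x|^2)) := by
      refine (abs_add_le _ _).trans ?_
      rw [abs_neg, abs_mul, abs_pow]
      rw [← hth, ← hzW] at he
      rw [← hth] at hH
      have h3 := mul_le_mul_of_nonneg_right hH (sq_nonneg |x|)
      have h5 : t^2 ≤ t := by nlinarith
      have h6 : C0*(t^2*(z^2+|x|^2)) ≤ C0*(t*(z^2+|x|^2)) := by gcongr
      nlinarith
    rw [hX]
    nlinarith
  have hT' := hT w D X t hwX b0 ht0 ht1
  have b3 : |D^2 - 4*G^2*x^2| ≤ 3*(t^3*X^2) := by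
    have e1 : D^2 - 4*G^2*x^2 = (-e+H*x^2)*(D + 2*G*x) := by rw [hD]; ring
    rw [e1, abs_mul]
    have : |D + 2*G*x| ≤ 3*(t*X) := by
      refine (abs_add_le _ _).trans ?_
      have : 0 ≤ t*X := by positivity
      linarith
    calc |-e + H*x^2| * |D + 2*G*x| ≤ (t^2*X)*(3*(t*X)) :=
          mul_le_mul b1 this (abs_nonneg _) (by positivity)
      _ = _ := by ring
  have b4 : |(p:ℝ)*(p-1)/2*w^(p-2)*(D^2 - 4*G^2*x^2)| ≤ 3*(p*(p+1)/2)*(t^3*X^p) := by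
    rcases p with _ | _ | n
    · simp
    · simp; positivity
    · have e2 : n+1+1-2 = n := by omega
      rw [e2, abs_mul, abs_mul, abs_pow]
      have h5 : |((n+1+1:ℕ):ℝ)*(((n+1+1:ℕ):ℝ)-1)/2| ≤ ((n+1+1:ℕ):ℝ)*(((n+1+1:ℕ):ℝ)+1)/2 := by
        rw [abs_of_nonneg]
        · gcongr; linarith
        · push_cast
          have : (0:ℝ) ≤ n := Nat.cast_nonneg n
          have h7 : (0:ℝ) ≤ (n:ℝ)+1+1-1 := by linarith
          positivity
      calc _ ≤ ((n+1+1:ℕ):ℝ)*(((n+1+1:ℕ):ℝ)+1)/2 * X^n * (3*(t^3*X^2)) := by gcongr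
        _ = _ := by ring
  have b5 : X^p ≤ C0^p * 2^(2*p-1) * (W^p + |x|^(2*p)) := by
    rw [hX, mul_pow, ← pow_mul]
    have := add_pow_le hz0 hx0 (2*p)
    rw [pow_mul z 2 p, hzW] at this
    calc C0^p * (z+|x|)^(2*p) ≤ C0^p * (2^(2*p-1) * (W^p + |x|^(2*p))) := by gcongr
      _ = _ := by ring
  have e3 : (w - e + 2*G*x + H*x^2)^p - w^p + p*w^(p-1)*e - 2*p*w^(p-1)*G*x
      - (p*w^(p-1)*H + 2*p*(p-1)*w^(p-2)*G^2)*x^2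
      = ((w+D)^p - w^p - p*w^(p-1)*D - p*(p-1)/2*w^(p-2)*D^2)
        + p*(p-1)/2*w^(p-2)*(D^2 - 4*G^2*x^2) := by
    have : w - e + 2*G*x + H*x^2 = w + D := by rw [hD]; ring
    rw [this]
    have e4 : (p:ℝ)*w^(p-1)*D = p*w^(p-1)*(-e + 2*G*x + H*x^2) := by rw [hD]
    rw [e4]; ring
  rw [e3]
  refine (abs_add_le _ _).trans ((add_le_add hT' b4).trans ?_)
  have e5 : C1*t^3*X^p + 3*(p*(p+1)/2)*(t^3*X^p) = (C1 + 3*(p*(p+1)/2))*t^3*X^p := by ring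
  rw [e5]
  calc (C1 + 3*((p:ℝ)*(p+1)/2))*t^3*X^p
      ≤ (C1 + 3*((p:ℝ)*(p+1)/2))*t^3*(C0^p * 2^(2*p-1) * (W^p + |x|^(2*p))) := by gcongr
    _ = _ := by ring

lemma summable_h_div (h : ℕ → ℝ) (hh : ∀ n, 0 ≤ h n) (δ : ℝ) (hδ : 0 < δ) :
    Summable (fun n => h n / (1 + ∑ k ∈ range (n+1), h k)^(1+δ)) := by
  set b : ℕ → ℝ := fun n => 1 + ∑ k ∈ range n, h k with hb
  have hb1 : ∀ n, 1 ≤ b n := fun n => by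
    simp only [hb]; linarith [Finset.sum_nonneg (fun k (_ : k ∈ range n) => hh k)]
  have hbs : ∀ n, b (n+1) = b n + h n := fun n => by
    simp only [hb, Finset.sum_range_succ]; ring
  have key : ∀ n, δ * (h n / (b (n+1))^(1+δ)) ≤ (b n)^(-δ) - (b (n+1))^(-δ) := by
    intro n
    have x0 : 0 < b n := by linarith [hb1 n]
    have y0 : 0 < b (n+1) := by linarith [hb1 (n+1)]
    set x := b n
    set y := b (n+1)
    have hlog : Real.log (x/y) ≤ x/y - 1 := Real.log_le_sub_one_of_pos (by positivity)
    have h1 : 1 + δ * (1 - x/y) ≤ (x/y)^(-δ) := by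
      rw [Real.rpow_def_of_pos (by positivity)]
      have := Real.add_one_le_exp (Real.log (x/y) * -δ)
      nlinarith
    have h2 : x^(-δ) = (x/y)^(-δ) * y^(-δ) := by
      rw [← Real.mul_rpow (by positivity) y0.le]; congr 1; field_simp
    have h3 : h n / y^(1+δ) = (1 - x/y) * y^(-δ) := by
      rw [Real.rpow_add y0, Real.rpow_neg y0.le, Real.rpow_one]
      have : h n = y - x := by simp only [x, y]; rw [hbs n]; ring
      have : 0 < y^δ := by positivity
      rw [‹h n = y - x›]; field_simp
    rw [h3, h2]
    have : 0 < y^(-δ) := by positivity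
    nlinarith
  have hs : ∀ n, ∑ k ∈ range n, δ * (h k / (b (k+1))^(1+δ)) ≤ 1 := by
    intro n
    calc _ ≤ ∑ k ∈ range n, ((b k)^(-δ) - (b (k+1))^(-δ)) := Finset.sum_le_sum fun k _ => key k
      _ = (b 0)^(-δ) - (b n)^(-δ) := Finset.sum_range_sub' _ _
      _ ≤ 1 := by
        have : 0 ≤ (b n)^(-δ) := Real.rpow_nonneg (by linarith [hb1 n]) _
        have h0 : b 0 = 1 := by simp [hb]
        rw [h0, Real.one_rpow]; linarith
  have := summable_of_sum_range_le (f := fun k => δ * (h k / (b (k+1))^(1+δ)))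
    (fun n => by
      have := hh n
      have := hb1 (n+1)
      positivity) hs
  exact (summable_mul_left_iff hδ.ne').1 this

lemma abel_bound (x v : ℕ → ℝ) (C : ℝ) (hv : Monotone v) (hv0 : ∀ n, 0 ≤ v n)
    (hx : ∀ n, |∑ k ∈ range n, x k| ≤ C) (n : ℕ) :
    |∑ k ∈ range n, v (k+1) * x k| ≤ 2 * C * v n := by
  have hC : 0 ≤ C := (abs_nonneg _).trans (hx 0)
  have key : ∀ n, |∑ k ∈ range n, v (k+1) * x k - v n * ∑ k ∈ range n, x k| ≤ C * v n := by
    intro n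
    induction n with
    | zero => simpa using mul_nonneg hC (hv0 0)
    | succ n ih =>
      rw [Finset.sum_range_succ, Finset.sum_range_succ]
      have e : ∑ k ∈ range n, v (k+1) * x k + v (n+1) * x n
          - v (n+1) * (∑ k ∈ range n, x k + x n)
        = (∑ k ∈ range n, v (k+1) * x k - v n * ∑ k ∈ range n, x k)
          - (v (n+1) - v n) * ∑ k ∈ range n, x k := by ring
      rw [e]
      have h1 : 0 ≤ v (n+1) - v n := sub_nonneg.2 (hv n.le_succ)
      calc _ ≤ |∑ k ∈ range n, v (k+1) * x k - v n * ∑ k ∈ range n, x k|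
            + |(v (n+1) - v n) * ∑ k ∈ range n, x k| := abs_sub _ _
        _ ≤ C * v n + (v (n+1) - v n) * C := by
          rw [abs_mul, abs_of_nonneg h1]
          exact add_le_add ih (mul_le_mul_of_nonneg_left (hx n) h1)
        _ = _ := by ring
  have h2 : |v n * ∑ k ∈ range n, x k| ≤ v n * C := by
    rw [abs_mul, abs_of_nonneg (hv0 n)]; exact mul_le_mul_of_nonneg_left (hx n) (hv0 n)
  have h1 := key n
  rw [abs_le] at h1 h2 ⊢
  constructor <;> linarith [h1.1, h1.2, h2.1, h2.2]

lemma ode_lemma (h y : ℕ → ℝ) (hh : ∀ n, 0 ≤ h n) (hy : ∀ n, 0 ≤ y n) (K c : ℝ) (hc : 0 < c)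
    (h0 : Tendsto h atTop (𝓝 0))
    (hb : Tendsto (fun n => 1 + ∑ k ∈ range n, h k) atTop atTop)
    (hr : (fun n => y n - (K * (1 + ∑ k ∈ range n, h k) - c * ∑ k ∈ range n, h k * y k))
      =o[atTop] fun n => (1 + ∑ k ∈ range n, h k) + ∑ k ∈ range n, h k * y k) :
    Tendsto (fun n => (∑ k ∈ range n, h k * y k) / (1 + ∑ k ∈ range n, h k)) atTop (𝓝 (K/c)) ∧
    Tendsto (fun n => y n / (1 + ∑ k ∈ range n, h k)) atTop (𝓝 0) := by
  set b : ℕ → ℝ := fun n => 1 + ∑ k ∈ range n, h k with hbdef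
  set A : ℕ → ℝ := fun n => ∑ k ∈ range n, h k * y k with hA
  have hb1 : ∀ n, 1 ≤ b n := fun n => by
    simp only [hbdef]; linarith [Finset.sum_nonneg (fun k (_ : k ∈ range n) => hh k)]
  have hA0 : ∀ n, 0 ≤ A n := fun n => Finset.sum_nonneg fun k _ => mul_nonneg (hh k) (hy k)
  have hbs : ∀ n, b (n+1) = b n + h n := fun n => by
    simp only [hbdef, Finset.sum_range_succ]; ring
  have hAs : ∀ n, A (n+1) = A n + h n * y n := fun n => by
    simp only [hA, Finset.sum_range_succ]
  have hr' : ∀ η > 0, ∀ᶠ n in atTop, |y n - (K * b n - c * A n)| ≤ η * (b n + A n) := by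
    intro η hη
    filter_upwards [Asymptotics.isLittleO_iff.1 hr hη] with n hn
    have hbn := hb1 n
    have hAn := hA0 n
    rw [Real.norm_eq_abs, Real.norm_eq_abs, abs_of_nonneg (a := _ + _) (by simp only [hbdef, hA] at hbn hAn; linarith)] at hn
    exact hn
  set q := K / c with hq
  have hKq : K = c * q := by rw [hq]; field_simp
  have main : ∀ ρ > 0, ∀ᶠ n in atTop, |A n - q * b n| ≤ ρ * b n := by
    intro ρ hρ
    set κ : ℝ := 2 + |q| with hκ
    have hκ0 : 0 < κ := by positivity
    set η : ℝ := min (c/2) (ρ/2 * c / (2*κ)) with hη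
    have hη0 : 0 < η := by positivity
    have hη1 : η ≤ c/2 := min_le_left _ _
    have hη2 : η * κ ≤ ρ/2 * (c/2) := by
      have : η ≤ ρ/2 * c / (2*κ) := min_le_right _ _
      calc η * κ ≤ ρ/2 * c / (2*κ) * κ := mul_le_mul_of_nonneg_right this hκ0.le
        _ = _ := by field_simp
    have e1 := hr' η hη0
    have e2 : ∀ᶠ n in atTop, h n < 1/c := h0.eventually (gt_mem_nhds (by positivity))
    have e3 : ∀ᶠ n in atTop, |q|/η ≤ b n := hb.eventually (eventually_ge_atTop _)
    obtain ⟨N, hN⟩ := eventually_atTop.1 (e1.and (e2.and e3))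
    have step : ∀ n ≥ N, |A (n+1) - q * b (n+1)| - ρ/2 * b (n+1)
        ≤ max (|A n - q * b n| - ρ/2 * b n) 0 := by
      intro n hn
      obtain ⟨h1, h2, h3⟩ := hN n hn
      have hch : c * h n ≤ 1 := by
        rw [lt_div_iff₀ hc] at h2; linarith
      have hqb : |q| ≤ η * b n := by rw [div_le_iff₀ hη0] at h3; linarith
      have hbn := hb1 n
      have hhn := hh n
      set E := A n - q * b n with hE
      have hAE : A n ≤ |E| + |q| * b n := by
        have := le_abs_self E
        have := mul_le_mul_of_nonneg_right (le_abs_self q) (by linarith : 0 ≤ b n)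
        linarith
      set r := y n - (K * b n - c * A n) with hrr
      have hE' : A (n+1) - q * b (n+1) = (1 - c * h n) * E + h n * (r - q) := by
        rw [hAs, hbs, hrr, hKq, hE]; ring
      have hrq : |r - q| ≤ η * |E| + η * κ * b n := by
        calc |r - q| ≤ |r| + |q| := abs_sub _ _
          _ ≤ η * (b n + (|E| + |q| * b n)) + η * b n := by
            refine add_le_add (h1.trans ?_) hqb
            exact mul_le_mul_of_nonneg_left (by linarith) hη0.le
          _ = _ := by rw [hκ]; ring
      have hEa : |A (n+1) - q * b (n+1)| ≤ (1 - c * h n) * |E| + h n * (η * |E| + η * κ * b n) := by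
        rw [hE']
        refine (abs_add_le _ _).trans ?_
        rw [abs_mul, abs_mul, abs_of_nonneg (by linarith : 0 ≤ 1 - c * h n), abs_of_nonneg hhn]
        exact add_le_add le_rfl (mul_le_mul_of_nonneg_left hrq hhn)
      have hEn := abs_nonneg E
      have m1 : h n * (η * |E|) ≤ h n * (c/2 * |E|) :=
        mul_le_mul_of_nonneg_left (mul_le_mul_of_nonneg_right hη1 hEn) hhn
      have m2 : h n * (η * κ * b n) ≤ h n * (ρ/2 * (c/2) * b n) :=
        mul_le_mul_of_nonneg_left (mul_le_mul_of_nonneg_right hη2 (by linarith)) hhn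
      have m3 : |A (n+1) - q * b (n+1)| - ρ/2 * b (n+1) ≤ (1 - c/2 * h n) * (|E| - ρ/2 * b n) := by
        have e : ρ/2 * b (n+1) = ρ/2 * b n + ρ/2 * h n := by rw [hbs n]; ring
        have : 0 ≤ ρ/2 * h n := by positivity
        rw [e]
        linarith
      refine m3.trans ?_
      have hc1 : 0 ≤ 1 - c/2 * h n := by nlinarith
      have hc2 : 1 - c/2 * h n ≤ 1 := by nlinarith [mul_nonneg hc.le hhn]
      calc (1 - c/2 * h n) * (|E| - ρ/2 * b n) ≤ (1 - c/2 * h n) * max (|E| - ρ/2 * b n) 0 :=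
            mul_le_mul_of_nonneg_left (le_max_left _ _) hc1
        _ ≤ 1 * max (|E| - ρ/2 * b n) 0 := mul_le_mul_of_nonneg_right hc2 (le_max_right _ _)
        _ = _ := one_mul _
    set M := max (|A N - q * b N| - ρ/2 * b N) 0 with hM
    have bd : ∀ n ≥ N, |A n - q * b n| - ρ/2 * b n ≤ M := by
      intro n hn
      induction n, hn using Nat.le_induction with
      | base => exact le_max_left _ _
      | succ n hn ih => exact (step n hn).trans (max_le ih (le_max_right _ _))
    filter_upwards [eventually_ge_atTop N, hb.eventually (eventually_ge_atTop (M / (ρ/2)))] with n h1 h2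
    have := bd n h1
    have h2' : M / (ρ/2) ≤ b n := h2
    rw [div_le_iff₀ (by positivity)] at h2'
    linarith
  have lim1 : Tendsto (fun n => A n / b n) atTop (𝓝 q) := by
    rw [Metric.tendsto_atTop]
    intro ρ hρ
    obtain ⟨N, hN⟩ := eventually_atTop.1 (main (ρ/2) (by positivity))
    refine ⟨N, fun n hn => ?_⟩
    have hbn := hb1 n
    have hb0 : 0 < b n := by linarith
    have e : A n / b n - q = (A n - q * b n) / b n := by field_simp
    rw [Real.dist_eq, e, abs_div, abs_of_pos hb0]
    have : |A n - q * b n| / b n ≤ ρ/2 := by rw [div_le_iff₀ hb0]; exact hN n hn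
    linarith
  refine ⟨lim1, ?_⟩
  have lim2 : Tendsto (fun n => K - c * (A n / b n)) atTop (𝓝 0) := by
    have := (tendsto_const_nhds (x := K)).sub (lim1.const_mul c)
    rwa [hKq, sub_self, ← hKq] at this
  have lim3 : Tendsto (fun n => (y n - (K * b n - c * A n)) / b n) atTop (𝓝 0) := by
    have hO : (fun n => b n + A n) =O[atTop] b := by
      have : Tendsto (fun n => 1 + A n / b n) atTop (𝓝 (1 + q)) := lim1.const_add 1
      refine Asymptotics.isBigO_of_div_tendsto_nhds (Eventually.of_forall fun n hn => ?_) (1+q) ?_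
      · linarith [hb1 n]
      · refine this.congr fun n => ?_
        have : b n ≠ 0 := by linarith [hb1 n]
        simp only [Pi.div_apply]; field_simp
    exact (hr.trans_isBigO hO).tendsto_div_nhds_zero
  have := lim3.add lim2
  rw [add_zero] at this
  refine this.congr fun n => ?_
  have hbn0 : b n ≠ 0 := by linarith [hb1 n]
  change (y n - (K * b n - c * A n)) / b n + (K - c * (A n / b n)) = y n / b n
  generalize b n = B at hbn0 ⊢
  field_simp; ring

structure Noise {Ω : Type*} {m0 : MeasurableSpace Ω} (μ : Measure Ω)
    (F : Filtration ℕ m0) (ε : ℕ → Ω → ℝ) (σ a : ℝ) : Prop where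
  adapt : ∀ n, StronglyMeasurable[F n] (ε n)
  int : ∀ n, Integrable (ε n) μ
  mds : ∀ n, μ[ε (n + 1)|F n] =ᵐ[μ] 0
  var : ∀ n, μ[fun ω => ε (n + 1) ω ^ 2|F n] =ᵐ[μ] fun _ => σ ^ 2
  momint : ∀ n, Integrable (fun ω => |ε (n + 1) ω| ^ a) μ
  mom : ∀ᵐ ω ∂μ, ∃ C : ℝ, ∀ n, (μ[fun ω => |ε (n + 1) ω| ^ a|F n]) ω ≤ C

lemma abs_rpow_le_one_add (x k a : ℝ) (hk : 0 ≤ k) (hka : k ≤ a) : |x|^k ≤ 1 + |x|^a := by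
  rcases le_total |x| 1 with h | h
  · have := Real.rpow_le_one (abs_nonneg x) h hk
    have := Real.rpow_nonneg (abs_nonneg x) a
    linarith
  · have := Real.rpow_le_rpow_of_exponent_le h hka
    linarith

lemma abs_pow_le_one_add (x a : ℝ) (k : ℕ) (hka : k ≤ a) : |x|^k ≤ 1 + |x|^a := by
  rw [← Real.rpow_natCast]; exact abs_rpow_le_one_add x k a (by positivity) hka

namespace Noise
variable {Ω : Type*} {m0 : MeasurableSpace Ω} {μ : Measure Ω} [IsProbabilityMeasure μ]
  {F : Filtration ℕ m0} {ε : ℕ → Ω → ℝ} {σ a : ℝ}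

lemma eta_int (hN : Noise μ F ε σ a) (n : ℕ) : Integrable (fun ω => 1 + |ε (n+1) ω|^a) μ :=
  (integrable_const 1).add (hN.momint n)

lemma eta_bd (hN : Noise μ F ε σ a) :
    ∀ᵐ ω ∂μ, ∃ C : ℝ, ∀ n, (μ[fun ω => 1 + |ε (n+1) ω|^a|F n]) ω ≤ C := by
  have h : ∀ᵐ ω ∂μ, ∀ n, (μ[fun ω => 1 + |ε (n+1) ω|^a|F n]) ω
      = 1 + (μ[fun ω => |ε (n+1) ω|^a|F n]) ω := by
    rw [ae_all_iff]; intro n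
    have h1 := condExp_add (μ := μ) (m := F n) (integrable_const (1:ℝ)) (hN.momint n)
    rw [condExp_const (F.le n)] at h1
    filter_upwards [h1] with ω h1
    exact h1
  filter_upwards [h, hN.mom] with ω h1 ⟨C, hC⟩
  exact ⟨1 + C, fun n => by rw [h1]; linarith [hC n]⟩

lemma pow_int (hN : Noise μ F ε σ a) (k : ℕ) (hk : k ≤ a) (n : ℕ) :
    Integrable (fun ω => |ε (n+1) ω|^k) μ := by
  refine (hN.eta_int n).mono' ?_ (Eventually.of_forall fun ω => ?_)
  · exact (((hN.adapt (n+1)).mono (F.le _)).norm.pow k).aestronglyMeasurable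
  · rw [Real.norm_eq_abs, abs_of_nonneg (by positivity)]
    exact abs_pow_le_one_add _ _ _ hk

lemma sq_int (hN : Noise μ F ε σ a) (ha : 2 ≤ a) (n : ℕ) :
    Integrable (fun ω => ε (n+1) ω^2) μ := by
  simpa using hN.pow_int 2 (by simpa using ha) n

lemma xi2_int (hN : Noise μ F ε σ a) (ha : 2 ≤ a) (n : ℕ) :
    Integrable (fun ω => ε (n+1) ω^2 - σ^2) μ := (hN.sq_int ha n).sub (integrable_const _)

lemma xi2_ce (hN : Noise μ F ε σ a) (ha : 2 ≤ a) (n : ℕ) :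
    μ[fun ω => ε (n+1) ω^2 - σ^2|F n] =ᵐ[μ] 0 := by
  have h1 := condExp_sub (μ := μ) (hN.sq_int ha n) (integrable_const (σ^2)) (F n)
  rw [condExp_const (F.le n)] at h1
  filter_upwards [h1, hN.var n] with ω h1 h2
  have h1' : (μ[fun ω => ε (n+1) ω^2 - σ^2|F n]) ω = (μ[fun ω => ε (n+1) ω^2|F n]) ω - σ^2 := h1
  rw [h1', h2]; simp

lemma xi2_meas (hN : Noise μ F ε σ a) (n : ℕ) :
    StronglyMeasurable[F (n+1)] (fun ω => ε (n+1) ω^2 - σ^2) :=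
  ((hN.adapt (n+1)).pow 2).sub stronglyMeasurable_const
end Noise

lemma pow_absorb (q : ℕ) (C e : ℝ) (hC : 0 ≤ C) (he : 0 < e) :
    ∃ C', 0 ≤ C' ∧ ∀ W : ℝ, 0 ≤ W → C * W^q ≤ e * W^(q+1) + C' := by
  refine ⟨C * (C/e)^q, by positivity, fun W hW => ?_⟩
  rcases le_total (C/e) W with h | h
  · rw [div_le_iff₀ he] at h
    have : 0 ≤ C * (C/e)^q := by positivity
    have : 0 ≤ W^q := by positivity
    rw [pow_succ]; nlinarith
  · have h1 : W^q ≤ (C/e)^q := pow_le_pow_left₀ hW h q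
    have : 0 ≤ e * W^(q+1) := by positivity
    nlinarith

lemma rs_W {Ω : Type*} {m0 : MeasurableSpace Ω} {μ : Measure Ω} [IsProbabilityMeasure μ]
    {F : Filtration ℕ m0} {ε : ℕ → Ω → ℝ} {σ a : ℝ} (hN : Noise μ F ε σ a) (ha2 : 2 ≤ a)
    (q : ℕ) (ha : 2 * (q+1) ≤ a) (δ : ℝ) (hδ : 0 < δ) (D : ℝ) (hD : 1 ≤ D)
    (W h G : ℕ → Ω → ℝ) (hWm : ∀ n, StronglyMeasurable[F n] (W n))
    (hhm : ∀ n, StronglyMeasurable[F n] (h n)) (hGm : ∀ n, StronglyMeasurable[F n] (G n))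
    (hW : ∀ n ω, 0 ≤ W n ω) (hh : ∀ n ω, 0 ≤ h n ω) (hhD : ∀ n ω, h n ω ≤ D)
    (hG : ∀ n ω, G n ω^2 ≤ h n ω * ((1 - h n ω/D) * W n ω))
    (hrec : ∀ n ω, W (n+1) ω = (1 - h n ω/D) * W n ω + 2 * G n ω * ε (n+1) ω
      + h n ω * ε (n+1) ω^2) :
    ∀ᵐ ω ∂μ, (∃ C, ∀ n, W n ω^(q+1) ≤ C * (1 + ∑ k ∈ range n, h k ω)^(1+δ)) ∧
      Summable (fun n => h n ω * W n ω^(q+1) / (1 + ∑ k ∈ range (n+1), h k ω)^(1+δ)) := by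
  obtain ⟨C, hC0, hC⟩ := pow_upper q
  obtain ⟨C', hC'0, hC'⟩ := pow_absorb q (C * σ^2) (1/(2*D)) (by positivity) (by positivity)
  set b : ℕ → Ω → ℝ := fun n ω => 1 + ∑ k ∈ range n, h k ω with hbdef
  have hb1 : ∀ n ω, 1 ≤ b n ω := fun n ω => by
    simp only [hbdef]; linarith [Finset.sum_nonneg (fun k (_ : k ∈ range n) => hh k ω)]
  have hbs : ∀ n ω, b (n+1) ω = b n ω + h n ω := fun n ω => by
    simp only [hbdef, Finset.sum_range_succ]; ring
  have hbm : ∀ n, StronglyMeasurable[F n] (b (n+1)) := fun n =>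
    stronglyMeasurable_const.add (Finset.stronglyMeasurable_fun_sum _ fun k hk =>
      (hhm k).mono (F.mono (Nat.lt_succ_iff.1 (Finset.mem_range.1 hk))))
  have hbm' : ∀ n, StronglyMeasurable[F n] (b n) := fun n =>
    stronglyMeasurable_const.add (Finset.stronglyMeasurable_fun_sum _ fun k hk =>
      (hhm k).mono (F.mono (Finset.mem_range.1 hk).le))
  let β : ℕ → Ω → ℝ := fun n ω => (b n ω)^(1+δ)
  have hβ0 : ∀ n ω, 0 < β n ω := fun n ω => Real.rpow_pos_of_pos (by linarith [hb1 n ω]) _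
  have hβs : ∀ n ω, β n ω ≤ β (n+1) ω := fun n ω =>
    Real.rpow_le_rpow (by linarith [hb1 n ω]) (by rw [hbs]; linarith [hh n ω]) (by linarith)
  have hβm : ∀ n, StronglyMeasurable[F n] (β (n+1)) := fun n => sm_rpow (hbm n) _
  have hβm' : ∀ n, StronglyMeasurable[F n] (β n) := fun n => sm_rpow (hbm' n) _
  have hym : ∀ n, StronglyMeasurable[F n] (fun ω => (1 - h n ω/D) * W n ω) := fun n => by
    have : StronglyMeasurable[F n] (fun ω => h n ω * D⁻¹) := (hhm n).mul stronglyMeasurable_const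
    exact (stronglyMeasurable_const.sub this).mul (hWm n)
  set C2 : ℝ := C' + C * D^q with hC2
  have hC20 : 0 ≤ C2 := by positivity
  have key := rs_main (μ := μ) F (fun n ω => W n ω^(q+1) / β n ω)
    (fun n ω => 1/(2*D) * (h n ω * W n ω^(q+1) / β (n+1) ω))
    (fun n ω => C2 * (h n ω / β (n+1) ω))
    (fun n ω => 2*(q+1) * ((1 - h n ω/D) * W n ω)^q * G n ω / β (n+1) ω)
    (fun n ω => C * (((1 - h n ω/D) * W n ω)^q * h n ω) / β (n+1) ω)
    ε (fun n ω => ε n ω^2 - σ^2) (fun n ω => 1 + |ε n ω|^a)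
    (fun n => ((hWm n).pow _).div (hβm' n))
    (fun n => stronglyMeasurable_const.mul (((hhm n).mul ((hWm n).pow _)).div (hβm n)))
    (fun n => stronglyMeasurable_const.mul ((hhm n).div (hβm n)))
    (fun n => ((stronglyMeasurable_const.mul ((hym n).pow q)).mul (hGm n)).div (hβm n))
    (fun n => (stronglyMeasurable_const.mul (((hym n).pow q).mul (hhm n))).div (hβm n))
    (fun n ω => div_nonneg (pow_nonneg (hW n ω) _) (hβ0 n ω).le)
    (fun n ω => mul_nonneg (by positivity)
      (div_nonneg (mul_nonneg (hh n ω) (pow_nonneg (hW n ω) _)) (hβ0 _ ω).le))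
    (fun n ω => mul_nonneg hC20 (div_nonneg (hh n ω) (hβ0 _ ω).le))
    (fun n => hN.int _) (fun n => hN.xi2_int ha2 n) (fun n => hN.eta_int n)
    (fun n => hN.mds n) (fun n => hN.xi2_ce ha2 n)
    (fun n ω => by positivity) hN.eta_bd
    (Eventually.of_forall fun ω =>
      (summable_h_div (fun n => h n ω) (fun n => hh n ω) δ hδ).mul_left C2) ?_
  · filter_upwards [key] with ω ⟨⟨C1, h1⟩, h2⟩
    refine ⟨⟨C1, fun n => ?_⟩, (summable_mul_left_iff (by positivity)).1 h2⟩
    have := h1 n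
    rwa [div_le_iff₀ (hβ0 n ω)] at this
  · intro n ω
    have hβ := hβ0 (n+1) ω
    have hβ' := hβ0 n ω
    have hWn := hW n ω
    have hhn := hh n ω
    have hhDn := hhD n ω
    have hr := hrec n ω
    have hGn := hG n ω
    set x := ε (n+1) ω with hx
    set w := W n ω
    set t := h n ω
    set g := G n ω
    have hs0 : 0 ≤ 1 - t/D := by
      rw [sub_nonneg, div_le_one (by linarith)]; exact hhDn
    have hs1 : 1 - t/D ≤ 1 := by
      have : 0 ≤ t/D := by positivity
      linarith
    set y := (1 - t/D) * w with hy
    have hy0 : 0 ≤ y := mul_nonneg hs0 hWn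
    have hyw : y ≤ w := by nlinarith
    have hu := hC y (t*x^2) (g*x) hy0 (by positivity) (by
      have := mul_le_mul_of_nonneg_right hGn (sq_nonneg x)
      nlinarith)
    have hWle : W (n+1) ω^(q+1) ≤ y^(q+1) + 2*(q+1)*y^q*(g*x)
        + C*(y^q*(t*x^2) + (t*x^2)^(q+1)) := by
      have e : W (n+1) ω = y + 2*(g*x) + t*x^2 := by rw [hr]; ring
      rw [e]; exact hu
    have f1 : y^(q+1) ≤ w^(q+1) - t/D * w^(q+1) := by
      have h1 : y^q ≤ w^q := pow_le_pow_left₀ hy0 hyw q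
      calc y^(q+1) = y^q * y := pow_succ _ _
        _ ≤ w^q * y := mul_le_mul_of_nonneg_right h1 hy0
        _ = _ := by rw [hy]; ring
    have f2 : C * (y^q * (t * x^2)) ≤ C * (y^q * t) * (x^2 - σ^2)
        + t * (1/(2*D) * w^(q+1) + C') := by
      have h1 : y^q ≤ w^q := pow_le_pow_left₀ hy0 hyw q
      have h2 := hC' w hWn
      have h3 : C * σ^2 * y^q ≤ C * σ^2 * w^q := mul_le_mul_of_nonneg_left h1 (by positivity)
      have h4 := mul_le_mul_of_nonneg_left (h3.trans h2) hhn
      nlinarith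
    have hη1 : |x|^(2*(q+1)) ≤ 1 + |x|^a := abs_pow_le_one_add x a _ (by push_cast; linarith)
    have hη2 : (1:ℝ) ≤ 1 + |x|^a := by
      have : 0 ≤ |x|^a := by positivity
      linarith
    have f3 : C * (t*x^2)^(q+1) ≤ C * D^q * t * (1 + |x|^a) := by
      have h1 : (t*x^2)^(q+1) = t^q * t * |x|^(2*(q+1)) := by
        rw [mul_pow, pow_mul |x|, sq_abs, pow_succ t]
      have h2 : t^q ≤ D^q := pow_le_pow_left₀ hhn hhDn q
      rw [h1]
      have h3 : t^q * t * |x|^(2*(q+1)) ≤ D^q * t * (1 + |x|^a) :=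
        mul_le_mul (mul_le_mul_of_nonneg_right h2 hhn) hη1 (by positivity) (by positivity)
      calc _ ≤ C * (D^q * t * (1 + |x|^a)) := mul_le_mul_of_nonneg_left h3 hC0
        _ = _ := by ring
    have f4 : t * C' ≤ C' * t * (1 + |x|^a) := by
      have : 0 ≤ C' * t := by positivity
      nlinarith
    have f5 : W (n+1) ω^(q+1) + 1/(2*D) * (t * w^(q+1)) ≤ w^(q+1) + 2*(q+1)*y^q*g*x
        + C * (y^q * t) * (x^2 - σ^2) + C2 * t * (1 + |x|^a) := by
      have e1 : t/D * w^(q+1) = 2 * (1/(2*D) * (t * w^(q+1))) := by field_simp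
      have e2 : t * (1/(2*D) * w^(q+1) + C') = 1/(2*D) * (t * w^(q+1)) + t*C' := by ring
      rw [e1] at f1; rw [e2] at f2
      rw [hC2]
      linarith
    have f6 : w^(q+1) / β (n+1) ω ≤ w^(q+1) / β n ω :=
      div_le_div_of_nonneg_left (by positivity) hβ' (hβs n ω)
    have f7 := div_le_div_of_nonneg_right f5 hβ.le
    calc _ = (W (n+1) ω^(q+1) + 1/(2*D) * (t * w^(q+1))) / β (n+1) ω := by ring
      _ ≤ _ := f7
      _ = w^(q+1) / β (n+1) ω + 2*(q+1)*y^q*g/β (n+1) ω*x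
        + C * (y^q * t)/ β (n+1) ω * (x^2 - σ^2) + C2 * (t/ β (n+1) ω) * (1 + |x|^a) := by ring
      _ ≤ _ := by gcongr

lemma diff_rpow_le (A B s η : ℝ) (hA : 0 ≤ A) (hs1 : 1 ≤ s) (hs2 : s ≤ 2) (h1 : A^s ≤ η)
    (h2 : 1 ≤ η) : |A - B|^s ≤ 4 * (2 + B^2) * η := by
  have hB := abs_nonneg B
  have hBs : |B|^s ≤ 1 + B^2 := by
    have := abs_rpow_le_one_add B s 2 (by linarith) hs2
    simpa using this
  have h3 : |A - B| ≤ 2 * max A |B| := by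
    have : |A - B| ≤ |A| + |B| := abs_sub _ _
    rw [abs_of_nonneg hA] at this
    linarith [le_max_left A |B|, le_max_right A |B|]
  have hm : 0 ≤ max A |B| := le_max_of_le_left hA
  have h4 : (max A |B|)^s ≤ A^s + |B|^s := by
    have i1 := Real.rpow_nonneg hA s
    have i2 := Real.rpow_nonneg hB s
    rcases max_choice A |B| with h | h <;> rw [h] <;> linarith
  have h5 : (2:ℝ)^s ≤ 4 := by
    calc (2:ℝ)^s ≤ 2^(2:ℝ) := Real.rpow_le_rpow_of_exponent_le (by norm_num) hs2
      _ = 4 := by norm_num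
  calc |A - B|^s ≤ (2 * max A |B|)^s := Real.rpow_le_rpow (abs_nonneg _) h3 (by linarith)
    _ = 2^s * (max A |B|)^s := Real.mul_rpow (by norm_num) hm
    _ ≤ 4 * (A^s + |B|^s) := mul_le_mul h5 h4 (by positivity) (by norm_num)
    _ ≤ 4 * (η + (1 + B^2)) := by linarith
    _ ≤ _ := by nlinarith [sq_nonneg B]

lemma mart_o {Ω : Type*} {m0 : MeasurableSpace Ω} {μ : Measure Ω} [IsProbabilityMeasure μ]
    (F : Filtration ℕ m0) (h c ξ η u : ℕ → Ω → ℝ) (s : ℝ) (hs1 : 1 ≤ s) (hs2 : s ≤ 2)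
    (κ : ℝ) (hκ0 : 0 < κ) (hκ1 : κ < 1)
    (hhm : ∀ n, StronglyMeasurable[F n] (h n)) (hh : ∀ n ω, 0 ≤ h n ω)
    (hcm : ∀ n, StronglyMeasurable[F n] (c n)) (hξm : ∀ n, StronglyMeasurable[F (n+1)] (ξ (n+1)))
    (hum : ∀ n, StronglyMeasurable[F n] (u n))
    (hi1 : ∀ n, Integrable (ξ (n+1)) μ)
    (hi3 : ∀ n, Integrable (η (n+1)) μ)
    (he1 : ∀ n, μ[ξ (n+1)|F n] =ᵐ[μ] 0)
    (hηpos : ∀ n ω, 0 ≤ η n ω) (hu0 : ∀ n ω, 0 ≤ u n ω)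
    (hηb : ∀ᵐ ω ∂μ, ∃ C : ℝ, ∀ n, (μ[η (n+1)|F n]) ω ≤ C)
    (hub : ∀ᵐ ω ∂μ, ∃ C : ℝ, ∀ n, u n ω ≤ C)
    (hcs : ∀ᵐ ω ∂μ, Summable (fun n => |c n ω|^s / (1 + ∑ k ∈ range (n+1), h k ω)^(κ*s)))
    (hdom : ∀ n ω, |ξ (n+1) ω|^s ≤ u n ω * η (n+1) ω)
    (hb : ∀ᵐ ω ∂μ, Tendsto (fun n => 1 + ∑ k ∈ range n, h k ω) atTop atTop) :
    ∀ᵐ ω ∂μ, (fun n => ∑ k ∈ range n, c k ω * ξ (k+1) ω) =o[atTop]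
      (fun n => 1 + ∑ k ∈ range n, h k ω) := by
  have hb1 : ∀ n ω, 1 ≤ 1 + ∑ k ∈ range n, h k ω := fun n ω => by
    linarith [Finset.sum_nonneg (fun k (_ : k ∈ range n) => hh k ω)]
  have hbm : ∀ n, StronglyMeasurable[F n] (fun ω => 1 + ∑ k ∈ range (n+1), h k ω) := fun n =>
    stronglyMeasurable_const.add (Finset.stronglyMeasurable_fun_sum _ fun k hk =>
      (hhm k).mono (F.mono (Nat.lt_succ_iff.1 (Finset.mem_range.1 hk))))
  have key := mart_bdd (μ := μ) F (fun n ω => c n ω / (1 + ∑ k ∈ range (n+1), h k ω)^κ) ξ η u s hs1 hs2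
    (fun n => (hcm n).div (sm_rpow (hbm n) κ)) hξm hum hi1 hi3 he1 hηpos hu0 hηb hub
    (by
      filter_upwards [hcs] with ω hω
      refine hω.congr fun n => ?_
      have := hb1 (n+1) ω
      rw [abs_div, abs_of_nonneg (a := _ ^ κ) (by positivity),
        Real.div_rpow (abs_nonneg _) (by positivity), Real.rpow_mul (by positivity)]) hdom
  filter_upwards [key, hb] with ω ⟨C, hC⟩ hbω
  have hmono : Monotone (fun n => (1 + ∑ k ∈ range n, h k ω)^κ) := by
    refine monotone_nat_of_le_succ fun n => ?_
    refine Real.rpow_le_rpow (by linarith [hb1 n ω]) ?_ hκ0.le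
    rw [Finset.sum_range_succ]; linarith [hh n ω]
  have hab := abel_bound (fun k => c k ω / (1 + ∑ j ∈ range (k+1), h j ω)^κ * ξ (k+1) ω)
    (fun n => (1 + ∑ k ∈ range n, h k ω)^κ) C hmono
    (fun n => Real.rpow_nonneg (by linarith [hb1 n ω]) _) hC
  have hO : (fun n => ∑ k ∈ range n, c k ω * ξ (k+1) ω) =O[atTop]
      (fun n => (1 + ∑ k ∈ range n, h k ω)^κ) := by
    refine Asymptotics.IsBigO.of_bound (2*C) (Eventually.of_forall fun n => ?_)
    have h1 := hab n
    have e : ∑ k ∈ range n, (1 + ∑ j ∈ range (k+1), h j ω)^κ *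
        (c k ω / (1 + ∑ j ∈ range (k+1), h j ω)^κ * ξ (k+1) ω)
        = ∑ k ∈ range n, c k ω * ξ (k+1) ω := by
      refine Finset.sum_congr rfl fun k _ => ?_
      have h2 := hb1 (k+1) ω
      have : 0 < (1 + ∑ j ∈ range (k+1), h j ω)^κ := by positivity
      field_simp
    simp only [] at h1
    rw [e] at h1
    rw [Real.norm_eq_abs, Real.norm_eq_abs, abs_of_nonneg (a := _ ^ κ)]
    · exact h1
    · exact Real.rpow_nonneg (by linarith [hb1 n ω]) _
  refine hO.trans_isLittleO ?_
  have h1 := (tendsto_rpow_neg_atTop (by linarith : 0 < 1 - κ)).comp hbω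
  refine Asymptotics.isLittleO_of_tendsto (fun n hn => ?_) (h1.congr fun n => ?_)
  · linarith [hb1 n ω]
  · have h2 : 0 < 1 + ∑ k ∈ range n, h k ω := by linarith [hb1 n ω]
    simp only [Function.comp]
    rw [neg_sub, Real.rpow_sub h2, Real.rpow_one]

lemma sum_rem (r ρ g : ℕ → ℝ) (hρ : ∀ n, 0 ≤ ρ n) (hr : ∀ᶠ n in atTop, |r n| ≤ ρ n)
    (hg : Tendsto g atTop atTop)
    (ho : (fun n => ∑ k ∈ range n, ρ k) =o[atTop] g) :
    (fun n => ∑ k ∈ range n, r k) =o[atTop] g := by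
  obtain ⟨N, hN⟩ := eventually_atTop.1 hr
  set K := ∑ k ∈ range N, |r k| with hK
  have hK0 : 0 ≤ K := Finset.sum_nonneg fun _ _ => abs_nonneg _
  have hbd : ∀ n, |∑ k ∈ range n, r k| ≤ K + ∑ k ∈ range n, ρ k := by
    intro n
    refine (Finset.abs_sum_le_sum_abs _ _).trans ?_
    induction n with
    | zero => simpa using hK0
    | succ n ih =>
      by_cases hn : n < N
      · have h1 : ∑ k ∈ range (n+1), |r k| ≤ K :=
          Finset.sum_le_sum_of_subset_of_nonneg (Finset.range_subset_range.2 hn)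
            fun _ _ _ => abs_nonneg _
        linarith [Finset.sum_nonneg (fun k (_ : k ∈ range (n+1)) => hρ k)]
      · rw [Finset.sum_range_succ, Finset.sum_range_succ]
        linarith [hN n (not_lt.1 hn)]
  have hc : (fun _ : ℕ => K) =o[atTop] g :=
    Asymptotics.isLittleO_const_left.2 (Or.inr (tendsto_norm_atTop_atTop.comp hg))
  refine Asymptotics.IsBigO.trans_isLittleO ?_ (hc.add ho)
  refine Asymptotics.IsBigO.of_bound 1 (Eventually.of_forall fun n => ?_)
  rw [Real.norm_eq_abs, Real.norm_eq_abs, one_mul]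
  exact (hbd n).trans (le_abs_self _)

lemma summ1 (h W c : ℕ → ℝ) (p : ℕ) (hp : 1 ≤ p) (hh : ∀ n, 0 ≤ h n) (hW : ∀ n, 0 ≤ W n)
    (δ κ : ℝ) (hδ : 0 < δ) (hκ : (1+δ)*(2 - 1/p) ≤ κ*2) (C1 K : ℝ) (hK0 : 0 ≤ K)
    (hC1 : ∀ n, W n^p ≤ C1 * (1 + ∑ k ∈ range n, h k)^(1+δ))
    (hs : Summable (fun n => h n * W n^p / (1 + ∑ k ∈ range (n+1), h k)^(1+δ)))
    (hc : ∀ n, (c n)^2 ≤ K * (h n * W n^(p-1) * W n^p)) :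
    Summable (fun n => |c n|^(2:ℝ) / (1 + ∑ k ∈ range (n+1), h k)^(κ*2)) := by
  have hb1 : ∀ n, 1 ≤ 1 + ∑ k ∈ range n, h k := fun n => by
    linarith [Finset.sum_nonneg (fun k (_ : k ∈ range n) => hh k)]
  have hp0 : (0:ℝ) < p := by exact_mod_cast hp
  set t : ℝ := 1 - 1/p with ht
  have ht0 : 0 ≤ t := by
    rw [ht, sub_nonneg, div_le_one hp0]; exact_mod_cast hp
  have hC10 : 0 ≤ C1 := by
    have h1 := hC1 0
    simp only [range_zero, sum_empty, add_zero, Real.one_rpow, mul_one] at h1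
    exact (pow_nonneg (hW 0) p).trans h1
  refine Summable.of_nonneg_of_le (fun n => ?_) (fun n => ?_) (hs.mul_left (K * C1^t))
  · have := hb1 (n+1); positivity
  · have hbn := hb1 n
    have hbn1 := hb1 (n+1)
    set B := 1 + ∑ k ∈ range (n+1), h k with hB
    have hWn := hW n
    have hhn := hh n
    have hbB : (1 + ∑ k ∈ range n, h k) ≤ B := by
      rw [hB, Finset.sum_range_succ]; linarith
    have f1 : W n^p ≤ C1 * B^(1+δ) := (hC1 n).trans
      (mul_le_mul_of_nonneg_left (Real.rpow_le_rpow (by linarith) hbB (by linarith)) hC10)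
    have f2 : W n^(p-1) ≤ C1^t * B^((1+δ)*t) := by
      have e : W n^(p-1) = (W n^p)^t := by
        rw [← Real.rpow_natCast, ← Real.rpow_natCast, ← Real.rpow_mul hWn]
        congr 1
        rw [ht, Nat.cast_sub hp]; field_simp; simp
      rw [e, Real.rpow_mul (by linarith), ← Real.mul_rpow hC10 (by positivity)]
      exact Real.rpow_le_rpow (by positivity) f1 ht0
    have f3 : |c n|^(2:ℝ) ≤ K * C1^t * (h n * W n^p) * B^((1+δ)*t) := by
      rw [show (2:ℝ) = ((2:ℕ):ℝ) by norm_num, Real.rpow_natCast, sq_abs]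
      refine (hc n).trans ?_
      have : h n * W n^(p-1) * W n^p ≤ h n * (C1^t * B^((1+δ)*t)) * W n^p := by gcongr
      calc _ ≤ K * (h n * (C1^t * B^((1+δ)*t)) * W n^p) := mul_le_mul_of_nonneg_left this hK0
        _ = _ := by ring
    have f4 : B^((1+δ)*t) * B^(1+δ) ≤ B^(κ*2) := by
      rw [← Real.rpow_add (by linarith)]
      refine Real.rpow_le_rpow_of_exponent_le hbn1 ?_
      rw [ht]; linarith
    have hB0 : 0 < B := by linarith
    rw [mul_div_assoc', div_le_div_iff₀ (by positivity) (by positivity)]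
    calc _ ≤ K * C1^t * (h n * W n^p) * B^((1+δ)*t) * B^(1+δ) :=
          mul_le_mul_of_nonneg_right f3 (by positivity)
      _ = K * C1^t * (h n * W n^p) * (B^((1+δ)*t) * B^(1+δ)) := by ring
      _ ≤ _ := mul_le_mul_of_nonneg_left f4 (by positivity)

lemma summ2 (h W c : ℕ → ℝ) (p : ℕ) (hp : 1 ≤ p) (hh : ∀ n, 0 ≤ h n) (hW : ∀ n, 0 ≤ W n)
    (δ κ s : ℝ) (hδ : 0 < δ) (hs1 : 1 ≤ s) (hs2 : s ≤ 2) (hsp : s ≤ 1 + 1/p)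
    (hκ : 1+δ ≤ κ*s) (D K : ℝ) (hD : ∀ n, h n ≤ D) (hK0 : 0 ≤ K)
    (hs : Summable (fun n => h n * W n^p / (1 + ∑ k ∈ range (n+1), h k)^(1+δ)))
    (hc : ∀ n, |c n| ≤ K * h n * (1 + W n^(p-1))) :
    Summable (fun n => |c n|^s / (1 + ∑ k ∈ range (n+1), h k)^(κ*s)) := by
  have hb1 : ∀ n, 1 ≤ 1 + ∑ k ∈ range n, h k := fun n => by
    linarith [Finset.sum_nonneg (fun k (_ : k ∈ range n) => hh k)]
  have hp0 : (0:ℝ) < p := by exact_mod_cast hp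
  have hD0 : 0 ≤ D := (hh 0).trans (hD 0)
  have hs' := ((summable_h_div h hh δ hδ).add hs).mul_left (K^s * D^(s-1) * 4)
  refine Summable.of_nonneg_of_le (fun n => ?_) (fun n => ?_) hs'
  · have := hb1 (n+1); positivity
  · have hbn1 := hb1 (n+1)
    set B := 1 + ∑ k ∈ range (n+1), h k with hB
    have hWn := hW n
    have hhn := hh n
    have g1 : (h n)^s ≤ D^(s-1) * h n := by
      rcases hhn.eq_or_lt with h0 | h0
      · rw [← h0, Real.zero_rpow (by linarith)]; simp
      · have : (h n)^s = (h n)^(s-1) * h n := by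
          nth_rewrite 3 [← Real.rpow_one (h n)]
          rw [← Real.rpow_add h0]; congr 1; ring
        rw [this]
        exact mul_le_mul_of_nonneg_right (Real.rpow_le_rpow hhn (hD n) (by linarith)) hhn
    have g2 : (1 + W n^(p-1))^s ≤ 4 * (1 + W n^p) := by
      set M := max 1 (W n) with hM
      have hM1 : 1 ≤ M := le_max_left _ _
      have a1 : 1 + W n^(p-1) ≤ 2 * M^(p-1) := by
        have i1 : W n^(p-1) ≤ M^(p-1) := pow_le_pow_left₀ hWn (le_max_right _ _) _
        have i2 : 1 ≤ M^(p-1) := one_le_pow₀ hM1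
        linarith
      have h5 : (2:ℝ)^s ≤ 4 := by
        calc (2:ℝ)^s ≤ 2^(2:ℝ) := Real.rpow_le_rpow_of_exponent_le (by norm_num) hs2
          _ = 4 := by norm_num
      have a2 : (M^(p-1))^s ≤ M^p := by
        rw [← Real.rpow_natCast, ← Real.rpow_mul (by linarith), ← Real.rpow_natCast]
        refine Real.rpow_le_rpow_of_exponent_le hM1 ?_
        rw [Nat.cast_sub hp]
        have : (1:ℝ) ≤ p := by exact_mod_cast hp
        calc ((p:ℝ) - (1:ℕ)) * s ≤ (p - 1) * (1 + 1/p) := by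
              push_cast; exact mul_le_mul_of_nonneg_left hsp (by linarith)
          _ = p - 1/p := by field_simp; ring
          _ ≤ p := by
            have : 0 < 1/(p:ℝ) := by positivity
            linarith
      have a3 : M^p ≤ 1 + W n^p := by
        have := pow_nonneg hWn p
        rcases max_choice 1 (W n) with h | h <;> rw [hM, h]
        · simp; positivity
        · linarith
      calc (1 + W n^(p-1))^s ≤ (2 * M^(p-1))^s :=
            Real.rpow_le_rpow (by positivity) a1 (by linarith)
        _ = 2^s * (M^(p-1))^s := Real.mul_rpow (by norm_num) (by positivity)
        _ ≤ 4 * (1 + W n^p) := mul_le_mul h5 (a2.trans a3) (by positivity) (by norm_num)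
    have g3 : |c n|^s ≤ K^s * D^(s-1) * 4 * (h n * (1 + W n^p)) := by
      calc |c n|^s ≤ (K * h n * (1 + W n^(p-1)))^s :=
            Real.rpow_le_rpow (abs_nonneg _) (hc n) (by linarith)
        _ = K^s * (h n)^s * (1 + W n^(p-1))^s := by
          rw [Real.mul_rpow (by positivity) (by positivity), Real.mul_rpow hK0 hhn]
        _ ≤ K^s * (D^(s-1) * h n) * (4 * (1 + W n^p)) := by gcongr
        _ = _ := by ring
    have hB0 : 0 < B := by linarith
    have g4 : B^(1+δ) ≤ B^(κ*s) := Real.rpow_le_rpow_of_exponent_le hbn1 hκ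
    calc |c n|^s / B^(κ*s) ≤ (K^s * D^(s-1) * 4 * (h n * (1 + W n^p))) / B^(1+δ) :=
          div_le_div₀ (by positivity) g3 (by positivity) g4
      _ = _ := by ring

lemma exps (p : ℕ) (hp : 1 ≤ p) (a : ℝ) (ha : 2 * p < a) : ∃ s δ κ : ℝ, 1 ≤ s ∧ s ≤ 2 ∧
    s ≤ 1 + 1/p ∧ 2 * p * s ≤ a ∧ 0 < δ ∧ 0 < κ ∧ κ < 1 ∧ 1 + δ ≤ κ * s ∧
    (1+δ)*(2 - 1/p) ≤ κ*2 := by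
  have hp0 : (0:ℝ) < p := by exact_mod_cast hp
  have hp1 : (1:ℝ) ≤ p := by exact_mod_cast hp
  set s : ℝ := min (min 2 (1 + 1/p)) (a/(2*p)) with hs
  have i0 : 0 < 1/(p:ℝ) := by positivity
  have i1 : 1/(p:ℝ) ≤ 1 := by rw [div_le_one hp0]; exact hp1
  have hs1 : 1 < s := by
    refine lt_min (lt_min (by norm_num) (by linarith)) ?_
    rw [lt_div_iff₀ (by positivity)]; linarith
  have hs2 : s ≤ 2 := (min_le_left _ _).trans (min_le_left _ _)
  have hs3 : s ≤ 1 + 1/p := (min_le_left _ _).trans (min_le_right _ _)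
  have hs4 : 2 * p * s ≤ a := by
    have : s ≤ a/(2*p) := min_le_right _ _
    rw [le_div_iff₀ (by positivity)] at this; linarith
  set δ : ℝ := min ((s-1)/(s+1)) (1/p/4) with hδ
  have hδ0 : 0 < δ := lt_min (div_pos (by linarith) (by linarith)) (by positivity)
  have hδ1 : δ * (s+1) ≤ s - 1 := by
    have : δ ≤ (s-1)/(s+1) := min_le_left _ _
    rwa [le_div_iff₀ (by linarith)] at this
  have hδ2 : δ ≤ 1/p/4 := min_le_right _ _
  refine ⟨s, δ, 1 - δ, hs1.le, hs2, hs3, hs4, hδ0, by linarith, by linarith, by nlinarith, ?_⟩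
  nlinarith [mul_pos hδ0 i0]

lemma drift {Ω : Type*} {m0 : MeasurableSpace Ω} {μ : Measure Ω} [IsProbabilityMeasure μ]
    {F : Filtration ℕ m0} {ε : ℕ → Ω → ℝ} {σ a : ℝ} (hN : Noise μ F ε σ a)
    (p : ℕ) (hp : 1 ≤ p) (ha : 2 * p < a)
    (W h w e G H : ℕ → Ω → ℝ) 
    (hhm : ∀ n, StronglyMeasurable[F n] (h n)) (hwm : ∀ n, StronglyMeasurable[F n] (w n))
    (hGm : ∀ n, StronglyMeasurable[F n] (G n)) (hHm : ∀ n, StronglyMeasurable[F n] (H n))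
    (hW : ∀ n ω, 0 ≤ W n ω) (hh : ∀ n ω, 0 ≤ h n ω)
    (hrec : ∀ n ω, w (n+1) ω = w n ω - e n ω + 2 * G n ω * ε (n+1) ω
      + H n ω * ε (n+1) ω^2)
    (hh0 : ∀ᵐ ω ∂μ, Tendsto (fun n => h n ω) atTop (𝓝 0))
    (hb : ∀ᵐ ω ∂μ, Tendsto (fun n => 1 + ∑ k ∈ range n, h k ω) atTop atTop)
    (hbnd : ∀ᵐ ω ∂μ, ∃ C, ∀ n, |w n ω| ≤ C * W n ω ∧ |e n ω| ≤ C * (h n ω * W n ω) ∧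
      G n ω^2 ≤ C * (h n ω * W n ω) ∧ |H n ω| ≤ C * h n ω)
    (hgrow : ∀ δ : ℝ, 0 < δ → ∀ᵐ ω ∂μ, (∃ C, ∀ n, W n ω^p ≤ C * (1 + ∑ k ∈ range n, h k ω)^(1+δ)) ∧
      Summable (fun n => h n ω * W n ω^p / (1 + ∑ k ∈ range (n+1), h k ω)^(1+δ))) :
    ∀ᵐ ω ∂μ, (fun n => w n ω^p - ∑ k ∈ range n, (-(p * w k ω^(p-1) * e k ω)
        + σ^2 * (p * w k ω^(p-1) * H k ω + 2 * p * (p-1) * w k ω^(p-2) * G k ω^2)))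
      =o[atTop] fun n => (1 + ∑ k ∈ range n, h k ω) + ∑ k ∈ range n, h k ω * W k ω^p := by
  obtain ⟨s, δ, κ, hs1, hs2, hsp, hsa, hδ, hκ0, hκ1, hκs, hκ2⟩ := exps p hp a ha
  have hp1 : (1:ℝ) ≤ p := by exact_mod_cast hp
  have ha2 : 2 ≤ a := by linarith
  have hbnd' : ∀ᵐ ω ∂μ, ∃ C, 1 ≤ C ∧ ∀ n, |w n ω| ≤ C * W n ω ∧ |e n ω| ≤ C * (h n ω * W n ω) ∧
      G n ω^2 ≤ C * (h n ω * W n ω) ∧ |H n ω| ≤ C * h n ω := by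
    filter_upwards [hbnd] with ω ⟨C, hC⟩
    refine ⟨max C 1, le_max_right _ _, fun n => ?_⟩
    obtain ⟨h1, h2, h3, h4⟩ := hC n
    have hWn := hW n ω
    have hhn := hh n ω
    have hCm := le_max_left C 1
    exact ⟨h1.trans (by gcongr), h2.trans (by gcongr), h3.trans (by gcongr), h4.trans (by gcongr)⟩
  have hhD : ∀ᵐ ω ∂μ, ∃ D, ∀ n, h n ω ≤ D := by
    filter_upwards [hh0] with ω hω
    obtain ⟨D, hD⟩ := hω.bddAbove_range
    exact ⟨D, fun n => hD ⟨n, rfl⟩⟩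
  have hg := hgrow δ hδ
  let c1 : ℕ → Ω → ℝ := fun n ω => 2 * p * w n ω^(p-1) * G n ω
  let c2 : ℕ → Ω → ℝ := fun n ω =>
    p * w n ω^(p-1) * H n ω + 2 * p * (p-1) * w n ω^(p-2) * G n ω^2
  let c3 : ℕ → Ω → ℝ := fun n ω => (Real.sqrt (h n ω))^3
  have hc1m : ∀ n, StronglyMeasurable[F n] (c1 n) := fun n =>
    (stronglyMeasurable_const.mul ((hwm n).pow _)).mul (hGm n)
  have hc2m : ∀ n, StronglyMeasurable[F n] (c2 n) := fun n =>
    ((stronglyMeasurable_const.mul ((hwm n).pow _)).mul (hHm n)).add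
      ((stronglyMeasurable_const.mul ((hwm n).pow _)).mul ((hGm n).pow 2))
  have hc3m : ∀ n, StronglyMeasurable[F n] (c3 n) := fun n =>
    (Real.continuous_sqrt.comp_stronglyMeasurable (hhm n)).pow 3
  let m : ℕ → Ω → ℝ := fun n => μ[fun ω => |ε (n+1) ω|^(2*p)|F n]
  have hmm : ∀ n, StronglyMeasurable[F n] (m n) := fun n => stronglyMeasurable_condExp
  have hpa : ((2*p : ℕ):ℝ) ≤ a := by push_cast; exact ha.le
  have hm0 : ∀ᵐ ω ∂μ, ∀ n, 0 ≤ m n ω := by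
    rw [ae_all_iff]; intro n
    exact condExp_nonneg (Eventually.of_forall fun ω => by positivity)
  have hmC : ∀ᵐ ω ∂μ, ∃ C, ∀ n, m n ω ≤ C := by
    have h1 : ∀ᵐ ω ∂μ, ∀ n, m n ω ≤ (μ[fun ω => 1 + |ε (n+1) ω|^a|F n]) ω := by
      rw [ae_all_iff]; intro n
      exact condExp_mono (hN.pow_int _ hpa n) (hN.eta_int n)
        (Eventually.of_forall fun ω => abs_pow_le_one_add _ _ _ hpa)
    filter_upwards [h1, hN.eta_bd] with ω h1 ⟨C, hC⟩
    exact ⟨C, fun n => (h1 n).trans (hC n)⟩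
  let ξ3 : ℕ → Ω → ℝ := fun n ω => |ε n ω|^(2*p) - (μ[fun ω => |ε n ω|^(2*p)|F (n-1)]) ω
  have hη1 : ∀ n ω, (1:ℝ) ≤ 1 + |ε n ω|^a := fun n ω => by
    have : 0 ≤ |ε n ω|^a := by positivity
    linarith
  have hηpos : ∀ n ω, (0:ℝ) ≤ 1 + |ε n ω|^a := fun n ω => by linarith [hη1 n ω]
  -- martingale 1
  have M1 := mart_o (μ := μ) F h c1 ε (fun n ω => 1 + |ε n ω|^a) (fun _ _ => 1) 2 (by norm_num)
    le_rfl κ hκ0 hκ1 hhm hh hc1m (fun n => hN.adapt _) (fun n => stronglyMeasurable_const)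
    (fun n => hN.int _) (fun n => hN.eta_int n) hN.mds hηpos (fun _ _ => zero_le_one) hN.eta_bd
    (Eventually.of_forall fun ω => ⟨1, fun _ => le_rfl⟩)
    (by
      filter_upwards [hg, hbnd'] with ω ⟨⟨C1, hC1⟩, hsm⟩ ⟨C, hC1', hC⟩
      refine summ1 (fun n => h n ω) (fun n => W n ω) (fun n => c1 n ω) p hp (fun n => hh n ω)
        (fun n => hW n ω) δ κ hδ hκ2 C1 (4 * p^2 * (C^(p-1))^2 * C) (by positivity) hC1 hsm ?_
      intro n
      obtain ⟨h1, h2, h3, h4⟩ := hC n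
      have hWn := hW n ω
      have hhn := hh n ω
      have g1 : |w n ω|^(p-1) ≤ C^(p-1) * W n ω^(p-1) := by
        rw [← mul_pow]; exact pow_le_pow_left₀ (abs_nonneg _) h1 _
      have g2 : (w n ω^(p-1))^2 ≤ (C^(p-1) * W n ω^(p-1))^2 := by
        rw [← sq_abs, abs_pow]; exact pow_le_pow_left₀ (by positivity) g1 2
      have e1 : W n ω^p = W n ω^(p-1) * W n ω := by
        rw [← pow_succ, Nat.sub_add_cancel hp]
      calc (c1 n ω)^2 = 4 * p^2 * ((w n ω^(p-1))^2 * G n ω^2) := by simp only [c1]; ring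
        _ ≤ 4 * p^2 * ((C^(p-1) * W n ω^(p-1))^2 * (C * (h n ω * W n ω))) := by gcongr
        _ = _ := by rw [e1]; ring)
    (fun n ω => by
      rw [one_mul]; exact abs_rpow_le_one_add _ _ _ (by norm_num) ha2) hb
  -- martingale 2
  have M2 := mart_o (μ := μ) F h c2 (fun n ω => ε n ω^2 - σ^2) (fun n ω => 1 + |ε n ω|^a)
    (fun _ _ => 4 * (2 + (σ^2)^2)) s hs1
    hs2 κ hκ0 hκ1 hhm hh hc2m (fun n => hN.xi2_meas n) (fun n => stronglyMeasurable_const)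
    (fun n => hN.xi2_int ha2 n) (fun n => hN.eta_int n) (fun n => hN.xi2_ce ha2 n)
    hηpos (fun _ _ => by positivity) hN.eta_bd
    (Eventually.of_forall fun ω => ⟨_, fun _ => le_rfl⟩)
    (by
      filter_upwards [hg, hbnd', hhD] with ω ⟨⟨C1, hC1⟩, hsm⟩ ⟨C, hC1', hC⟩ ⟨D, hD⟩
      refine summ2 (fun n => h n ω) (fun n => W n ω) (fun n => c2 n ω) p hp (fun n => hh n ω)
        (fun n => hW n ω) δ κ s hδ hs1 hs2 hsp hκs D (p * C^p + 2 * p * (p-1) * C^(p-1))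
        hD (by
          have : 0 ≤ (p:ℝ) - 1 := by linarith
          positivity) hsm ?_
      intro n
      obtain ⟨h1, h2, h3, h4⟩ := hC n
      have hWn := hW n ω
      have hhn := hh n ω
      have hp1' : 0 ≤ (p:ℝ) - 1 := by linarith
      have g1 : |w n ω|^(p-1) ≤ C^(p-1) * W n ω^(p-1) := by
        rw [← mul_pow]; exact pow_le_pow_left₀ (abs_nonneg _) h1 _
      have e0 : C^p = C^(p-1) * C := by rw [← pow_succ, Nat.sub_add_cancel hp]
      have g3 : |p * w n ω^(p-1) * H n ω| ≤ p * C^p * h n ω * W n ω^(p-1) := by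
        rw [abs_mul, abs_mul, abs_pow, Nat.abs_cast]
        calc _ ≤ p * (C^(p-1) * W n ω^(p-1)) * (C * h n ω) := by gcongr
          _ = _ := by rw [e0]; ring
      have g4 : |2 * p * (p-1) * w n ω^(p-2) * G n ω^2|
          ≤ 2 * p * (p-1) * C^(p-1) * h n ω * W n ω^(p-1) := by
        rcases Nat.eq_or_lt_of_le hp with h0 | h0
        · rw [← h0]; simp
        · have g5 : |w n ω|^(p-2) ≤ C^(p-2) * W n ω^(p-2) := by
            rw [← mul_pow]; exact pow_le_pow_left₀ (abs_nonneg _) h1 _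
          have e1 : ∀ x : ℝ, x^(p-1) = x^(p-2) * x := fun x => by
            rw [← pow_succ]; congr 1; omega
          rw [abs_mul, abs_mul, abs_pow, abs_of_nonneg (sq_nonneg (G n ω)),
            abs_of_nonneg (by positivity : 0 ≤ 2 * (p:ℝ) * (p-1))]
          calc _ ≤ 2 * p * (p-1) * (C^(p-2) * W n ω^(p-2)) * (C * (h n ω * W n ω)) := by gcongr
            _ = _ := by rw [e1, e1]; ring
      have hWp := pow_nonneg hWn (p-1)
      have : 0 ≤ (p * C^p + 2 * p * (p-1) * C^(p-1)) * h n ω := by positivity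
      calc |c2 n ω| ≤ _ := abs_add_le _ _
        _ ≤ _ := add_le_add g3 g4
        _ = (p * C^p + 2 * p * (p-1) * C^(p-1)) * h n ω * W n ω^(p-1) := by ring
        _ ≤ _ := by nlinarith)
    (fun n ω => by
      refine diff_rpow_le _ _ _ _ (sq_nonneg _) hs1 hs2 ?_ (hη1 _ _)
      rw [← sq_abs, ← Real.rpow_natCast, ← Real.rpow_mul (abs_nonneg _)]
      refine abs_rpow_le_one_add _ _ _ (by positivity) ?_
      push_cast; nlinarith) hb
  -- martingale 3
  have M3 := mart_o (μ := μ) F h c3 ξ3 (fun n ω => 1 + |ε n ω|^a)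
    (fun n ω => 4 * (2 + (m n ω)^2)) s hs1
    hs2 κ hκ0 hκ1 hhm hh hc3m 
    (fun n => ((hN.adapt (n+1)).norm.pow _).sub ((hmm n).mono (F.mono n.le_succ)))
    (fun n => stronglyMeasurable_const.mul (stronglyMeasurable_const.add ((hmm n).pow 2)))
    (fun n => (hN.pow_int _ hpa n).sub integrable_condExp) (fun n => hN.eta_int n)
    (fun n => by
      have h1 := condExp_sub (μ := μ) (hN.pow_int _ hpa n)
        (integrable_condExp (f := fun ω => |ε (n+1) ω|^(2*p)) (m := F n)) (F n)
      have h2 : μ[m n|F n] = m n := condExp_of_stronglyMeasurable (F.le n) (hmm n) integrable_condExp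
      refine h1.trans ?_
      change m n - μ[m n|F n] =ᵐ[μ] 0
      rw [h2, sub_self])
    hηpos (fun _ _ => by positivity) hN.eta_bd
    (by
      filter_upwards [hm0, hmC] with ω h0 ⟨C, hC⟩
      refine ⟨4 * (2 + C^2), fun n => ?_⟩
      have := pow_le_pow_left₀ (h0 n) (hC n) 2
      linarith)
    (by
      filter_upwards [hg, hhD] with ω ⟨_, hsm⟩ ⟨D, hD⟩
      refine summ2 (fun n => h n ω) (fun n => W n ω) (fun n => c3 n ω) p hp (fun n => hh n ω)
        (fun n => hW n ω) δ κ s hδ hs1 hs2 hsp hκs D (Real.sqrt D) hD (Real.sqrt_nonneg _) hsm ?_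
      intro n
      have hWn := pow_nonneg (hW n ω) (p-1)
      have hhn := hh n ω
      have e1 : c3 n ω = Real.sqrt (h n ω) * h n ω := by
        simp only [c3]; rw [pow_succ, Real.sq_sqrt hhn]; ring
      rw [e1, abs_of_nonneg (by positivity)]
      have := Real.sqrt_le_sqrt (hD n)
      have h2 : Real.sqrt (h n ω) * h n ω ≤ Real.sqrt D * h n ω := by gcongr
      have h3 : 0 ≤ Real.sqrt D * h n ω := by positivity
      nlinarith)
    (fun n ω => by
      refine diff_rpow_le _ _ _ _ (by positivity) hs1 hs2 ?_ (hη1 _ _)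
      rw [← Real.rpow_natCast, ← Real.rpow_mul (abs_nonneg _)]
      refine abs_rpow_le_one_add _ _ _ (by positivity) ?_
      push_cast; exact hsa) hb
  filter_upwards [M1, M2, M3, hm0, hmC, hbnd', hh0, hb] with ω m1 m2 m3 hm0 ⟨Cm, hCm⟩ ⟨C, hC1, hC⟩ hh0 hb
  set b : ℕ → ℝ := fun n => 1 + ∑ k ∈ range n, h k ω with hbdef
  set A : ℕ → ℝ := fun n => ∑ k ∈ range n, h k ω * W k ω^p with hA
  have hb1 : ∀ n, 1 ≤ b n := fun n => by
    simp only [hbdef]; linarith [Finset.sum_nonneg (fun k (_ : k ∈ range n) => hh k ω)]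
  have hA0 : ∀ n, 0 ≤ A n := fun n =>
    Finset.sum_nonneg fun k _ => mul_nonneg (hh k ω) (pow_nonneg (hW k ω) _)
  have hbO : b =O[atTop] (fun n => b n + A n) := by
    refine Asymptotics.IsBigO.of_bound 1 (Eventually.of_forall fun n => ?_)
    have := hb1 n
    have := hA0 n
    rw [Real.norm_of_nonneg (by linarith), Real.norm_of_nonneg (by linarith)]; linarith
  have hbAtop : Tendsto (fun n => b n + A n) atTop atTop :=
    tendsto_atTop_mono (fun n => by linarith [hA0 n]) hb
  obtain ⟨C0, hC00, hexp⟩ := step_expand p C hC1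
  let r : ℕ → ℝ := fun k => (w k ω - e k ω + 2*G k ω*ε (k+1) ω + H k ω*ε (k+1) ω^2)^p - w k ω^p
    + p*w k ω^(p-1)*e k ω - 2*p*w k ω^(p-1)*G k ω*ε (k+1) ω
      - (p*w k ω^(p-1)*H k ω + 2*p*(p-1)*w k ω^(p-2)*G k ω^2)*ε (k+1) ω^2
  have hCm0 : 0 ≤ Cm := (hm0 0).trans (hCm 0)
  have hr : (fun n => ∑ k ∈ range n, r k) =o[atTop] fun n => b n + A n := by
    refine sum_rem r (fun k => C0 * (Real.sqrt (h k ω))^3 * (W k ω^p + |ε (k+1) ω|^(2*p))) _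
      (fun k => ?_) ?_ hbAtop ?_
    · have := hW k ω
      positivity
    · filter_upwards [hh0.eventually (gt_mem_nhds (zero_lt_one))] with k hk
      obtain ⟨h1, h2, h3, h4⟩ := hC k
      exact hexp (W k ω) (h k ω) (w k ω) (e k ω) (G k ω) (H k ω) (ε (k+1) ω)
        (hW k ω) (hh k ω) hk.le h1 h2 h3 h4
    · have s1 : (fun n => ∑ k ∈ range n, c3 k ω * (W k ω^p + m k ω)) =o[atTop]
          fun n => ∑ k ∈ range n, h k ω * (1 + W k ω^p) := by
        refine Asymptotics.IsLittleO.sum_range ?_ (fun k => ?_) ?_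
        · rw [Asymptotics.isLittleO_iff]
          intro η hη
          have hsq : Tendsto (fun k => Real.sqrt (h k ω) * (1 + Cm)) atTop (𝓝 0) := by
            have := (Real.continuous_sqrt.tendsto 0).comp hh0
            simpa using this.mul_const (1 + Cm)
          filter_upwards [hsq.eventually (gt_mem_nhds hη)] with k hk
          have hWk := pow_nonneg (hW k ω) p
          have hhk := hh k ω
          have hmk := hm0 k
          have hmk' := hCm k
          have e1 : c3 k ω = Real.sqrt (h k ω) * h k ω := by
            simp only [c3]; rw [pow_succ, Real.sq_sqrt hhk]; ring
          have e2 : 0 ≤ c3 k ω * (W k ω^p + m k ω) := by rw [e1]; positivity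
          have e3 : 0 ≤ h k ω * (1 + W k ω^p) := by positivity
          rw [Real.norm_of_nonneg e2, Real.norm_of_nonneg e3, e1]
          have h5 : W k ω^p + m k ω ≤ (1 + Cm) * (1 + W k ω^p) := by nlinarith
          calc Real.sqrt (h k ω) * h k ω * (W k ω^p + m k ω)
              ≤ Real.sqrt (h k ω) * h k ω * ((1 + Cm) * (1 + W k ω^p)) := by gcongr
            _ = Real.sqrt (h k ω) * (1 + Cm) * (h k ω * (1 + W k ω^p)) := by ring
            _ ≤ _ := by gcongr
        · exact mul_nonneg (hh k ω) (by have := hW k ω; positivity)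
        · have : Tendsto (fun n => b n - 1) atTop atTop := tendsto_atTop_add_const_right _ _ hb
          refine tendsto_atTop_mono (fun n => ?_) this
          simp only [hbdef, add_sub_cancel_left]
          refine Finset.sum_le_sum fun k _ => ?_
          have := pow_nonneg (hW k ω) p
          have := hh k ω
          nlinarith
      have s2 : (fun n => ∑ k ∈ range n, h k ω * (1 + W k ω^p)) =O[atTop] fun n => b n + A n := by
        refine Asymptotics.IsBigO.of_bound 1 (Eventually.of_forall fun n => ?_)
        have e1 : ∑ k ∈ range n, h k ω * (1 + W k ω^p) = b n - 1 + A n := by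
          simp only [hbdef, hA, mul_add, mul_one, Finset.sum_add_distrib]; ring
        have := hb1 n
        have := hA0 n
        rw [e1, Real.norm_of_nonneg (by linarith), Real.norm_of_nonneg (by linarith)]; linarith
      have s3 := ((s1.trans_isBigO s2).add (m3.trans_isBigO hbO)).const_mul_left C0
      refine s3.congr_left fun n => ?_
      rw [← Finset.sum_add_distrib, Finset.mul_sum]
      refine Finset.sum_congr rfl fun k _ => ?_
      simp only [c3, ξ3, m, Nat.add_sub_cancel]
      ring
  have hw0 : (fun _ : ℕ => w 0 ω^p) =o[atTop] fun n => b n + A n :=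
    Asymptotics.isLittleO_const_left.2 (Or.inr (tendsto_norm_atTop_atTop.comp hbAtop))
  have tot := (((m1.trans_isBigO hbO).add (m2.trans_isBigO hbO)).add hr).add hw0
  refine tot.congr_left fun n => ?_
  have tel : w n ω^p = w 0 ω^p + ∑ k ∈ range n, (w (k+1) ω^p - w k ω^p) := by
    rw [Finset.sum_range_sub (fun k => w k ω^p)]; ring
  rw [tel, ← Finset.sum_add_distrib, ← Finset.sum_add_distrib, add_sub_assoc,
    ← Finset.sum_sub_distrib, add_comm]
  congr 1
  refine Finset.sum_congr rfl fun k _ => ?_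
  rw [hrec k ω]
  simp only [c1, c2, r]
  ring

lemma pow_le_one_add_pow {W : ℝ} (hW : 0 ≤ W) {j p : ℕ} (hj : j ≤ p) : W^j ≤ 1 + W^p := by
  rcases le_total W 1 with h | h
  · have := pow_le_one₀ (n := j) hW h
    have := pow_nonneg hW p
    linarith
  · have := pow_le_pow_right₀ h hj
    linarith

/-- comparison of the drift terms of the two processes -/
lemma drift_compare (p : ℕ) (hp : 1 ≤ p) (D σ : ℝ) (W h G K G' H : ℕ → ℝ)
    (hW : ∀ n, 0 ≤ W n) (hh : ∀ n, 0 ≤ h n)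
    (hG : ∀ n, G n^2 ≤ h n * W n)
    (hh0 : Tendsto h atTop (𝓝 0))
    (hb : Tendsto (fun n => 1 + ∑ k ∈ range n, h k) atTop atTop)
    (hK : Asymptotics.IsEquivalent atTop K W) (hH : Asymptotics.IsEquivalent atTop H h)
    (hG' : (fun n => G' n^2 - G n^2) =o[atTop] fun n => h n * W n) :
    (fun n => ∑ k ∈ range n, (-(p * K k^(p-1) * ((2*h k/D - h k^2/D^2) * K k - G k^2))
        + σ^2 * (p * K k^(p-1) * H k + 2 * p * (p-1) * K k^(p-2) * G' k^2))
      - ∑ k ∈ range n, (-(p * W k^(p-1) * (2*h k/D * W k - G k^2))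
        + σ^2 * (p * W k^(p-1) * h k + 2 * p * (p-1) * W k^(p-2) * G k^2)))
      =o[atTop] fun n => (1 + ∑ k ∈ range n, h k) + ∑ k ∈ range n, h k * W k^p := by
  have hEq : ∀ j : ℕ, (fun n => K n^j - W n^j) =o[atTop] fun n => W n^j := fun j => hK.pow j
  have hKO : ∀ j : ℕ, (fun n => K n^j) =O[atTop] fun n => W n^j := fun j => (hK.pow j).isBigO
  have hWg : ∀ j ≤ p, (fun n => h n * W n^j) =O[atTop] fun n => h n * (1 + W n^p) := by
    intro j hj
    refine Asymptotics.IsBigO.of_bound 1 (Eventually.of_forall fun n => ?_)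
    have h1 := hW n
    have h2 := hh n
    rw [Real.norm_of_nonneg (by positivity), Real.norm_of_nonneg (by positivity), one_mul]
    exact mul_le_mul_of_nonneg_left (pow_le_one_add_pow h1 hj) h2
  have hGO : (fun n => G n^2) =O[atTop] fun n => h n * W n := by
    refine Asymptotics.IsBigO.of_bound 1 (Eventually.of_forall fun n => ?_)
    have h1 := hW n
    have h2 := hh n
    rw [Real.norm_of_nonneg (by positivity), Real.norm_of_nonneg (by positivity), one_mul]
    exact hG n
  have hh1 : h =o[atTop] fun _ => (1:ℝ) := (Asymptotics.isLittleO_one_iff ℝ).2 hh0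
  have pm : ∀ x : ℝ, x^(p-1) * x = x^p := fun x => by rw [← pow_succ, Nat.sub_add_cancel hp]
  have t1 : (fun n => h n * (K n^p - W n^p)) =o[atTop] fun n => h n * (1 + W n^p) :=
    ((Asymptotics.isBigO_refl h atTop).mul_isLittleO (hEq p)).trans_isBigO (hWg p le_rfl)
  have t2 : (fun n => h n * (h n * K n^p)) =o[atTop] fun n => h n * (1 + W n^p) := by
    have := hh1.mul_isBigO ((Asymptotics.isBigO_refl h atTop).mul (hKO p))
    simp only [one_mul] at this
    exact this.trans_isBigO (hWg p le_rfl)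
  have t3 : (fun n => (K n^(p-1) - W n^(p-1)) * G n^2) =o[atTop] fun n => h n * (1 + W n^p) := by
    have := (hEq (p-1)).mul_isBigO hGO
    refine (this.congr_right fun n => ?_).trans_isBigO (hWg p le_rfl)
    rw [← pm (W n)]; ring
  have t4 : (fun n => K n^(p-1) * H n - W n^(p-1) * h n) =o[atTop] fun n => h n * (1 + W n^p) := by
    have : (fun n => K n^(p-1) * H n - W n^(p-1) * h n) =o[atTop] fun n => W n^(p-1) * h n :=
      (hK.pow (p-1)).mul hH
    refine (this.congr_right fun n => ?_).trans_isBigO (hWg (p-1) (Nat.sub_le _ _))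
    ring
  have t5 : (fun n => ((p:ℝ)-1) * (K n^(p-2) * G' n^2 - W n^(p-2) * G n^2)) =o[atTop]
      fun n => h n * (1 + W n^p) := by
    rcases Nat.eq_or_lt_of_le hp with h0 | h0
    · rw [← h0]; simp
    · have e1 : ∀ x : ℝ, x^(p-2) * x = x^(p-1) := fun x => by
        rw [← pow_succ]; congr 1; omega
      have a1 := (hKO (p-2)).mul_isLittleO hG'
      have a2 := (hEq (p-2)).mul_isBigO hGO
      have a3 := ((a1.add a2).const_mul_left ((p:ℝ)-1))
      refine ((a3.congr_left fun n => ?_).congr_right fun n => ?_).trans_isBigO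
        (hWg (p-1) (Nat.sub_le _ _))
      · ring
      · rw [← e1]; ring
  have tot := ((((t1.const_mul_left (-(p*(2/D)))).add (t2.const_mul_left (p/D^2))).add
    (t3.const_mul_left p)).add (t4.const_mul_left (σ^2*p))).add (t5.const_mul_left (σ^2*2*p))
  have hsum := tot.sum_range (fun k => mul_nonneg (hh k) (by have := hW k; positivity)) (by
    have : Tendsto (fun n => (1 + ∑ k ∈ range n, h k) - 1) atTop atTop :=
      tendsto_atTop_add_const_right _ _ hb
    refine tendsto_atTop_mono (fun n => ?_) this
    rw [add_sub_cancel_left]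
    refine Finset.sum_le_sum fun k _ => ?_
    have := pow_nonneg (hW k) p
    have := hh k
    nlinarith)
  have s2 : (fun n => ∑ k ∈ range n, h k * (1 + W k^p)) =O[atTop]
      fun n => (1 + ∑ k ∈ range n, h k) + ∑ k ∈ range n, h k * W k^p := by
    refine Asymptotics.IsBigO.of_bound 1 (Eventually.of_forall fun n => ?_)
    have e1 : ∑ k ∈ range n, h k * (1 + W k^p)
        = ∑ k ∈ range n, h k + ∑ k ∈ range n, h k * W k^p := by
      simp only [mul_add, mul_one, Finset.sum_add_distrib]
    have i1 := Finset.sum_nonneg (fun k (_ : k ∈ range n) => hh k)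
    have i2 := Finset.sum_nonneg (fun k (_ : k ∈ range n) => mul_nonneg (hh k) (pow_nonneg (hW k) p))
    rw [e1, Real.norm_of_nonneg (by linarith), Real.norm_of_nonneg (by linarith)]; linarith
  refine (hsum.trans_isBigO s2).congr_left fun n => ?_
  rw [← Finset.sum_sub_distrib]
  refine Finset.sum_congr rfl fun k _ => ?_
  rw [← pm (K k), ← pm (W k)]
  ring

def ell (D σ : ℝ) (p : ℕ) : ℝ := ∏ j ∈ range p, (σ^2 * (D + 2*j))

lemma core {Ω : Type*} {m0 : MeasurableSpace Ω} {μ : Measure Ω} [IsProbabilityMeasure μ]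
    {F : Filtration ℕ m0} {ε : ℕ → Ω → ℝ} {σ a : ℝ} (hN : Noise μ F ε σ a)
    (D : ℝ) (hD : 1 ≤ D)
    (W h G K G' H : ℕ → Ω → ℝ) (hWm : ∀ n, StronglyMeasurable[F n] (W n))
    (hhm : ∀ n, StronglyMeasurable[F n] (h n)) (hGm : ∀ n, StronglyMeasurable[F n] (G n))
    (hKm : ∀ n, StronglyMeasurable[F n] (K n))
    (hGm' : ∀ n, StronglyMeasurable[F n] (G' n)) (hHm : ∀ n, StronglyMeasurable[F n] (H n))
    (hW : ∀ n ω, 0 ≤ W n ω) (hh : ∀ n ω, 0 ≤ h n ω) (hhD : ∀ n ω, h n ω ≤ D)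
    (hG : ∀ n ω, G n ω^2 ≤ h n ω * ((1 - h n ω/D) * W n ω))
    (hrec : ∀ n ω, W (n+1) ω = (1 - h n ω/D) * W n ω + 2 * G n ω * ε (n+1) ω
      + h n ω * ε (n+1) ω^2)
    (hrecK : ∀ n ω, K (n+1) ω = (1 - h n ω/D)^2 * K n ω + G n ω^2 + 2 * G' n ω * ε (n+1) ω
      + H n ω * ε (n+1) ω^2)
    (hh0 : ∀ᵐ ω ∂μ, Tendsto (fun n => h n ω) atTop (𝓝 0))
    (hb : ∀ᵐ ω ∂μ, Tendsto (fun n => 1 + ∑ k ∈ range n, h k ω) atTop atTop)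
    (hbnd : ∀ᵐ ω ∂μ, ∃ C, ∀ n, |K n ω| ≤ C * W n ω ∧
      G' n ω^2 ≤ C * (h n ω * W n ω) ∧ |H n ω| ≤ C * h n ω)
    (hKW : ∀ᵐ ω ∂μ, Asymptotics.IsEquivalent atTop (fun n => K n ω) (fun n => W n ω))
    (hHh : ∀ᵐ ω ∂μ, Asymptotics.IsEquivalent atTop (fun n => H n ω) (fun n => h n ω))
    (hGG : ∀ᵐ ω ∂μ, (fun n => G' n ω^2 - G n ω^2) =o[atTop] fun n => h n ω * W n ω)
    (p : ℕ) (ha : 2 * p < a) (ha2 : 2 ≤ a) :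
    ∀ᵐ ω ∂μ, Tendsto (fun n => (∑ k ∈ range n, h k ω * W k ω^p) / (1 + ∑ k ∈ range n, h k ω))
        atTop (𝓝 (ell D σ p)) ∧
      (1 ≤ p → Tendsto (fun n => (∑ k ∈ range n, W k ω^(p-1) * G k ω^2)
        / (1 + ∑ k ∈ range n, h k ω)) atTop (𝓝 (ell D σ p / D))) := by
  have hD0 : 0 < D := by linarith
  have hGhW : ∀ n ω, G n ω^2 ≤ h n ω * W n ω := by
    intro n ω
    refine (hG n ω).trans (mul_le_mul_of_nonneg_left ?_ (hh n ω))
    have : 0 ≤ h n ω / D := div_nonneg (hh n ω) hD0.le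
    nlinarith [hW n ω]
  induction p with
  | zero =>
    filter_upwards [hb] with ω hb
    refine ⟨?_, fun h => absurd h (by norm_num)⟩
    have h1 : Tendsto (fun n => 1 - (1 + ∑ k ∈ range n, h k ω)⁻¹) atTop (𝓝 (1 - 0)) :=
      tendsto_const_nhds.sub (tendsto_inv_atTop_zero.comp hb)
    simp only [ell, range_zero, prod_empty, sub_zero] at h1 ⊢
    refine h1.congr fun n => ?_
    have : 0 ≤ ∑ k ∈ range n, h k ω := Finset.sum_nonneg fun k _ => hh k ω
    simp only [pow_zero, mul_one]
    field_simp; ring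
  | succ q ih =>
    have haq : 2 * ((q:ℝ)+1) ≤ a := by push_cast at ha; linarith
    have ih' := ih (by push_cast at ha; linarith)
    set p := q + 1 with hpq
    have hp : 1 ≤ p := by omega
    have hp0 : (0:ℝ) < p := by exact_mod_cast hp
    have hgrow : ∀ δ : ℝ, 0 < δ → ∀ᵐ ω ∂μ,
        (∃ C, ∀ n, W n ω^p ≤ C * (1 + ∑ k ∈ range n, h k ω)^(1+δ)) ∧
        Summable (fun n => h n ω * W n ω^p / (1 + ∑ k ∈ range (n+1), h k ω)^(1+δ)) := fun δ hδ =>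
      rs_W hN ha2 q haq δ hδ D hD W h G hWm hhm hGm hW hh hhD hG hrec
    have d1 := drift hN p hp ha W h W (fun n ω => h n ω * W n ω / D) G h hhm hWm hGm hhm hW hh
      (fun n ω => by rw [hrec]; ring) hh0 hb
      (Eventually.of_forall fun ω => ⟨1, fun n => by
        have h1 := hW n ω
        have h2 := hh n ω
        refine ⟨by rw [abs_of_nonneg h1, one_mul], ?_, by rw [one_mul]; exact hGhW n ω,
          by rw [abs_of_nonneg h2, one_mul]⟩
        rw [abs_of_nonneg (by positivity), one_mul]
        exact div_le_self (by positivity) hD⟩) hgrow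
    have d2 := drift hN p hp ha W h K
      (fun n ω => (2*h n ω/D - h n ω^2/D^2) * K n ω - G n ω^2) G' H hhm hKm hGm' hHm hW hh
      (fun n ω => by rw [hrecK]; ring) hh0 hb
      (by
        filter_upwards [hbnd] with ω ⟨C, hC⟩
        refine ⟨max C (2 * C + 1), fun n => ?_⟩
        obtain ⟨c1, c2, c3⟩ := hC n
        have h1 := hW n ω
        have h2 := hh n ω
        have h3 := hhD n ω
        have hm := le_max_left C (2 * C + 1)
        refine ⟨c1.trans (by gcongr), ?_, c2.trans (by gcongr), c3.trans (by gcongr)⟩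
        have g1 : |2*h n ω/D - h n ω^2/D^2| ≤ 2 * h n ω := by
          have i1 : h n ω^2/D^2 ≤ h n ω / D := by
            rw [div_le_div_iff₀ (by positivity) hD0]
            nlinarith [mul_nonneg h2 hD0.le]
          have i2 : 0 ≤ h n ω^2/D^2 := by positivity
          have i3 : h n ω / D ≤ h n ω := div_le_self h2 hD
          have i4 : 0 ≤ h n ω / D := by positivity
          rw [abs_le]
          have e : 2*h n ω/D = 2 * (h n ω / D) := by ring
          rw [e]
          constructor <;> linarith
        calc _ ≤ |(2*h n ω/D - h n ω^2/D^2) * K n ω| + |G n ω^2| := abs_sub _ _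
          _ ≤ 2 * h n ω * (C * W n ω) + h n ω * W n ω := by
            rw [abs_mul, abs_of_nonneg (sq_nonneg (G n ω))]
            exact add_le_add (mul_le_mul g1 c1 (abs_nonneg _) (by positivity)) (hGhW n ω)
          _ = (2 * C + 1) * (h n ω * W n ω) := by ring
          _ ≤ _ := mul_le_mul_of_nonneg_right (le_max_right _ _) (by positivity)) hgrow
    filter_upwards [ih', d1, d2, hh0, hb, hKW, hHh, hGG] with ω ⟨i1, i2⟩ d1 d2 hh0 hb hKW hHh hGG
    have dc := drift_compare p hp D σ (fun n => W n ω) (fun n => h n ω) (fun n => G n ω)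
      (fun n => K n ω) (fun n => G' n ω) (fun n => H n ω) (fun n => hW n ω) (fun n => hh n ω)
      (fun n => hGhW n ω) hh0 hb hKW hHh hGG
    set b : ℕ → ℝ := fun n => 1 + ∑ k ∈ range n, h k ω with hbdef
    have hb1 : ∀ n, 1 ≤ b n := fun n => by
      simp only [hbdef]; linarith [Finset.sum_nonneg (fun k (_ : k ∈ range n) => hh k ω)]
    have hb0 : ∀ n, b n ≠ 0 := fun n => by linarith [hb1 n]
    -- source term
    set Q : ℕ → ℝ := fun n => ∑ k ∈ range n,
      σ^2 * (p * W k ω^(p-1) * h k ω + 2 * p * (p-1) * W k ω^(p-2) * G k ω^2) with hQ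
    set KK : ℝ := p * σ^2 * ell D σ q * (1 + 2 * q / D) with hKK
    have hp1 : p - 1 = q := by omega
    have hpr : (p:ℝ) - 1 = q := by rw [hpq]; push_cast; ring
    have hQlim : Tendsto (fun n => Q n / b n) atTop (𝓝 KK) := by
      have l1 : Tendsto (fun n => (q:ℝ) * ((∑ k ∈ range n, W k ω^(q-1) * G k ω^2) / b n)) atTop
          (𝓝 (q * (ell D σ q / D))) := by
        rcases Nat.eq_zero_or_pos q with h0 | h0
        · rw [h0]; simp
        · exact (i2 h0).const_mul _
      have l2 := (i1.const_mul (σ^2 * p)).add (l1.const_mul (σ^2 * 2 * p))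
      have e : σ^2 * p * ell D σ q + σ^2 * 2 * p * (q * (ell D σ q / D)) = KK := by
        rw [hKK]; ring
      rw [e] at l2
      refine l2.congr fun n => ?_
      have e2 : Q n = σ^2 * p * ∑ k ∈ range n, h k ω * W k ω^q
          + σ^2 * 2 * p * (q * ∑ k ∈ range n, W k ω^(q-1) * G k ω^2) := by
        simp only [hQ, Finset.mul_sum, ← Finset.sum_add_distrib]
        refine Finset.sum_congr rfl fun k _ => ?_
        rw [hpr, hp1, show p - 2 = q - 1 by omega]; ring
      rw [e2]
      change σ^2 * p * ((∑ k ∈ range n, h k ω * W k ω^q) / b n) + _ = _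
      ring
    have hQo : (fun n => Q n - KK * b n) =o[atTop] b := by
      refine Asymptotics.isLittleO_of_tendsto (fun n hn => absurd hn (hb0 n)) ?_
      have := hQlim.sub_const KK
      rw [sub_self] at this
      refine this.congr fun n => ?_
      have := hb0 n
      generalize b n = B at *
      field_simp
    have hbO : b =O[atTop] (fun n => b n + ∑ k ∈ range n, h k ω * W k ω^p) := by
      refine Asymptotics.IsBigO.of_bound 1 (Eventually.of_forall fun n => ?_)
      have h1 := hb1 n
      have : 0 ≤ ∑ k ∈ range n, h k ω * W k ω^p := Finset.sum_nonneg fun k _ =>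
        mul_nonneg (hh k ω) (pow_nonneg (hW k ω) _)
      rw [Real.norm_of_nonneg (by linarith), Real.norm_of_nonneg (by linarith)]; linarith
    have pm : ∀ x : ℝ, x^(p-1) * x = x^p := fun x => by rw [← pow_succ, Nat.sub_add_cancel hp]
    have hode := ode_lemma (fun n => h n ω) (fun n => W n ω^p) (fun n => hh n ω)
      (fun n => pow_nonneg (hW n ω) _) KK (p/D) (by positivity) hh0 hb (by
        refine (d1.add (hQo.trans_isBigO hbO)).congr_left fun n => ?_
        have e : ∑ k ∈ range n, (-(p * W k ω^(p-1) * (h k ω * W k ω / D))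
          + σ^2 * (p * W k ω^(p-1) * h k ω + 2 * p * (p-1) * W k ω^(p-2) * G k ω^2))
          = -(p/D) * ∑ k ∈ range n, h k ω * W k ω^p + Q n := by
          simp only [hQ, Finset.mul_sum, ← Finset.sum_add_distrib]
          refine Finset.sum_congr rfl fun k _ => ?_
          rw [← pm (W k ω)]; ring
        simp only [e]
        change _ = W n ω^p - (KK * b n - _)
        ring)
    obtain ⟨o1, o2⟩ := hode
    have hell : KK / (p/D) = ell D σ p := by
      have hs : ell D σ (q+1) = ell D σ q * (σ^2 * (D + 2*q)) := by
        simp only [ell, Finset.prod_range_succ]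
      rw [hKK, hpq, hs]
      push_cast
      field_simp
    rw [hell] at o1
    refine ⟨o1, fun _ => ?_⟩
    have hAO : (fun n => b n + ∑ k ∈ range n, h k ω * W k ω^p) =O[atTop] b := by
      refine Asymptotics.isBigO_of_div_tendsto_nhds
        (Eventually.of_forall fun n hn => absurd hn (hb0 n)) (1 + ell D σ p) ?_
      refine (o1.const_add 1).congr fun n => ?_
      have := hb0 n
      change 1 + _ / b n = (b n + _) / b n
      field_simp
    have hWo : (fun n => W n ω^p) =o[atTop] b :=
      Asymptotics.isLittleO_of_tendsto (fun n hn => absurd hn (hb0 n)) o2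
    have hKo : (fun n => K n ω^p) =o[atTop] b := ((hKW.pow p).isBigO).trans_isLittleO hWo
    have f1 := ((d2.add dc).trans_isBigO hAO).sub hKo
    have f2 := f1.tendsto_div_nhds_zero
    have f3 := ((o1.const_mul (2/D)).sub (hQlim.const_mul (p:ℝ)⁻¹)).sub (f2.const_mul (p:ℝ)⁻¹)
    have hlimv : 2/D * ell D σ p - (p:ℝ)⁻¹ * KK - (p:ℝ)⁻¹ * 0 = ell D σ p / D := by
      rw [← hell]; field_simp; ring
    rw [hlimv] at f3
    refine f3.congr fun n => ?_
    have e : ∑ k ∈ range n, (-(p * W k ω^(p-1) * (2*h k ω/D * W k ω - G k ω^2))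
        + σ^2 * (p * W k ω^(p-1) * h k ω + 2 * p * (p-1) * W k ω^(p-2) * G k ω^2))
        = -(2*p/D) * ∑ k ∈ range n, h k ω * W k ω^p
          + p * ∑ k ∈ range n, W k ω^(p-1) * G k ω^2 + Q n := by
      simp only [hQ, Finset.mul_sum, ← Finset.sum_add_distrib]
      refine Finset.sum_congr rfl fun k _ => ?_
      rw [← pm (W k ω)]; ring
    rw [e]
    have hbn := hb0 n
    change 2/D * ((∑ k ∈ range n, h k ω * W k ω^p) / b n) - _ - _ = _ / b n
    generalize b n = B at *
    generalize Q n = Q' at *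
    generalize ∑ k ∈ range n, h k ω * W k ω^p = A' at *
    generalize ∑ k ∈ range n, W k ω^(p-1) * G k ω^2 = B' at *
    field_simp
    ring

/-- bilinear form -/
def bf {d : ℕ} (A : Matrix (Fin d) (Fin d) ℝ) (x y : Fin d → ℝ) : ℝ := x ⬝ᵥ (A *ᵥ y)

section bfl
variable {d : ℕ} (A B : Matrix (Fin d) (Fin d) ℝ) (x y z : Fin d → ℝ) (c : ℝ)

lemma bf_add_left : bf A (x+y) z = bf A x z + bf A y z := by simp [bf, add_dotProduct]
lemma bf_add_right : bf A x (y+z) = bf A x y + bf A x z := by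
  simp [bf, Matrix.mulVec_add, dotProduct_add]
lemma bf_smul_left : bf A (c • x) y = c * bf A x y := by simp [bf]
lemma bf_smul_right : bf A x (c • y) = c * bf A x y := by simp [bf, Matrix.mulVec_smul]
lemma bf_add_mat : bf (A+B) x y = bf A x y + bf B x y := by
  simp [bf, Matrix.add_mulVec, dotProduct_add]
lemma bf_sub_mat : bf (A-B) x y = bf A x y - bf B x y := by
  simp [bf, Matrix.sub_mulVec, dotProduct_sub]
lemma bf_smul_mat : bf (c • A) x y = c * bf A x y := by
  simp [bf, Matrix.smul_mulVec]
lemma bf_symm (hA : Aᵀ = A) : bf A x y = bf A y x := by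
  rw [bf, bf, dotProduct_mulVec, ← Matrix.mulVec_transpose, hA, dotProduct_comm]
lemma bf_mulVec_left (hA : Aᵀ = A) : bf B (A *ᵥ x) y = bf (A * B) x y := by
  rw [bf, bf, ← Matrix.mulVec_mulVec, dotProduct_mulVec x, ← Matrix.mulVec_transpose, hA]
lemma bf_mulVec_right : bf B x (A *ᵥ y) = bf (B * A) x y := by
  rw [bf, bf, ← Matrix.mulVec_mulVec]
lemma bf_vecMulVec : bf (vecMulVec z z) x y = (x ⬝ᵥ z) * (z ⬝ᵥ y) := by
  simp [bf, Matrix.vecMulVec_mulVec, mul_comm]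
end bfl

lemma bf_nonneg {d : ℕ} {A : Matrix (Fin d) (Fin d) ℝ} (hA : A.PosSemidef) (x : Fin d → ℝ) :
    0 ≤ bf A x x := by
  have := hA.dotProduct_mulVec_nonneg x
  simpa [bf] using this

lemma psd_symm {d : ℕ} {A : Matrix (Fin d) (Fin d) ℝ} (hA : A.PosSemidef) : Aᵀ = A := by
  have := hA.1
  rwa [Matrix.IsHermitian, Matrix.conjTranspose_eq_transpose_of_trivial] at this

lemma bf_cs {d : ℕ} {A : Matrix (Fin d) (Fin d) ℝ} (hA : A.PosSemidef) (x y : Fin d → ℝ) :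
    bf A x y ^ 2 ≤ bf A x x * bf A y y := by
  have h : ∀ t : ℝ, 0 ≤ bf A y y * (t * t) + (2 * bf A x y) * t + bf A x x := by
    intro t
    have := bf_nonneg hA (x + t • y)
    rw [bf_add_left, bf_add_right, bf_add_right, bf_smul_left, bf_smul_right, bf_smul_left,
      bf_smul_right, bf_symm A y x (psd_symm hA)] at this
    linarith
  have := discrim_le_zero h
  rw [discrim] at this
  linarith

lemma bil_bound {d : ℕ} {Λ : Matrix (Fin d) (Fin d) ℝ} (hΛ : Λ.PosDef) :
    ∃ c : ℝ, 0 < c ∧ ∀ (E : Matrix (Fin d) (Fin d) ℝ) x y,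
      |bf E x y| ≤ c * (∑ i, ∑ j, |E i j|) * (√(bf Λ x x) * √(bf Λ y y)) := by
  have hs := psd_symm hΛ.posSemidef
  have hu : IsUnit Λ.det := hΛ.det_pos.ne'.isUnit
  have key : ∀ x : Fin d → ℝ, ∀ i, |x i| ≤ √(Λ⁻¹ i i) * √(bf Λ x x) := by
    intro x i
    have hi : 0 ≤ Λ⁻¹ i i := hΛ.inv.posSemidef.diag_nonneg
    rw [← Real.sqrt_mul hi]
    refine Real.abs_le_sqrt ?_
    have h1 := bf_cs hΛ.posSemidef (Λ⁻¹ *ᵥ Pi.single i 1) x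
    have hs' := psd_symm hΛ.inv.posSemidef
    rw [bf_mulVec_left _ _ _ _ hs', bf_mulVec_left _ _ _ _ hs', Matrix.nonsing_inv_mul _ hu] at h1
    simpa [bf] using h1
  set c := 1 + ∑ i, √(Λ⁻¹ i i) with hc
  have hc0 : 0 ≤ ∑ i, √(Λ⁻¹ i i) := Finset.sum_nonneg fun i _ => Real.sqrt_nonneg _
  have key2 : ∀ x : Fin d → ℝ, ∀ i, |x i| ≤ c * √(bf Λ x x) := by
    intro x i
    refine (key x i).trans (mul_le_mul_of_nonneg_right ?_ (Real.sqrt_nonneg _))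
    have := Finset.single_le_sum (f := fun i => √(Λ⁻¹ i i)) (fun i _ => Real.sqrt_nonneg _)
      (Finset.mem_univ i)
    linarith
  refine ⟨c^2, by positivity, fun E x y => ?_⟩
  have e : bf E x y = ∑ i, ∑ j, x i * (E i j * y j) := by
    simp only [bf, dotProduct, mulVec, Finset.mul_sum]
  rw [e]
  refine (Finset.abs_sum_le_sum_abs _ _).trans ?_
  rw [Finset.mul_sum, Finset.sum_mul]
  refine Finset.sum_le_sum fun i _ => (Finset.abs_sum_le_sum_abs _ _).trans ?_
  rw [Finset.mul_sum, Finset.sum_mul]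
  refine Finset.sum_le_sum fun j _ => ?_
  rw [abs_mul, abs_mul]
  have h1 := mul_le_mul (key2 x i) (key2 y j) (abs_nonneg _) (by positivity)
  nlinarith [abs_nonneg (E i j), mul_le_mul_of_nonneg_left h1 (abs_nonneg (E i j))]

lemma bil_o {d : ℕ} {Λ : Matrix (Fin d) (Fin d) ℝ} (hΛ : Λ.PosDef)
    (P : ℕ → Matrix (Fin d) (Fin d) ℝ) (hP : Tendsto P atTop (𝓝 Λ)) (x y : ℕ → Fin d → ℝ) :
    (fun n => bf (P n) (x n) (y n) - bf Λ (x n) (y n)) =o[atTop]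
      fun n => √(bf Λ (x n) (x n)) * √(bf Λ (y n) (y n)) := by
  obtain ⟨c, hc, hb⟩ := bil_bound hΛ
  have h0 : Tendsto (fun n => c * ∑ i, ∑ j, |(P n - Λ) i j|) atTop (𝓝 0) := by
    have : Tendsto (fun n => c * ∑ i, ∑ j, |(P n - Λ) i j|) atTop
        (𝓝 (c * ∑ i : Fin d, ∑ j : Fin d, |(Λ - Λ) i j|)) := by
      refine Tendsto.const_mul _ (tendsto_finsetSum _ fun i _ => tendsto_finsetSum _ fun j _ => ?_)
      exact (((continuous_id.matrix_elem i j).tendsto _).comp (hP.sub_const Λ)).abs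
    simpa using this
  rw [Asymptotics.isLittleO_iff]
  intro δ hδ
  filter_upwards [h0.eventually (gt_mem_nhds hδ)] with n hn
  rw [← bf_sub_mat, Real.norm_eq_abs, Real.norm_of_nonneg (by positivity)]
  exact (hb _ _ _).trans (mul_le_mul_of_nonneg_right hn.le (by positivity))

lemma quad_equiv {d : ℕ} {Λ : Matrix (Fin d) (Fin d) ℝ} (hΛ : Λ.PosDef)
    (P : ℕ → Matrix (Fin d) (Fin d) ℝ) (hP : Tendsto P atTop (𝓝 Λ)) (x : ℕ → Fin d → ℝ) :
    Asymptotics.IsEquivalent atTop (fun n => bf (P n) (x n) (x n))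
      (fun n => bf Λ (x n) (x n)) := by
  have := bil_o hΛ P hP x x
  simp only [Real.mul_self_sqrt (bf_nonneg hΛ.posSemidef _)] at this
  exact this

lemma bil_bdd {d : ℕ} {Λ : Matrix (Fin d) (Fin d) ℝ} (hΛ : Λ.PosDef)
    (P : ℕ → Matrix (Fin d) (Fin d) ℝ) (hP : Tendsto P atTop (𝓝 Λ)) :
    ∃ C : ℝ, 0 ≤ C ∧ ∀ n x y, |bf (P n) x y| ≤ C * (√(bf Λ x x) * √(bf Λ y y)) := by
  obtain ⟨c, hc, hb⟩ := bil_bound hΛ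
  have h0 : Tendsto (fun n => ∑ i, ∑ j, |(P n) i j|) atTop
        (𝓝 (∑ i : Fin d, ∑ j : Fin d, |Λ i j|)) := by
    refine (tendsto_finsetSum _ fun i _ => tendsto_finsetSum _ fun j _ => ?_)
    exact (((continuous_id.matrix_elem i j).tendsto _).comp hP).abs
  obtain ⟨C, hC⟩ := h0.bddAbove_range
  have hC' : ∀ n, ∑ i, ∑ j, |(P n) i j| ≤ C := fun n => hC ⟨n, rfl⟩
  have hC0 : 0 ≤ C := le_trans (by positivity) (hC' 0)
  refine ⟨c * C, by positivity, fun n x y => (hb _ _ _).trans ?_⟩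
  refine mul_le_mul_of_nonneg_right (mul_le_mul_of_nonneg_left (hC' n) hc.le) (by positivity)

lemma inv_tendsto {d : ℕ} {L : Matrix (Fin d) (Fin d) ℝ} (hL : L.PosDef)
    (P : ℕ → Matrix (Fin d) (Fin d) ℝ) (hP : Tendsto P atTop (𝓝 L)) :
    Tendsto (fun n => (P n)⁻¹) atTop (𝓝 L⁻¹) := by
  simp only [Matrix.inv_def, Ring.inverse_eq_inv']
  have h1 : Tendsto (fun n => (P n).det) atTop (𝓝 L.det) :=
    ((continuous_id.matrix_det).tendsto L).comp hP
  have h2 : Tendsto (fun n => (P n).adjugate) atTop (𝓝 L.adjugate) :=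
    ((continuous_id.matrix_adjugate).tendsto L).comp hP
  exact (h1.inv₀ hL.det_pos.ne').smul h2

/-- partial Gram matrix -/
def Tm {d : ℕ} (S : Matrix (Fin d) (Fin d) ℝ) (φ : ℕ → Fin d → ℝ) (n : ℕ) :
    Matrix (Fin d) (Fin d) ℝ := S + ∑ k ∈ range n, vecMulVec (φ k) (φ k)

/-- the martingale -/
def Mv {d : ℕ} (S : Matrix (Fin d) (Fin d) ℝ) (θ : Fin d → ℝ) (φ : ℕ → Fin d → ℝ) (e : ℕ → ℝ)
    (n : ℕ) : Fin d → ℝ := -(S *ᵥ θ) + ∑ k ∈ range n, e (k+1) • φ k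

/-- scalar normalisation -/
def Bs {d : ℕ} (Λ : Matrix (Fin d) (Fin d) ℝ) (φ : ℕ → Fin d → ℝ) (n : ℕ) : ℝ :=
  1 + ∑ k ∈ range n, bf Λ (φ k) (φ k) / d

section rec
variable {d : ℕ} {Λ S : Matrix (Fin d) (Fin d) ℝ} (hΛ : Λ.PosDef) (hS : S.PosDef)
  (θ : Fin d → ℝ) (φ : ℕ → Fin d → ℝ) (e : ℕ → ℝ) (n : ℕ)

lemma Tm_succ : Tm S φ (n+1) = Tm S φ n + vecMulVec (φ n) (φ n) := by
  rw [Tm, Tm, Finset.sum_range_succ, add_assoc]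
lemma Mv_succ : Mv S θ φ e (n+1) = Mv S θ φ e n + e (n+1) • φ n := by
  rw [Mv, Mv, Finset.sum_range_succ, add_assoc]
lemma Bs_succ : Bs Λ φ (n+1) = Bs Λ φ n + bf Λ (φ n) (φ n) / d := by
  rw [Bs, Bs, Finset.sum_range_succ, add_assoc]

lemma Bs_ge (hΛ : Λ.PosDef) : 1 ≤ Bs Λ φ n := by
  have : 0 ≤ ∑ k ∈ range n, bf Λ (φ k) (φ k) / d := Finset.sum_nonneg fun k _ =>
    div_nonneg (bf_nonneg hΛ.posSemidef _) (by positivity)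
  rw [Bs]; linarith

lemma Tm_pd (hS : S.PosDef) : (Tm S φ n).PosDef := by
  refine hS.add_posSemidef ?_
  refine Matrix.posSemidef_sum _ fun k _ => ?_
  simpa using Matrix.posSemidef_vecMulVec_self_star (φ k)
end rec

section recur
variable {d : ℕ} {Λ S : Matrix (Fin d) (Fin d) ℝ}
  (θ : Fin d → ℝ) (φ : ℕ → Fin d → ℝ) (e : ℕ → ℝ) (n : ℕ)

/-- normalised weight -/
def hq (Λ : Matrix (Fin d) (Fin d) ℝ) (φ : ℕ → Fin d → ℝ) (n : ℕ) : ℝ :=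
  bf Λ (φ n) (φ n) / Bs Λ φ (n+1)
/-- normalised square -/
def Wq (Λ S : Matrix (Fin d) (Fin d) ℝ) (θ : Fin d → ℝ) (φ : ℕ → Fin d → ℝ) (e : ℕ → ℝ)
    (n : ℕ) : ℝ := bf Λ (Mv S θ φ e n) (Mv S θ φ e n) / Bs Λ φ n
/-- normalised cross term -/
def Gq (Λ S : Matrix (Fin d) (Fin d) ℝ) (θ : Fin d → ℝ) (φ : ℕ → Fin d → ℝ) (e : ℕ → ℝ)
    (n : ℕ) : ℝ := bf Λ (Mv S θ φ e n) (φ n) / Bs Λ φ (n+1)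
/-- auxiliary square -/
def Kq (Λ S : Matrix (Fin d) (Fin d) ℝ) (θ : Fin d → ℝ) (φ : ℕ → Fin d → ℝ) (e : ℕ → ℝ)
    (n : ℕ) : ℝ :=
  bf (Λ * Tm S φ n * Λ) (Mv S θ φ e n) (Mv S θ φ e n) / Bs Λ φ n ^ 2
/-- auxiliary cross term -/
def G2q (Λ S : Matrix (Fin d) (Fin d) ℝ) (θ : Fin d → ℝ) (φ : ℕ → Fin d → ℝ) (e : ℕ → ℝ)
    (n : ℕ) : ℝ :=
  bf (Λ * Tm S φ (n+1) * Λ) (Mv S θ φ e n) (φ n) / Bs Λ φ (n+1) ^ 2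
/-- auxiliary weight -/
def Hq (Λ S : Matrix (Fin d) (Fin d) ℝ) (φ : ℕ → Fin d → ℝ)
    (n : ℕ) : ℝ :=
  bf (Λ * Tm S φ (n+1) * Λ) (φ n) (φ n) / Bs Λ φ (n+1) ^ 2

lemma hq_sub (hd : 0 < d) (hΛ : Λ.PosDef) : 1 - hq Λ φ n / d = Bs Λ φ n / Bs Λ φ (n+1) := by
  have h1 := Bs_ge φ (n+1) hΛ
  have h2 := Bs_succ (Λ := Λ) φ n
  have hd' : (0:ℝ) < d := by exact_mod_cast hd
  have h3 : Bs Λ φ n = Bs Λ φ (n+1) - bf Λ (φ n) (φ n) / d := by linarith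
  rw [hq, h3]
  field_simp

lemma hq_nonneg (hΛ : Λ.PosDef) : 0 ≤ hq Λ φ n :=
  div_nonneg (bf_nonneg hΛ.posSemidef _) (by linarith [Bs_ge φ (n+1) hΛ])

lemma Wq_nonneg (hΛ : Λ.PosDef) : 0 ≤ Wq Λ S θ φ e n :=
  div_nonneg (bf_nonneg hΛ.posSemidef _) (by linarith [Bs_ge φ n hΛ])

lemma hq_le (hd : 0 < d) (hΛ : Λ.PosDef) : hq Λ φ n ≤ d := by
  have h1 := Bs_ge φ (n+1) hΛ
  have h0 := Bs_ge φ n hΛ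
  have hd' : (0:ℝ) < d := by exact_mod_cast hd
  have h2 := hq_sub φ n hd hΛ
  have : 0 ≤ 1 - hq Λ φ n / d := by rw [h2]; positivity
  rw [sub_nonneg, div_le_one hd'] at this
  exact this

lemma Gq_le (hd : 0 < d) (hΛ : Λ.PosDef) : Gq Λ S θ φ e n ^ 2 ≤
    hq Λ φ n * ((1 - hq Λ φ n / d) * Wq Λ S θ φ e n) := by
  have h1 := Bs_ge φ (n+1) hΛ
  have h0 := Bs_ge φ n hΛ
  rw [hq_sub φ n hd hΛ, Gq, hq, Wq, div_pow]
  have e1 : bf Λ (φ n) (φ n) / Bs Λ φ (n+1) * (Bs Λ φ n / Bs Λ φ (n+1) *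
    (bf Λ (Mv S θ φ e n) (Mv S θ φ e n) / Bs Λ φ n)) =
    (bf Λ (Mv S θ φ e n) (Mv S θ φ e n) * bf Λ (φ n) (φ n)) / Bs Λ φ (n+1)^2 := by
    field_simp
  rw [e1]
  exact div_le_div_of_nonneg_right (bf_cs hΛ.posSemidef _ _) (by positivity)

lemma Wq_rec (hd : 0 < d) (hΛ : Λ.PosDef) : Wq Λ S θ φ e (n+1) =
    (1 - hq Λ φ n / d) * Wq Λ S θ φ e n + 2 * Gq Λ S θ φ e n * e (n+1)
      + hq Λ φ n * e (n+1)^2 := by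
  have h1 := Bs_ge φ (n+1) hΛ
  have h0 := Bs_ge φ n hΛ
  rw [hq_sub φ n hd hΛ, Gq, hq, Wq, Wq, Mv_succ, bf_add_left, bf_add_right, bf_add_right,
    bf_smul_left, bf_smul_right, bf_smul_left, bf_smul_right,
    bf_symm Λ (φ n) _ (psd_symm hΛ.posSemidef)]
  field_simp
  ring

lemma sand_symm {T : Matrix (Fin d) (Fin d) ℝ} (hΛ : Λᵀ = Λ) (hT : Tᵀ = T) :
    (Λ * T * Λ)ᵀ = Λ * T * Λ := by
  rw [Matrix.transpose_mul, Matrix.transpose_mul, hΛ, hT, Matrix.mul_assoc]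

lemma Kq_rec (hd : 0 < d) (hΛ : Λ.PosDef) (hS : S.PosDef) : Kq Λ S θ φ e (n+1) =
    (1 - hq Λ φ n / d)^2 * Kq Λ S θ φ e n + Gq Λ S θ φ e n ^ 2
      + 2 * G2q Λ S θ φ e n * e (n+1) + Hq Λ S φ n * e (n+1)^2 := by
  have h1 := Bs_ge φ (n+1) hΛ
  have h0 := Bs_ge φ n hΛ
  have hs := psd_symm hΛ.posSemidef
  have hk : bf (Λ * Tm S φ (n+1) * Λ) (Mv S θ φ e n) (Mv S θ φ e n) =
      bf (Λ * Tm S φ n * Λ) (Mv S θ φ e n) (Mv S θ φ e n) + bf Λ (Mv S θ φ e n) (φ n)^2 := by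
    rw [Tm_succ, Matrix.mul_add, Matrix.add_mul, bf_add_mat,
      ← bf_mulVec_right Λ (Λ * vecMulVec (φ n) (φ n)), ← bf_mulVec_left Λ (vecMulVec _ _) _ _ hs, bf_vecMulVec]
    congr 1
    rw [bf_symm Λ _ _ hs, sq, dotProduct_comm]
    rfl
  rw [hq_sub φ n hd hΛ, Gq, G2q, Hq, Kq, Kq, Mv_succ, bf_add_left, bf_add_right, bf_add_right,
    bf_smul_left, bf_smul_right, bf_smul_left, bf_smul_right,
    bf_symm _ (φ n) (Mv S θ φ e n) (sand_symm hs (psd_symm (Tm_pd φ (n+1) hS).posSemidef)), hk]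
  field_simp
  ring
end recur

section meas
variable {Ω : Type*} {m0 : MeasurableSpace Ω} {F : Filtration ℕ m0} {d : ℕ}
  (Λ S : Matrix (Fin d) (Fin d) ℝ) (θ : Fin d → ℝ) {ε : ℕ → Ω → ℝ} {Φ : ℕ → Ω → Fin d → ℝ}

lemma bf_sm {m : MeasurableSpace Ω} {A : Ω → Matrix (Fin d) (Fin d) ℝ} {x y : Ω → Fin d → ℝ}
    (hA : StronglyMeasurable A) (hx : StronglyMeasurable x) (hy : StronglyMeasurable y) :
    StronglyMeasurable fun ω => bf (A ω) (x ω) (y ω) := by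
  have hc : Continuous fun q : Matrix (Fin d) (Fin d) ℝ × (Fin d → ℝ) × (Fin d → ℝ) =>
      bf q.1 q.2.1 q.2.2 := by
    unfold bf
    exact continuous_snd.fst.dotProduct (continuous_fst.matrix_mulVec continuous_snd.snd)
  exact hc.comp_stronglyMeasurable (hA.prodMk (hx.prodMk hy))

lemma Tm_sm (hΦ : ∀ n, StronglyMeasurable[F n] (Φ n)) (n m : ℕ) (hnm : n ≤ m + 1) :
    StronglyMeasurable[F m] fun ω => Tm S (fun k => Φ k ω) n := by
  unfold Tm
  refine stronglyMeasurable_const.add ?_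
  refine Finset.stronglyMeasurable_fun_sum _ fun k hk => ?_
  have hk := Finset.mem_range.1 hk
  have hc : Continuous fun q : Fin d → ℝ => vecMulVec q q :=
    continuous_id.matrix_vecMulVec continuous_id
  exact hc.comp_stronglyMeasurable ((hΦ k).mono (F.mono (by omega)))

lemma Mv_sm (hε : ∀ n, StronglyMeasurable[F n] (ε n))
    (hΦ : ∀ n, StronglyMeasurable[F n] (Φ n)) (n : ℕ) :
    StronglyMeasurable[F n] fun ω => Mv S θ (fun k => Φ k ω) (fun k => ε k ω) n := by
  unfold Mv
  refine stronglyMeasurable_const.add ?_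
  refine Finset.stronglyMeasurable_fun_sum _ fun k hk => ?_
  have hk := Finset.mem_range.1 hk
  exact ((hε (k+1)).mono (F.mono (by omega))).smul ((hΦ k).mono (F.mono (by omega)))

lemma Bs_sm (hΦ : ∀ n, StronglyMeasurable[F n] (Φ n)) (n m : ℕ) (hnm : n ≤ m + 1) :
    StronglyMeasurable[F m] fun ω => Bs Λ (fun k => Φ k ω) n := by
  unfold Bs
  refine stronglyMeasurable_const.add ?_
  refine Finset.stronglyMeasurable_fun_sum _ fun k hk => ?_
  have hk := Finset.mem_range.1 hk
  have h1 := (hΦ k).mono (F.mono (show k ≤ m by omega))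
  exact (bf_sm stronglyMeasurable_const h1 h1).div stronglyMeasurable_const

lemma sand_sm (hΦ : ∀ n, StronglyMeasurable[F n] (Φ n)) (n m : ℕ) (hnm : n ≤ m + 1) :
    StronglyMeasurable[F m] fun ω => Λ * Tm S (fun k => Φ k ω) n * Λ := by
  have hc : Continuous fun q : Matrix (Fin d) (Fin d) ℝ => Λ * q * Λ :=
    (continuous_const.matrix_mul continuous_id).matrix_mul continuous_const
  exact hc.comp_stronglyMeasurable (Tm_sm S hΦ n m hnm)
end meas

lemma neglog_equiv (u : ℕ → ℝ) (hu : Tendsto u atTop (𝓝 0)) :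
    Asymptotics.IsEquivalent atTop (fun n => -Real.log (1 - u n)) u := by
  have h1 : HasDerivAt (fun x : ℝ => -Real.log (1 - x)) 1 0 := by
    have h0 : HasDerivAt (fun x : ℝ => 1 - x) (-1) 0 := by
      simpa using (hasDerivAt_id (0:ℝ)).const_sub 1
    have := (h0.log (by norm_num)).fun_neg
    have e : -(-1 / (1 - 0)) = (1:ℝ) := by norm_num
    rw [e] at this
    exact this
  have h2 := h1.isLittleO
  have h3 := h2.comp_tendsto hu
  refine h3.congr (fun n => ?_) fun n => ?_
  · simp
  · simp

section path
variable {d : ℕ} {L S : Matrix (Fin d) (Fin d) ℝ} (φ : ℕ → Fin d → ℝ)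

lemma trace_Tm (n : ℕ) :
    (L⁻¹ * Tm S φ n).trace / d = (L⁻¹ * S).trace / d - 1 + Bs L⁻¹ φ n := by
  rw [Tm, Bs, Matrix.mul_add, Matrix.trace_add, Matrix.mul_sum, Matrix.trace_sum, add_div,
    Finset.sum_div]
  have : ∀ k, (L⁻¹ * vecMulVec (φ k) (φ k)).trace = bf L⁻¹ (φ k) (φ k) := by
    intro k
    rw [Matrix.mul_vecMulVec, Matrix.trace_vecMulVec, bf, dotProduct_comm]
  simp only [this]
  ring

lemma path_B (hd : 0 < d) (hL : L.PosDef) (α : ℕ → ℝ) (hα : ∀ n, 0 < α n)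
    (hαt : Tendsto α atTop atTop)
    (hc : Tendsto (fun n => (α n)⁻¹ • Tm S φ (n+1)) atTop (𝓝 L)) :
    Tendsto (fun n => Bs L⁻¹ φ n) atTop atTop ∧
    Tendsto (fun n => (Bs L⁻¹ φ n)⁻¹ • Tm S φ n) atTop (𝓝 L) := by
  have hd' : (0:ℝ) < d := by exact_mod_cast hd
  have hu : IsUnit L.det := hL.det_pos.ne'.isUnit
  set c := (L⁻¹ * S).trace / d - 1 with hcdef
  have h1 : Tendsto (fun n => (L⁻¹ * ((α n)⁻¹ • Tm S φ (n+1))).trace / d) atTop (𝓝 1) := by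
    have hcont : Continuous fun q : Matrix (Fin d) (Fin d) ℝ => (L⁻¹ * q).trace / d :=
      ((continuous_const.matrix_mul continuous_id).matrix_trace).div_const _
    have := (hcont.tendsto L).comp hc
    simp only [Matrix.nonsing_inv_mul _ hu, Matrix.trace_one, Fintype.card_fin,
      div_self hd'.ne'] at this
    exact this
  have h2 : Tendsto (fun n => (α n)⁻¹ * Bs L⁻¹ φ (n+1)) atTop (𝓝 1) := by
    have h3 : Tendsto (fun n => (α n)⁻¹ * c) atTop (𝓝 0) := by
      simpa using (tendsto_inv_atTop_zero.comp hαt).mul_const c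
    have := h1.sub h3
    rw [sub_zero] at this
    refine this.congr fun n => ?_
    rw [Matrix.mul_smul, Matrix.trace_smul, smul_eq_mul, mul_div_assoc, trace_Tm φ]
    ring
  have hB1 : Tendsto (fun n => Bs L⁻¹ φ (n+1)) atTop atTop := by
    have := hαt.atTop_mul_pos one_pos h2
    refine this.congr fun n => ?_
    have := (hα n).ne'
    field_simp
  refine ⟨(tendsto_add_atTop_iff_nat 1).1 hB1, ?_⟩
  rw [← tendsto_add_atTop_iff_nat 1]
  have h4 := (h2.inv₀ one_ne_zero).smul hc
  rw [inv_one, one_smul] at h4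
  refine h4.congr fun n => ?_
  have := (hα n).ne'
  rw [smul_smul]
  congr 1
  rw [mul_inv, inv_inv]
  field_simp

lemma path_f (hL : L.PosDef) (hS : S.PosDef)
    (hT : Tendsto (fun n => (Bs L⁻¹ φ n)⁻¹ • Tm S φ n) atTop (𝓝 L)) :
    Asymptotics.IsEquivalent atTop (fun n => bf (Tm S φ (n+1))⁻¹ (φ n) (φ n))
      (fun n => hq L⁻¹ φ n) := by
  have hT1 := (tendsto_add_atTop_iff_nat 1).2 hT
  have h1 := quad_equiv hL.inv _ (inv_tendsto hL _ hT1) φ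
  have h2 := h1.mul (Asymptotics.IsEquivalent.refl (u := fun n => (Bs L⁻¹ φ (n+1))⁻¹))
  refine (h2.congr_left (Eventually.of_forall fun n => ?_)).congr_right
    (Eventually.of_forall fun n => ?_)
  · have hB := Bs_ge φ (n+1) hL.inv
    have hu : IsUnit (Tm S φ (n+1)).det := (Tm_pd φ (n+1) hS).det_pos.ne'.isUnit
    have : ((Bs L⁻¹ φ (n+1))⁻¹ • Tm S φ (n+1))⁻¹ = Bs L⁻¹ φ (n+1) • (Tm S φ (n+1))⁻¹ := by
      refine Matrix.inv_eq_left_inv ?_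
      rw [Matrix.smul_mul, Matrix.mul_smul, Matrix.nonsing_inv_mul _ hu, smul_smul,
        mul_inv_cancel₀ (by linarith), one_smul]
    simp only [Pi.mul_apply, this, bf_smul_mat]
    field_simp
  · simp only [Pi.mul_apply, hq, div_eq_mul_inv]

lemma path_b (hd : 0 < d) (hL : L.PosDef)
    (hBt : Tendsto (fun n => Bs L⁻¹ φ n) atTop atTop)
    (hh : Tendsto (fun n => hq L⁻¹ φ n) atTop (𝓝 0)) :
    Tendsto (fun n => 1 + ∑ k ∈ range n, hq L⁻¹ φ k) atTop atTop ∧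
    Asymptotics.IsEquivalent atTop (fun n => 1 + ∑ k ∈ range n, hq L⁻¹ φ k)
      (fun n => d * Real.log (Bs L⁻¹ φ n)) := by
  have hd' : (0:ℝ) < d := by exact_mod_cast hd
  have hu0 : Tendsto (fun n => hq L⁻¹ φ n / d) atTop (𝓝 0) := by simpa using hh.div_const (d:ℝ)
  have h1 := neglog_equiv _ hu0
  have hterm : ∀ n, -Real.log (1 - hq L⁻¹ φ n / d)
      = Real.log (Bs L⁻¹ φ (n+1)) - Real.log (Bs L⁻¹ φ n) := by
    intro n
    have hB := Bs_ge φ (n+1) hL.inv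
    have hB0 := Bs_ge φ n hL.inv
    rw [hq_sub φ n hd hL.inv, Real.log_div (by linarith) (by linarith)]; ring
  have hsum : ∀ n, ∑ k ∈ range n, -Real.log (1 - hq L⁻¹ φ k / d) = Real.log (Bs L⁻¹ φ n) := by
    intro n
    simp only [hterm]
    rw [Finset.sum_range_sub (fun n => Real.log (Bs L⁻¹ φ n))]
    simp [Bs]
  have hlog : Tendsto (fun n => Real.log (Bs L⁻¹ φ n)) atTop atTop :=
    Real.tendsto_log_atTop.comp hBt
  have h2 := Asymptotics.IsLittleO.sum_range h1.symm.isLittleO (fun n => by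
    rw [Pi.zero_apply, hterm]
    have hB0 := Bs_ge φ n hL.inv
    have : Bs L⁻¹ φ n ≤ Bs L⁻¹ φ (n+1) := by
      rw [Bs_succ]
      have := div_nonneg (bf_nonneg hL.inv.posSemidef (φ n)) hd'.le
      linarith
    have := Real.log_le_log (by linarith) this
    linarith) (by simpa only [hsum] using hlog)
  simp only [hsum, Pi.sub_apply, Finset.sum_sub_distrib, ← Finset.sum_div] at h2
  have h3 : Asymptotics.IsEquivalent atTop (fun n => (∑ k ∈ range n, hq L⁻¹ φ k) / d)
    (fun n => Real.log (Bs L⁻¹ φ n)) := h2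
  have h4 : Asymptotics.IsEquivalent atTop (fun n => ∑ k ∈ range n, hq L⁻¹ φ k)
      (fun n => d * Real.log (Bs L⁻¹ φ n)) := by
    have := (Asymptotics.IsEquivalent.refl (u := fun _ : ℕ => (d:ℝ))).mul h3
    refine this.congr_left (Eventually.of_forall fun n => ?_)
    simp only [Pi.mul_apply]
    field_simp
  have hdlog : Tendsto (fun n => d * Real.log (Bs L⁻¹ φ n)) atTop atTop :=
    hlog.const_mul_atTop hd'
  have h5 : Asymptotics.IsEquivalent atTop (fun n => 1 + ∑ k ∈ range n, hq L⁻¹ φ k)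
      (fun n => d * Real.log (Bs L⁻¹ φ n)) := by
    refine Asymptotics.IsLittleO.add_isEquivalent ?_ h4
    exact Asymptotics.isLittleO_const_left.2 (Or.inr (tendsto_norm_atTop_atTop.comp hdlog))
  exact ⟨h5.symm.tendsto_atTop hdlog, h5⟩

lemma path_logdet (hd : 0 < d) (hL : L.PosDef) (hS : S.PosDef)
    (hBt : Tendsto (fun n => Bs L⁻¹ φ n) atTop atTop)
    (hT : Tendsto (fun n => (Bs L⁻¹ φ n)⁻¹ • Tm S φ n) atTop (𝓝 L)) :
    Asymptotics.IsEquivalent atTop (fun n => Real.log (Tm S φ n).det)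
      (fun n => d * Real.log (Bs L⁻¹ φ n)) := by
  have hd' : (0:ℝ) < d := by exact_mod_cast hd
  have hlog : Tendsto (fun n => d * Real.log (Bs L⁻¹ φ n)) atTop atTop :=
    (Real.tendsto_log_atTop.comp hBt).const_mul_atTop hd'
  have h1 : Tendsto (fun n => Real.log ((Bs L⁻¹ φ n)⁻¹ • Tm S φ n).det) atTop
      (𝓝 (Real.log L.det)) :=
    (((continuous_id.matrix_det).tendsto L).comp hT).log hL.det_pos.ne'
  have h2 : (fun n => Real.log ((Bs L⁻¹ φ n)⁻¹ • Tm S φ n).det) =o[atTop]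
      (fun n => d * Real.log (Bs L⁻¹ φ n)) :=
    (h1.isBigO_one ℝ).trans_isLittleO
      (Asymptotics.isLittleO_const_left.2 (Or.inr (tendsto_norm_atTop_atTop.comp hlog)))
  refine h2.congr_left fun n => ?_
  have hB := Bs_ge φ n hL.inv
  have hp := (Tm_pd φ n hS).det_pos
  rw [Pi.sub_apply, Matrix.det_smul, Fintype.card_fin, Real.log_mul (by positivity) hp.ne',
    Real.log_pow, Real.log_inv]
  ring
end path

section path2
variable {d : ℕ} {L S : Matrix (Fin d) (Fin d) ℝ} (θ : Fin d → ℝ) (φ : ℕ → Fin d → ℝ) (e : ℕ → ℝ)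

lemma sand_tendsto (hL : L.PosDef)
    (hT : Tendsto (fun n => (Bs L⁻¹ φ n)⁻¹ • Tm S φ n) atTop (𝓝 L)) :
    Tendsto (fun n => L⁻¹ * ((Bs L⁻¹ φ n)⁻¹ • Tm S φ n) * L⁻¹) atTop (𝓝 L⁻¹) := by
  have hu : IsUnit L.det := hL.det_pos.ne'.isUnit
  have hc : Continuous fun q : Matrix (Fin d) (Fin d) ℝ => L⁻¹ * q * L⁻¹ :=
    (continuous_const.matrix_mul continuous_id).matrix_mul continuous_const
  have := (hc.tendsto L).comp hT
  simp only [Matrix.nonsing_inv_mul _ hu, Matrix.one_mul] at this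
  exact this

lemma sand_eq (c : ℝ) (T : Matrix (Fin d) (Fin d) ℝ) (x y : Fin d → ℝ) :
    bf (L⁻¹ * (c⁻¹ • T) * L⁻¹) x y / c = bf (L⁻¹ * T * L⁻¹) x y / c^2 := by
  rw [Matrix.mul_smul, Matrix.smul_mul, bf_smul_mat]
  field_simp

lemma Kq_equiv (hL : L.PosDef)
    (hT : Tendsto (fun n => (Bs L⁻¹ φ n)⁻¹ • Tm S φ n) atTop (𝓝 L)) :
    Asymptotics.IsEquivalent atTop (fun n => Kq L⁻¹ S θ φ e n) (fun n => Wq L⁻¹ S θ φ e n) := by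
  have h1 := quad_equiv hL.inv _ (sand_tendsto φ hL hT) (Mv S θ φ e)
  have h2 := h1.div (Asymptotics.IsEquivalent.refl (u := fun n => (Bs L⁻¹ φ n)))
  refine h2.congr_left (Eventually.of_forall fun n => ?_)
  simp only [Pi.div_apply, sand_eq, Kq]

lemma Hq_equiv (hL : L.PosDef)
    (hT : Tendsto (fun n => (Bs L⁻¹ φ n)⁻¹ • Tm S φ n) atTop (𝓝 L)) :
    Asymptotics.IsEquivalent atTop (fun n => Hq L⁻¹ S φ n) (fun n => hq L⁻¹ φ n) := by
  have hT1 := (tendsto_add_atTop_iff_nat 1).2 (sand_tendsto φ hL hT)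
  have h1 := quad_equiv hL.inv _ hT1 φ
  have h2 := h1.div (Asymptotics.IsEquivalent.refl (u := fun n => (Bs L⁻¹ φ (n+1))))
  refine h2.congr_left (Eventually.of_forall fun n => ?_)
  simp only [Pi.div_apply, sand_eq, Hq]

lemma sqrt_bd (hL : L.PosDef) (n : ℕ) :
    √(bf L⁻¹ (Mv S θ φ e n) (Mv S θ φ e n)) * √(bf L⁻¹ (φ n) (φ n)) / Bs L⁻¹ φ (n+1)
      ≤ √(hq L⁻¹ φ n * Wq L⁻¹ S θ φ e n) := by
  have hB := Bs_ge φ (n+1) hL.inv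
  have hB0 := Bs_ge φ n hL.inv
  have hBB : Bs L⁻¹ φ n ≤ Bs L⁻¹ φ (n+1) := by
    rw [Bs_succ]
    have := div_nonneg (bf_nonneg hL.inv.posSemidef (φ n)) (Nat.cast_nonneg d)
    linarith
  have hm := bf_nonneg hL.inv.posSemidef (Mv S θ φ e n)
  have hf := bf_nonneg hL.inv.posSemidef (φ n)
  refine Real.le_sqrt_of_sq_le ?_
  rw [div_pow, mul_pow, Real.sq_sqrt hm, Real.sq_sqrt hf, hq, Wq, div_mul_div_comm,
    mul_comm (bf L⁻¹ (φ n) (φ n))]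
  refine div_le_div_of_nonneg_left (mul_nonneg hm hf) (by positivity) ?_
  nlinarith

lemma bnds (hL : L.PosDef)
    (hT : Tendsto (fun n => (Bs L⁻¹ φ n)⁻¹ • Tm S φ n) atTop (𝓝 L)) :
    ∃ C, ∀ n, |Kq L⁻¹ S θ φ e n| ≤ C * Wq L⁻¹ S θ φ e n ∧
      G2q L⁻¹ S θ φ e n^2 ≤ C * (hq L⁻¹ φ n * Wq L⁻¹ S θ φ e n) ∧
      |Hq L⁻¹ S φ n| ≤ C * hq L⁻¹ φ n := by
  obtain ⟨C, hC, hb⟩ := bil_bdd hL.inv _ (sand_tendsto φ hL hT)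
  have hC2 : 0 ≤ C^2 := sq_nonneg C
  refine ⟨C + C^2, fun n => ?_⟩
  have hB := Bs_ge φ (n+1) hL.inv
  have hB0 := Bs_ge φ n hL.inv
  have hm := bf_nonneg hL.inv.posSemidef (Mv S θ φ e n)
  have hf := bf_nonneg hL.inv.posSemidef (φ n)
  have hW := Wq_nonneg (S := S) θ φ e n hL.inv
  have hh := hq_nonneg φ n hL.inv
  refine ⟨?_, ?_, ?_⟩
  · have h1 : |Kq L⁻¹ S θ φ e n| ≤ C * Wq L⁻¹ S θ φ e n := by
      rw [Kq, ← sand_eq, abs_div, abs_of_pos (show 0 < Bs L⁻¹ φ n by linarith), Wq, ← mul_div_assoc]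
      refine div_le_div_of_nonneg_right ?_ (by linarith)
      have := hb n (Mv S θ φ e n) (Mv S θ φ e n)
      rwa [Real.mul_self_sqrt hm] at this
    nlinarith
  · have h1 : |G2q L⁻¹ S θ φ e n| ≤ C * √(hq L⁻¹ φ n * Wq L⁻¹ S θ φ e n) := by
      rw [G2q, ← sand_eq, abs_div, abs_of_pos (show 0 < Bs L⁻¹ φ (n+1) by linarith)]
      refine le_trans (div_le_div_of_nonneg_right (hb (n+1) (Mv S θ φ e n) (φ n)) (by linarith)) ?_
      rw [mul_div_assoc]
      exact mul_le_mul_of_nonneg_left (sqrt_bd θ φ e hL n) hC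
    have h2 := pow_le_pow_left₀ (abs_nonneg _) h1 2
    rw [sq_abs, mul_pow, Real.sq_sqrt (mul_nonneg hh hW)] at h2
    nlinarith [mul_nonneg hC (mul_nonneg hh hW)]
  · have h1 : |Hq L⁻¹ S φ n| ≤ C * hq L⁻¹ φ n := by
      rw [Hq, ← sand_eq, abs_div, abs_of_pos (show 0 < Bs L⁻¹ φ (n+1) by linarith), hq,
        ← mul_div_assoc]
      refine div_le_div_of_nonneg_right ?_ (by linarith)
      have := hb (n+1) (φ n) (φ n)
      rwa [Real.mul_self_sqrt hf] at this
    nlinarith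

lemma G2q_o (hd : 0 < d) (hL : L.PosDef)
    (hT : Tendsto (fun n => (Bs L⁻¹ φ n)⁻¹ • Tm S φ n) atTop (𝓝 L)) :
    (fun n => G2q L⁻¹ S θ φ e n^2 - Gq L⁻¹ S θ φ e n^2) =o[atTop]
      fun n => hq L⁻¹ φ n * Wq L⁻¹ S θ φ e n := by
  have hd' : (1:ℝ) ≤ d := by exact_mod_cast hd
  have hT1 := (tendsto_add_atTop_iff_nat 1).2 (sand_tendsto φ hL hT)
  have h1 := bil_o hL.inv _ hT1 (Mv S θ φ e) φ
  have hW := fun n => Wq_nonneg (S := S) θ φ e n hL.inv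
  have hh := fun n => hq_nonneg φ n hL.inv
  have h2 : (fun n => G2q L⁻¹ S θ φ e n - Gq L⁻¹ S θ φ e n) =o[atTop]
      fun n => √(hq L⁻¹ φ n * Wq L⁻¹ S θ φ e n) := by
    have h3 := h1.mul_isBigO (Asymptotics.isBigO_refl (fun n => (Bs L⁻¹ φ (n+1))⁻¹) atTop)
    have h4 : (fun n => √(bf L⁻¹ (Mv S θ φ e n) (Mv S θ φ e n)) * √(bf L⁻¹ (φ n) (φ n))
        * (Bs L⁻¹ φ (n+1))⁻¹) =O[atTop] fun n => √(hq L⁻¹ φ n * Wq L⁻¹ S θ φ e n) := by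
      refine Asymptotics.IsBigO.of_bound 1 (Eventually.of_forall fun n => ?_)
      have hB := Bs_ge φ (n+1) hL.inv
      rw [Real.norm_of_nonneg (by positivity), Real.norm_of_nonneg (by positivity), one_mul,
        ← div_eq_mul_inv]
      exact sqrt_bd θ φ e hL n
    refine (h3.trans_isBigO h4).congr_left fun n => ?_
    rw [G2q, ← sand_eq, Gq]
    ring
  have hsq : ∀ n, √(hq L⁻¹ φ n * Wq L⁻¹ S θ φ e n) * √(hq L⁻¹ φ n * Wq L⁻¹ S θ φ e n)
      = hq L⁻¹ φ n * Wq L⁻¹ S θ φ e n := fun n => Real.mul_self_sqrt (mul_nonneg (hh n) (hW n))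
  have h5 : (fun n => Gq L⁻¹ S θ φ e n) =O[atTop]
      fun n => √(hq L⁻¹ φ n * Wq L⁻¹ S θ φ e n) := by
    refine Asymptotics.IsBigO.of_bound 1 (Eventually.of_forall fun n => ?_)
    rw [Real.norm_of_nonneg (Real.sqrt_nonneg _), one_mul, Real.norm_eq_abs]
    refine Real.abs_le_sqrt ((Gq_le θ φ e n hd hL.inv).trans
      (mul_le_mul_of_nonneg_left ?_ (hh n)))
    have : 0 ≤ hq L⁻¹ φ n / d := div_nonneg (hh n) (by linarith)
    nlinarith [hW n]
  have h6 := h2.mul_isBigO (h2.isBigO.add (h5.add h5))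
  refine h6.congr (fun n => ?_) (fun n => hsq n)
  ring

lemma V_equiv (hd : 0 < d) (hL : L.PosDef) (hS : S.PosDef)
    (hT : Tendsto (fun n => (Bs L⁻¹ φ n)⁻¹ • Tm S φ n) atTop (𝓝 L))
    (hh : Tendsto (fun n => hq L⁻¹ φ n) atTop (𝓝 0)) :
    Asymptotics.IsEquivalent atTop (fun n => bf (Tm S φ (n+1)) ((Tm S φ n)⁻¹ *ᵥ Mv S θ φ e n)
      ((Tm S φ n)⁻¹ *ᵥ Mv S θ φ e n)) (fun n => Wq L⁻¹ S θ φ e n) := by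
  have hu : IsUnit L.det := hL.det_pos.ne'.isUnit
  have hr : Tendsto (fun n => Bs L⁻¹ φ (n+1) / Bs L⁻¹ φ n) atTop (𝓝 1) := by
    have : Tendsto (fun n => (1 - hq L⁻¹ φ n / d)⁻¹) atTop (𝓝 (1 - 0 / d)⁻¹) :=
      ((hh.div_const (d:ℝ)).const_sub 1).inv₀ (by norm_num)
    simp only [zero_div, sub_zero, inv_one] at this
    refine this.congr fun n => ?_
    rw [hq_sub φ n hd hL.inv, inv_div]
  have h1 := hr.smul ((tendsto_add_atTop_iff_nat 1).2 hT)
  rw [one_smul] at h1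
  have hi := inv_tendsto hL _ hT
  have h2 : Tendsto (fun n => ((Bs L⁻¹ φ n)⁻¹ • Tm S φ n)⁻¹ *
      ((Bs L⁻¹ φ (n+1) / Bs L⁻¹ φ n) • (Bs L⁻¹ φ (n+1))⁻¹ • Tm S φ (n+1)) *
      ((Bs L⁻¹ φ n)⁻¹ • Tm S φ n)⁻¹) atTop (𝓝 L⁻¹) := by
    have := (hi.mul h1).mul hi
    rwa [Matrix.nonsing_inv_mul _ hu, Matrix.one_mul] at this
  have h3 := (quad_equiv hL.inv _ h2 (Mv S θ φ e)).div
    (Asymptotics.IsEquivalent.refl (u := fun n => (Bs L⁻¹ φ n)))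
  refine h3.congr_left (Eventually.of_forall fun n => ?_)
  have hB := Bs_ge φ (n+1) hL.inv
  have hB0 := Bs_ge φ n hL.inv
  have huT : IsUnit (Tm S φ n).det := (Tm_pd φ n hS).det_pos.ne'.isUnit
  have hinv : ((Bs L⁻¹ φ n)⁻¹ • Tm S φ n)⁻¹ = Bs L⁻¹ φ n • (Tm S φ n)⁻¹ := by
    refine Matrix.inv_eq_left_inv ?_
    rw [Matrix.smul_mul, Matrix.mul_smul, Matrix.nonsing_inv_mul _ huT, smul_smul,
      mul_inv_cancel₀ (by linarith), one_smul]
  rw [Pi.div_apply]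
  beta_reduce
  rw [bf_mulVec_left _ _ _ _ (psd_symm (Tm_pd φ n hS).inv.posSemidef), bf_mulVec_right, hinv]
  simp only [Matrix.smul_mul, Matrix.mul_smul, bf_smul_mat]
  field_simp
end path2

lemma sum_Icc_range {M : Type*} [AddCommMonoid M] (g : ℕ → M) (n : ℕ) :
    ∑ k ∈ Finset.Icc 1 n, g k = ∑ k ∈ range n, g (k+1) := by
  induction n with
  | zero => simp
  | succ n ih => rw [Finset.sum_Icc_succ_top (by omega), ih, Finset.sum_range_succ]

lemma normal_eq {d : ℕ} (S : Matrix (Fin d) (Fin d) ℝ) (θ : Fin d → ℝ) (φ : ℕ → Fin d → ℝ)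
    (e x : ℕ → ℝ) (hx : ∀ n, x (n+1) = θ ⬝ᵥ φ n + e (n+1)) (n : ℕ) :
    ∑ k ∈ range n, x (k+1) • φ k = Tm S φ n *ᵥ θ + Mv S θ φ e n := by
  induction n with
  | zero => simp [Tm, Mv]
  | succ n ih =>
    rw [Finset.sum_range_succ, ih, Tm_succ, Mv_succ, Matrix.add_mulVec, hx,
      Matrix.vecMulVec_mulVec, dotProduct_comm, add_smul]
    simp only [op_smul_eq_smul]
    abel

lemma ell_eq (D σ : ℝ) (p : ℕ) (hp : 1 ≤ p) :
    ell D σ p = D * σ ^ (2 * p) * ∏ j ∈ Finset.Icc 1 (p - 1), (D + 2 * (j : ℝ)) := by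
  obtain ⟨q, rfl⟩ := Nat.exists_eq_add_of_le' hp
  rw [Nat.add_sub_cancel]
  clear hp
  induction q with
  | zero => simp [ell]; ring
  | succ q ih =>
    have : ell D σ (q+1+1) = ell D σ (q+1) * (σ^2 * (D + 2*((q+1:ℕ):ℝ))) := by
      simp only [ell, Finset.prod_range_succ]
    rw [this, ih, Finset.prod_Icc_succ_top (by omega)]
    ring

lemma final_path (f V h W b l : ℕ → ℝ) (p : ℕ) (c : ℝ) (hh : ∀ n, 0 ≤ h n) (hW : ∀ n, 0 ≤ W n)
    (hbd : ∀ n, b n = 1 + ∑ k ∈ range n, h k)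
    (hb : Tendsto b atTop atTop) (hf : Asymptotics.IsEquivalent atTop f h)
    (hV : Asymptotics.IsEquivalent atTop V W) (hl : Asymptotics.IsEquivalent atTop b l)
    (hlim : Tendsto (fun n => (∑ k ∈ range n, h k * W k ^ p) / b n) atTop (𝓝 c)) :
    Tendsto (fun n => (l (n+1))⁻¹ * ∑ k ∈ Finset.Icc 1 n, f k * V k ^ p) atTop (𝓝 c) := by
  have hb1 : ∀ n, 1 ≤ b n := fun n => by
    rw [hbd]; have := Finset.sum_nonneg (s := range n) fun k _ => hh k; linarith
  have hb0 : ∀ n, b n ≠ 0 := fun n => by have := hb1 n; positivity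
  have hlt : Tendsto l atTop atTop := hl.tendsto_atTop hb
  have hfv : Asymptotics.IsEquivalent atTop (fun n => f n * V n^p) (fun n => h n * W n^p) :=
    hf.mul (hV.pow p)
  have hWp : ∀ n, 0 ≤ W n ^ p := fun n => pow_nonneg (hW n) _
  have hsum : ∀ n, ∑ k ∈ range n, h k * (1 + W k^p)
      = b n - 1 + ∑ k ∈ range n, h k * W k^p := by
    intro n; rw [hbd]; simp only [mul_add, mul_one, Finset.sum_add_distrib]; ring
  have hO : (fun n => h n * W n^p) =O[atTop] fun n => h n * (1 + W n^p) := by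
    refine Asymptotics.IsBigO.of_bound 1 (Eventually.of_forall fun n => ?_)
    have := hWp n; have := hh n
    rw [Real.norm_of_nonneg (by positivity), Real.norm_of_nonneg (by positivity)]
    nlinarith
  have h1 := Asymptotics.IsLittleO.sum_range (hfv.isLittleO.trans_isBigO hO)
    (fun n => mul_nonneg (hh n) (by have := hWp n; simp only; linarith)) (by
      refine tendsto_atTop_mono (fun n => ?_) (tendsto_atTop_add_const_right _ (-1) hb)
      rw [hsum]
      have := Finset.sum_nonneg (s := range n) fun k _ => mul_nonneg (hh k) (hWp k)
      linarith)
  have h2 : (fun n => ∑ k ∈ range n, h k * (1 + W k^p)) =O[atTop] b := by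
    refine Asymptotics.isBigO_of_div_tendsto_nhds
      (Eventually.of_forall fun n hn => absurd hn (hb0 n)) (1 - 0 + c) ?_
    refine (((tendsto_inv_atTop_zero.comp hb).const_sub 1).add hlim).congr fun n => ?_
    have := hb0 n
    simp only [Pi.div_apply, Function.comp]
    rw [hsum]
    field_simp
  have h3 := (h1.trans_isBigO h2).tendsto_div_nhds_zero
  have h4 : Tendsto (fun n => (∑ k ∈ range n, f k * V k^p) / b n) atTop (𝓝 c) := by
    have := h3.add hlim
    rw [zero_add] at this
    refine this.congr fun n => ?_
    simp only [Pi.sub_apply, Finset.sum_sub_distrib]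
    ring
  have h5 : Tendsto (fun n => (∑ k ∈ range n, f k * V k^p - f 0 * V 0^p) / b n) atTop (𝓝 c) := by
    have h0 : Tendsto (fun n => (f 0 * V 0^p) * (b n)⁻¹) atTop (𝓝 0) := by
      simpa using (tendsto_inv_atTop_zero.comp hb).const_mul (f 0 * V 0^p)
    have := h4.sub h0
    rw [sub_zero] at this
    refine this.congr fun n => ?_
    ring
  have hl0 : ∀ᶠ n in atTop, l n ≠ 0 := hlt.eventually_ne_atTop 0
  have h6 : Tendsto (b / l) atTop (𝓝 1) := (Asymptotics.isEquivalent_iff_tendsto_one hl0).1 hl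
  have h7 := (h6.mul h5)
  rw [one_mul] at h7
  refine ((tendsto_add_atTop_iff_nat 1).2 h7).congr fun n => ?_
  rw [sum_Icc_range, Finset.sum_range_succ', Pi.div_apply]
  have := hb0 (n+1)
  field_simp
  ring

/-- **Corollary 3, first part**: a.s.
`(1/log d_n) ∑_{k=1}^n f_k ((θ̂_k - θ)ᵗ S_k (θ̂_k - θ))^p → ℓ(p) = d σ^{2p} ∏_{j=1}^{p-1}(d+2j)`. -/
theorem weighted_estimation_error_limit
    {Ω : Type*} {m0 : MeasurableSpace Ω} {μ : Measure Ω} [IsProbabilityMeasure μ]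
    (F : Filtration ℕ m0) {d : ℕ} (hd : 0 < d)
    (ε : ℕ → Ω → ℝ) (Φ : ℕ → Ω → Fin d → ℝ) (X : ℕ → Ω → ℝ) (θ : Fin d → ℝ)
    (S L : Matrix (Fin d) (Fin d) ℝ) (hS : S.PosDef) (hL : L.PosDef)
    (σ : ℝ) (p : ℕ) (hp : 1 ≤ p) (a : ℝ) (ha : 2 * p < a)
    (α : ℕ → Ω → ℝ)
    (hmodel : ∀ n ω, X (n + 1) ω = θ ⬝ᵥ Φ n ω + ε (n + 1) ω)
    (hεadapt : ∀ n, StronglyMeasurable[F n] (ε n))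
    (hεint : ∀ n, Integrable (ε n) μ)
    (hΦadapt : ∀ n, StronglyMeasurable[F n] (Φ n))
    (hXadapt : ∀ n, StronglyMeasurable[F n] (X n))
    (hmds : ∀ n, μ[ε (n + 1)|F n] =ᵐ[μ] 0)
    (hvar : ∀ n, μ[fun ω => ε (n + 1) ω ^ 2|F n] =ᵐ[μ] fun _ => σ ^ 2)
    (hmomint : ∀ n, Integrable (fun ω => |ε (n + 1) ω| ^ a) μ)
    (hmom : ∀ᵐ ω ∂μ, ∃ C : ℝ, ∀ n, (μ[fun ω => |ε (n + 1) ω| ^ a|F n]) ω ≤ C)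
    (hf0 : ∀ᵐ ω ∂μ, Tendsto (fun n => expl S Φ n ω) atTop (𝓝 0))
    (hαmeas : ∀ n, Measurable (α n))
    (hαpos : ∀ n ω, 0 < α n ω)
    (hαmono : ∀ᵐ ω ∂μ, Monotone fun n => α n ω)
    (hαtop : ∀ᵐ ω ∂μ, Tendsto (fun n => α n ω) atTop atTop)
    (hconv : ∀ᵐ ω ∂μ, Tendsto (fun n => (α n ω)⁻¹ • Smat S Φ n ω) atTop (𝓝 L)) :
    ∀ᵐ ω ∂μ, Tendsto (fun n =>
      (Real.log ((Smat S Φ n ω).det))⁻¹ *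
        ∑ k ∈ Finset.Icc 1 n,
          expl S Φ k ω *
            ((lsq S Φ X k ω - θ) ⬝ᵥ (Smat S Φ k ω *ᵥ (lsq S Φ X k ω - θ))) ^ p)
      atTop (𝓝 ((d : ℝ) * σ ^ (2 * p) * ∏ j ∈ Finset.Icc 1 (p - 1), ((d : ℝ) + 2 * (j : ℝ)))) := by
  have hN : Noise μ F ε σ a := ⟨hεadapt, hεint, hmds, hvar, hmomint, hmom⟩
  have hd1 : (1:ℝ) ≤ d := by exact_mod_cast hd
  have hp1 : (1:ℝ) ≤ p := by exact_mod_cast hp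
  have hLi := hL.inv
  have hSm : ∀ n ω, Smat S Φ n ω = Tm S (fun k => Φ k ω) (n+1) := fun n ω => rfl
  have hB : ∀ᵐ ω ∂μ, Tendsto (fun n => Bs L⁻¹ (fun k => Φ k ω) n) atTop atTop ∧
      Tendsto (fun n => (Bs L⁻¹ (fun k => Φ k ω) n)⁻¹ • Tm S (fun k => Φ k ω) n) atTop (𝓝 L) := by
    filter_upwards [hαtop, hconv] with ω h1 h2
    exact path_B _ hd hL (fun n => α n ω) (fun n => hαpos n ω) h1 h2
  have hh0 : ∀ᵐ ω ∂μ, Tendsto (fun n => hq L⁻¹ (fun k => Φ k ω) n) atTop (𝓝 0) := by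
    filter_upwards [hB, hf0] with ω h1 h2
    exact (path_f _ hL hS h1.2).tendsto_nhds h2
  have hb : ∀ᵐ ω ∂μ, Tendsto (fun n => 1 + ∑ k ∈ range n, hq L⁻¹ (fun k => Φ k ω) k)
      atTop atTop := by
    filter_upwards [hB, hh0] with ω h1 h2
    exact (path_b _ hd hL h1.1 h2).1
  have mΦ : ∀ n, StronglyMeasurable[F n] (Φ n) := hΦadapt
  have mB0 := fun n => Bs_sm (F := F) L⁻¹ hΦadapt n n (by omega)
  have mB1 := fun n => Bs_sm (F := F) L⁻¹ hΦadapt (n+1) n (by omega)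
  have mM := Mv_sm (F := F) S θ hεadapt hΦadapt
  have mT0 := fun n => sand_sm (F := F) L⁻¹ S hΦadapt n n (by omega)
  have mT1 := fun n => sand_sm (F := F) L⁻¹ S hΦadapt (n+1) n (by omega)
  have hcore := core hN (d:ℝ) hd1
    (fun n ω => Wq L⁻¹ S θ (fun k => Φ k ω) (fun k => ε k ω) n)
    (fun n ω => hq L⁻¹ (fun k => Φ k ω) n)
    (fun n ω => Gq L⁻¹ S θ (fun k => Φ k ω) (fun k => ε k ω) n)
    (fun n ω => Kq L⁻¹ S θ (fun k => Φ k ω) (fun k => ε k ω) n)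
    (fun n ω => G2q L⁻¹ S θ (fun k => Φ k ω) (fun k => ε k ω) n)
    (fun n ω => Hq L⁻¹ S (fun k => Φ k ω) n)
    (fun n => (bf_sm stronglyMeasurable_const (mM n) (mM n)).div (mB0 n))
    (fun n => (bf_sm stronglyMeasurable_const (mΦ n) (mΦ n)).div (mB1 n))
    (fun n => (bf_sm stronglyMeasurable_const (mM n) (mΦ n)).div (mB1 n))
    (fun n => (bf_sm (mT0 n) (mM n) (mM n)).div ((mB0 n).pow 2))
    (fun n => (bf_sm (mT1 n) (mM n) (mΦ n)).div ((mB1 n).pow 2))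
    (fun n => (bf_sm (mT1 n) (mΦ n) (mΦ n)).div ((mB1 n).pow 2))
    (fun n ω => Wq_nonneg _ _ _ _ hLi) (fun n ω => hq_nonneg _ _ hLi)
    (fun n ω => hq_le _ _ hd hLi) (fun n ω => Gq_le _ _ _ _ hd hLi)
    (fun n ω => Wq_rec _ _ _ _ hd hLi) (fun n ω => Kq_rec _ _ _ _ hd hLi hS)
    hh0 hb (by filter_upwards [hB] with ω h1; exact bnds _ _ _ hL h1.2)
    (by filter_upwards [hB] with ω h1; exact Kq_equiv _ _ _ hL h1.2)
    (by filter_upwards [hB] with ω h1; exact Hq_equiv _ hL h1.2)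
    (by filter_upwards [hB] with ω h1; exact G2q_o _ _ _ hd hL h1.2)
    p ha (by linarith)
  filter_upwards [hB, hh0, hb, hcore] with ω h1 h2 h3 h4
  rw [← ell_eq _ _ _ hp]
  have hfin := final_path (fun n => bf (Tm S (fun k => Φ k ω) (n+1))⁻¹ (Φ n ω) (Φ n ω))
    (fun n => bf (Tm S (fun k => Φ k ω) (n+1))
      ((Tm S (fun k => Φ k ω) n)⁻¹ *ᵥ Mv S θ (fun k => Φ k ω) (fun k => ε k ω) n)
      ((Tm S (fun k => Φ k ω) n)⁻¹ *ᵥ Mv S θ (fun k => Φ k ω) (fun k => ε k ω) n))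
    (fun n => hq L⁻¹ (fun k => Φ k ω) n)
    (fun n => Wq L⁻¹ S θ (fun k => Φ k ω) (fun k => ε k ω) n)
    (fun n => 1 + ∑ k ∈ range n, hq L⁻¹ (fun k => Φ k ω) k)
    (fun n => Real.log (Tm S (fun k => Φ k ω) n).det) p (ell d σ p)
    (fun n => hq_nonneg _ _ hLi) (fun n => Wq_nonneg _ _ _ _ hLi) (fun n => rfl) h3
    (path_f _ hL hS h1.2) (V_equiv _ _ _ hd hL hS h1.2 h2)
    ((path_b _ hd hL h1.1 h2).2.trans (path_logdet _ hd hL hS h1.1 h1.2).symm) h4.1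
  refine hfin.congr fun n => ?_
  rw [hSm]
  congr 1
  refine Finset.sum_congr rfl fun k hk => ?_
  have hk1 : 1 ≤ k := (Finset.mem_Icc.1 hk).1
  have hlsq : lsq S Φ X k ω - θ = (Tm S (fun k => Φ k ω) k)⁻¹ *ᵥ
      Mv S θ (fun k => Φ k ω) (fun k => ε k ω) k := by
    have hu : IsUnit (Tm S (fun k => Φ k ω) k).det :=
      (Tm_pd (fun k => Φ k ω) k hS).det_pos.ne'.isUnit
    rw [lsq, hSm, Nat.sub_add_cancel hk1, sum_Icc_range (fun k => X k ω • Φ (k-1) ω)]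
    simp only [Nat.add_sub_cancel]
    rw [normal_eq S θ (fun k => Φ k ω) (fun k => ε k ω) (fun k => X k ω)
      (fun n => hmodel n ω), Matrix.mulVec_add, Matrix.mulVec_mulVec,
      Matrix.nonsing_inv_mul _ hu, Matrix.one_mulVec, add_sub_cancel_left]
  rw [hlsq, expl, hSm]
  rfl
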